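/- arXiv:2402.18939 — 6 statements merged into one kernel-verified Lean document; each statement's English description precedes it below -/
import Mathlib

section
/- Let Q_1(x_1,…,x_5) = x_1² − (x_2² + x_3² + x_4² + x_5²)/4. For all integers y_1, …, y_5, the quantity 16·Q_1(y_1 + 1/2, y_2 + 1/2, y_3 + 1/2, y_4 + 1/2, y_5 + 1/2) is an integer divisible by 8; consequently, there are no integers y_1, …, y_5 with 0 < Q_1(y_1 + 1/2, …, y_5 + 1/2) < 1/2. (This shows that equality is required in Theorem 1 for the critical form Q_1 at c = (1/2,1/2,1/2,1/2,1/2), so Γ_{1,4} ≥ 8.) -/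
/-- For the critical form `Q₁(x) = x₁² − (x₂²+x₃²+x₄²+x₅²)/4`, the quantity
`16·Q₁(y+1/2)` is an integer divisible by `8` for all integers `y`, and hence there
are no integers with `0 < Q₁(y+1/2) < 1/2`. -/
theorem critical_form_Q1 :
    (∀ y₁ y₂ y₃ y₄ y₅ : ℤ, ∃ n : ℤ,
      16 * (((y₁ : ℝ) + 1/2)^2 -
        (((y₂ : ℝ) + 1/2)^2 + ((y₃ : ℝ) + 1/2)^2 + ((y₄ : ℝ) + 1/2)^2 + ((y₅ : ℝ) + 1/2)^2) / 4)
        = 8 * (n : ℝ)) ∧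
    ¬ ∃ y₁ y₂ y₃ y₄ y₅ : ℤ,
      0 < ((y₁ : ℝ) + 1/2)^2 -
        (((y₂ : ℝ) + 1/2)^2 + ((y₃ : ℝ) + 1/2)^2 + ((y₄ : ℝ) + 1/2)^2 + ((y₅ : ℝ) + 1/2)^2) / 4 ∧
      ((y₁ : ℝ) + 1/2)^2 -
        (((y₂ : ℝ) + 1/2)^2 + ((y₃ : ℝ) + 1/2)^2 + ((y₄ : ℝ) + 1/2)^2 + ((y₅ : ℝ) + 1/2)^2) / 4
        < 1/2 := by
  have key : ∀ y₁ y₂ y₃ y₄ y₅ : ℤ, ∃ n : ℤ,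
      16 * (((y₁ : ℝ) + 1/2)^2 -
        (((y₂ : ℝ) + 1/2)^2 + ((y₃ : ℝ) + 1/2)^2 + ((y₄ : ℝ) + 1/2)^2 + ((y₅ : ℝ) + 1/2)^2) / 4)
        = 8 * (n : ℝ) := by
    intro y₁ y₂ y₃ y₄ y₅
    have h : ∀ y : ℤ, ∃ k : ℤ, (y : ℝ) * (y + 1) = k + k := by
      intro y
      obtain ⟨k, hk⟩ := Int.even_mul_succ_self y
      exact ⟨k, by exact_mod_cast hk⟩
    obtain ⟨k₁, h₁⟩ := h y₁
    obtain ⟨k₂, h₂⟩ := h y₂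
    obtain ⟨k₃, h₃⟩ := h y₃
    obtain ⟨k₄, h₄⟩ := h y₄
    obtain ⟨k₅, h₅⟩ := h y₅
    refine ⟨4 * k₁ - (k₂ + k₃ + k₄ + k₅), ?_⟩
    push_cast
    linear_combination 16 * h₁ - 4 * h₂ - 4 * h₃ - 4 * h₄ - 4 * h₅
  refine ⟨key, ?_⟩
  rintro ⟨y₁, y₂, y₃, y₄, y₅, hpos, hlt⟩
  obtain ⟨n, hn⟩ := key y₁ y₂ y₃ y₄ y₅
  have h0 : (0 : ℝ) < n := by linarith
  have h1 : (n : ℝ) < 1 := by linarith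
  have h0' : 0 < n := by exact_mod_cast h0
  have h1' : n < 1 := by exact_mod_cast h1
  omega
end

section
/- Theorem 3 (solubility part): Let Q(x_1,…,x_5) = (x_1 + a_2x_2 + a_3x_3 + a_4x_4 + a_5x_5)·x_2 − (1/2)x_3² − A(x_4 + λx_5)² − t·x_5², where A, t > 0, 0 ≤ λ ≤ 1/2, A ≤ t + Aλ², −1/2 < a_i ≤ 1/2, the minimum of φ(x_3,x_4,x_5) = (1/2)x_3² + A(x_4 + λx_5)² + t·x_5² over nonzero integer triples equals 1/2, and d := (A·t)^{1/5} satisfies d ≤ 1. Suppose the real numbers c_1, …, c_5 satisfy c_2 ∈ ℤ and either (a_3 = 0 and c_3 − 1/2 ∈ ℤ) or (a_3 = 1/2 and c_3 ∈ ℤ). Then there exist x_1, …, x_5 with x_i − c_i ∈ ℤ for every i such that 0 < Q(x_1,…,x_5) ≤ d. -/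
lemma gap (y d : ℝ) (h : ∀ n : ℤ, ¬(0 < y + n ∧ y + n ≤ d)) :
    ∃ N : ℤ, ∃ e : ℝ, 0 ≤ e ∧ e < 1 - d ∧ y = N - e := by
  refine ⟨⌈y⌉, ⌈y⌉ - y, by linarith [Int.le_ceil y], ?_, by ring⟩
  by_contra hc
  push Not at hc
  apply h (1 - ⌈y⌉)
  push_cast
  constructor <;> linarith [Int.ceil_lt_add_one y]

lemma arith_bdd (s : ℕ → ℝ) (δ : ℝ) (hs : ∀ n, s (n+1) = s n + δ) (hb : ∀ n, |s n| ≤ 1) :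
    δ = 0 := by
  have h : ∀ n : ℕ, s n = s 0 + n * δ := by
    intro n
    induction n with
    | zero => simp
    | succ k ih => rw [hs, ih]; push_cast; ring
  by_contra hne
  obtain ⟨n, hn⟩ := exists_nat_gt (2 / |δ|)
  have hpos : 0 < |δ| := abs_pos.mpr hne
  rw [div_lt_iff₀ hpos] at hn
  have h1 : |(n:ℝ) * δ| = n * |δ| := by rw [abs_mul, Nat.abs_cast]
  have h2 : (n:ℝ) * δ = s n - s 0 := by rw [h n]; ring
  have h3 := abs_sub (s n) (s 0)
  rw [← h2, h1] at h3
  linarith [hb n, hb 0]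

lemma quad (α β γ d : ℝ) (hd : 2/3 < d)
    (hz : ∃ z : ℤ, |2*α - z| ≤ 2*d - 1)
    (h : ∀ n m : ℤ, ¬(0 < α*n^2+β*n+γ + m ∧ α*n^2+β*n+γ + m ≤ d)) :
    (∃ z : ℤ, 2*α = z) ∧ (∃ z : ℤ, α + β = z) := by
  have hg : ∀ n : ℕ, ∃ N : ℤ, ∃ e : ℝ, 0 ≤ e ∧ e < 1 - d ∧ α*n^2+β*n+γ = N - e := by
    intro n
    apply gap
    intro m
    exact_mod_cast h n m
  choose N e he0 he1 hf using hg
  obtain ⟨z, hz⟩ := hz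
  rw [abs_le] at hz
  have key : ∀ n, e (n+2) - 2 * e (n+1) + e n = z - 2*α := by
    intro n
    have h0 := hf n
    have h1 := hf (n+1)
    have h2 := hf (n+2)
    push_cast at h0 h1 h2
    have e1 : 2*α = (N (n+2) - 2 * N (n+1) + N n : ℤ) - (e (n+2) - 2 * e (n+1) + e n) := by
      push_cast; linear_combination h2 - 2*h1 + h0
    have : N (n+2) - 2 * N (n+1) + N n = z := by
      have a1 : ((N (n+2) - 2 * N (n+1) + N n : ℤ):ℝ) < ((z + 1 : ℤ):ℝ) := by
        push_cast at e1 ⊢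
        linarith [he0 n, he0 (n+1), he0 (n+2), he1 n, he1 (n+1), he1 (n+2)]
      have a2 : ((z - 1 : ℤ):ℝ) < ((N (n+2) - 2 * N (n+1) + N n : ℤ):ℝ) := by
        push_cast at e1 ⊢
        linarith [he0 n, he0 (n+1), he0 (n+2), he1 n, he1 (n+1), he1 (n+2)]
      have b1 := Int.cast_lt.mp a1
      have b2 := Int.cast_lt.mp a2
      omega
    rw [this] at e1
    linarith
  have hε := arith_bdd (fun n => e (n+1) - e n) (z - 2*α)
    (by intro n; linarith [key n])
    (by intro n; rw [abs_le]; constructor <;> linarith [he0 n, he0 (n+1), he1 n, he1 (n+1)])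
  have hD : ∀ n, e (n+1) = e n + (e 1 - e 0) := by
    intro n
    induction n with
    | zero => simp
    | succ k ih => have := key k; rw [hε] at this; linarith
  have hδ := arith_bdd e _ hD
    (by intro n; rw [abs_le]; constructor <;> linarith [he0 n, he1 n])
  refine ⟨⟨z, by linarith⟩, ⟨N 1 - N 0, ?_⟩⟩
  have h0 := hf 0
  have h1 := hf 1
  push_cast at h0 h1 ⊢
  linarith

noncomputable def GG (p l r a₂ a₃ a₄ a₅ c₁ c₃ c₄ c₅ : ℝ) (k n1 n3 n4 n5 : ℤ) : ℝ :=
  (k:ℝ)*(c₁+n1+a₂*k+a₃*(c₃+n3)+a₄*(c₄+n4)+a₅*(c₅+n5))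
    - ((c₃+n3)^2+p*(c₄+n4)^2+2*l*(c₄+n4)*(c₅+n5)+r*(c₅+n5)^2)/2

def Miss (w d : ℝ) (j : ℤ) : Prop := ∀ n : ℤ, ¬(0 < w + (j:ℝ)/2 + 2*n ∧ w + (j:ℝ)/2 + 2*n ≤ d)

lemma Miss.shift {w d : ℝ} {j j' : ℤ} (h : Miss w d j) (e : j % 4 = j' % 4) : Miss w d j' := by
  obtain ⟨i, hi⟩ : ∃ i, j' = j + 4 * i := ⟨(j' - j)/4, by omega⟩
  subst hi
  intro n hn
  apply h (n + i)
  have : w + ((j + 4*i : ℤ):ℝ)/2 + 2*n = w + (j:ℝ)/2 + 2*((n + i : ℤ):ℝ) := by push_cast; ring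
  rwa [this] at hn

lemma half_kill {w d : ℝ} (hd : 1/2 ≤ d) (h0 : Miss w d 0) (h1 : Miss w d 1) (h2 : Miss w d 2)
    (h3 : Miss w d 3) : False := by
  have hall : ∀ j : ℤ, Miss w d j := by
    intro j
    have : j % 4 = 0 ∨ j % 4 = 1 ∨ j % 4 = 2 ∨ j % 4 = 3 := by omega
    rcases this with h | h | h | h
    · exact h0.shift (by omega)
    · exact h1.shift (by omega)
    · exact h2.shift (by omega)
    · exact h3.shift (by omega)
  apply hall (1 - ⌈2*w⌉) 0
  push_cast
  constructor <;> linarith [Int.ceil_lt_add_one (2*w), Int.le_ceil (2*w)]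

/-- two opposite classes plus two classes of the other parity -/
lemma missG {p l r a₂ a₃ a₄ a₅ c₁ c₃ c₄ c₅ d : ℝ}
    (H : ∀ k n1 n3 n4 n5 : ℤ, ¬(0 < GG p l r a₂ a₃ a₄ a₅ c₁ c₃ c₄ c₅ k n1 n3 n4 n5 ∧
      GG p l r a₂ a₃ a₄ a₅ c₁ c₃ c₄ c₅ k n1 n3 n4 n5 ≤ d)) (n3 n4 n5 j : ℤ)
    (e : 2*(a₃*n3+a₄*n4+a₅*n5) - (2*c₃*n3+n3^2+p*(2*c₄*n4+n4^2)+2*l*(c₄*n5+c₅*n4+n4*n5)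
      +r*(2*c₅*n5+n5^2))/2 = (j:ℝ)/2) :
    Miss (GG p l r a₂ a₃ a₄ a₅ c₁ c₃ c₄ c₅ 2 0 0 0 0) d j := by
  intro n hn
  apply H 2 n n3 n4 n5
  have : GG p l r a₂ a₃ a₄ a₅ c₁ c₃ c₄ c₅ 2 n n3 n4 n5 =
    GG p l r a₂ a₃ a₄ a₅ c₁ c₃ c₄ c₅ 2 0 0 0 0 + (j:ℝ)/2 + 2*n := by
    rw [← e]; simp only [GG]; push_cast; ring
  rwa [this]

lemma trip {u C q d : ℝ}
    (F1 : ∀ n : ℤ, ¬(0 < u + C - q + n ∧ u + C - q + n ≤ d))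
    (Fm : ∀ n : ℤ, ¬(0 < u - C - q + n ∧ u - C - q + n ≤ d))
    (F2 : ∀ n : ℤ, ¬(0 < 4*u + 2*C - q + n ∧ 4*u + 2*C - q + n ≤ d)) :
    ∃ Z : ℤ, -(1-d) < 3*q - Z ∧ 3*q - Z < 4*(1-d) := by
  obtain ⟨N1, e1, h1, h1', E1⟩ := gap _ _ F1
  obtain ⟨Nm, em, hm, hm', Em⟩ := gap _ _ Fm
  obtain ⟨N2, e2, h2, h2', E2⟩ := gap _ _ F2
  refine ⟨N2 - 3*N1 - Nm, ?_⟩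
  push_cast
  constructor <;> linarith

lemma fin1 {u C d : ℝ} (hd : 0.757 < d)
    (F1 : ∀ n : ℤ, ¬(0 < u + C - 3/8 + n ∧ u + C - 3/8 + n ≤ d))
    (Fm : ∀ n : ℤ, ¬(0 < u - C - 3/8 + n ∧ u - C - 3/8 + n ≤ d))
    (F2 : ∀ n : ℤ, ¬(0 < 4*u + 2*C - 3/8 + n ∧ 4*u + 2*C - 3/8 + n ≤ d))
    (F3 : ∀ n : ℤ, ¬(0 < 9*u + 3*C - 3/8 + n ∧ 9*u + 3*C - 3/8 + n ≤ d)) : False := by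
  obtain ⟨N1, e1, h1, h1', E1⟩ := gap _ _ F1
  obtain ⟨Nm, em, hm, hm', Em⟩ := gap _ _ Fm
  obtain ⟨N2, e2, h2, h2', E2⟩ := gap _ _ F2
  obtain ⟨N3, e3, h3, h3', E3⟩ := gap _ _ F3
  have a : 3*e1 + em - e2 = 9/8 - ((N2 - 3*N1 - Nm : ℤ):ℝ) := by push_cast; linarith
  have b : 6*e1 + 3*em - e3 = 3 - ((N3 - 6*N1 - 3*Nm : ℤ):ℝ) := by push_cast; linarith
  generalize N2 - 3*N1 - Nm = X at a
  generalize N3 - 6*N1 - 3*Nm = Y at b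
  have hX : X = 1 := by
    have : (X:ℝ) < ((2:ℤ):ℝ) := by push_cast; linarith
    have : ((0:ℤ):ℝ) < X := by push_cast; linarith
    norm_cast at *
    omega
  subst hX
  push_cast at a
  have : (Y:ℝ) < ((3:ℤ):ℝ) := by push_cast; linarith
  have : ((2:ℤ):ℝ) < Y := by push_cast; linarith
  norm_cast at *
  omega

lemma fin2 {u C d : ℝ} (hd : 0.87 < d)
    (F1 : ∀ n : ℤ, ¬(0 < u + C - 1/2 + n ∧ u + C - 1/2 + n ≤ d))
    (Fm : ∀ n : ℤ, ¬(0 < u - C - 1/2 + n ∧ u - C - 1/2 + n ≤ d))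
    (F2 : ∀ n : ℤ, ¬(0 < 4*u + 2*C - 1/2 + n ∧ 4*u + 2*C - 1/2 + n ≤ d))
    (Fm2 : ∀ n : ℤ, ¬(0 < 4*u - 2*C - 1/2 + n ∧ 4*u - 2*C - 1/2 + n ≤ d))
    (F4 : ∀ n : ℤ, ¬(0 < 16*u + 4*C - 1/2 + n ∧ 16*u + 4*C - 1/2 + n ≤ d)) : False := by
  obtain ⟨N1, e1, h1, h1', E1⟩ := gap _ _ F1
  obtain ⟨Nm, em, hm, hm', Em⟩ := gap _ _ Fm
  obtain ⟨N2, e2, h2, h2', E2⟩ := gap _ _ F2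
  obtain ⟨N3, e3, h3, h3', E3⟩ := gap _ _ Fm2
  obtain ⟨N4, e4, h4, h4', E4⟩ := gap _ _ F4
  have a : 3*e1 + em - e2 = 3/2 - ((N2 - 3*N1 - Nm : ℤ):ℝ) := by push_cast; linarith
  have a' : 3*em + e1 - e3 = 3/2 - ((N3 - 3*Nm - N1 : ℤ):ℝ) := by push_cast; linarith
  have b : 10*e1 + 6*em - e4 = 15/2 - ((N4 - 10*N1 - 6*Nm : ℤ):ℝ) := by push_cast; linarith
  generalize N2 - 3*N1 - Nm = X at a
  generalize N3 - 3*Nm - N1 = X' at a'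
  generalize N4 - 10*N1 - 6*Nm = Y at b
  have hX : X = 1 := by
    have : (X:ℝ) < ((2:ℤ):ℝ) := by push_cast; linarith
    have : ((0:ℤ):ℝ) < X := by push_cast; linarith
    norm_cast at *
    omega
  have hX' : X' = 1 := by
    have : (X':ℝ) < ((2:ℤ):ℝ) := by push_cast; linarith
    have : ((0:ℤ):ℝ) < X' := by push_cast; linarith
    norm_cast at *
    omega
  subst hX hX'
  push_cast at a a'
  have : (Y:ℝ) < ((6:ℤ):ℝ) := by push_cast; linarith
  have : ((5:ℤ):ℝ) < Y := by push_cast; linarith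
  norm_cast at *
  omega

/-- The case `a₃ = 0`, `c₃ = 1/2`: the other `a`'s vanish. -/
lemma halfA {p l r a₂ a₄ a₅ c₁ c₄ c₅ d : ℝ} (hd : 1/2 ≤ d)
    (H : ∀ k n1 n3 n4 n5 : ℤ, ¬(0 < GG p l r a₂ 0 a₄ a₅ c₁ (1/2) c₄ c₅ k n1 n3 n4 n5 ∧
      GG p l r a₂ 0 a₄ a₅ c₁ (1/2) c₄ c₅ k n1 n3 n4 n5 ≤ d))
    (z4 z5 : ℤ) (h4 : -p/2 + a₄ - (p*c₄+l*c₅) = z4) (h5 : -r/2 + a₅ - (l*c₄+r*c₅) = z5)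
    (ha4 : a₄ = 0 ∨ a₄ = 1/2) (ha5 : a₅ = 0 ∨ a₅ = 1/2) : a₄ = 0 ∧ a₅ = 0 := by
  have m0 := missG H 0 0 0 0 (by push_cast; ring)
  have m2 := missG H 1 0 0 (-2) (by push_cast; ring)
  refine ⟨ha4.resolve_right ?_, ha5.resolve_right ?_⟩
  · intro ha
    have m1 := missG H 0 1 0 (1+2*z4) (by push_cast; linear_combination h4 + ha)
    have m3 := missG H 1 1 0 (-1+2*z4) (by push_cast; linear_combination h4 + ha)
    rcases Int.emod_two_eq_zero_or_one z4 with h | h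
    · exact half_kill hd m0 (m1.shift (by omega)) (m2.shift (by omega)) (m3.shift (by omega))
    · exact half_kill hd m0 (m3.shift (by omega)) (m2.shift (by omega)) (m1.shift (by omega))
  · intro ha
    have m1 := missG H 0 0 1 (1+2*z5) (by push_cast; linear_combination h5 + ha)
    have m3 := missG H 1 0 1 (-1+2*z5) (by push_cast; linear_combination h5 + ha)
    rcases Int.emod_two_eq_zero_or_one z5 with h | h
    · exact half_kill hd m0 (m1.shift (by omega)) (m2.shift (by omega)) (m3.shift (by omega))
    · exact half_kill hd m0 (m3.shift (by omega)) (m2.shift (by omega)) (m1.shift (by omega))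

/-- For vanishing `a`'s: residues mod 1 for `k = ±1, ±2, 4`. -/
lemma fullA {p l r a₂ c₁ c₄ c₅ d : ℝ}
    (H : ∀ k n1 n3 n4 n5 : ℤ, ¬(0 < GG p l r a₂ 0 0 0 c₁ (1/2) c₄ c₅ k n1 n3 n4 n5 ∧
      GG p l r a₂ 0 0 0 c₁ (1/2) c₄ c₅ k n1 n3 n4 n5 ≤ d))
    (m4 m5 : ℤ) (x4 x5 q : ℝ) (hx4 : c₄ = x4 + m4) (hx5 : c₅ = x5 + m5)
    (hq : q = (1/4 + p*x4^2+2*l*x4*x5+r*x5^2)/2) :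
    (∀ n : ℤ, ¬(0 < a₂ + c₁ - q + n ∧ a₂ + c₁ - q + n ≤ d)) ∧
    (∀ n : ℤ, ¬(0 < a₂ - c₁ - q + n ∧ a₂ - c₁ - q + n ≤ d)) ∧
    (∀ n : ℤ, ¬(0 < 4*a₂ + 2*c₁ - q + n ∧ 4*a₂ + 2*c₁ - q + n ≤ d)) ∧
    (∀ n : ℤ, ¬(0 < 4*a₂ - 2*c₁ - q + n ∧ 4*a₂ - 2*c₁ - q + n ≤ d)) ∧
    (∀ n : ℤ, ¬(0 < 16*a₂ + 4*c₁ - q + n ∧ 16*a₂ + 4*c₁ - q + n ≤ d)) := by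
  subst hx4 hx5 hq
  refine ⟨fun n hn => ?_, fun n hn => ?_, fun n hn => ?_, fun n hn => ?_, fun n hn => ?_⟩
  · apply H 1 n 0 (-m4) (-m5)
    convert hn using 2 <;> (simp only [GG]; push_cast; ring)
  · apply H (-1) (-n) 0 (-m4) (-m5)
    convert hn using 2 <;> (simp only [GG]; push_cast; ring)
  · rcases Int.even_or_odd' n with ⟨i, rfl | rfl⟩
    · apply H 2 i 0 (-m4) (-m5)
      convert hn using 2 <;> (simp only [GG]; push_cast; ring)
    · apply H 2 (i+1) 1 (-m4) (-m5)
      convert hn using 2 <;> (simp only [GG]; push_cast; ring)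
  · rcases Int.even_or_odd' n with ⟨i, rfl | rfl⟩
    · apply H (-2) (-i) 0 (-m4) (-m5)
      convert hn using 2 <;> (simp only [GG]; push_cast; ring)
    · apply H (-2) (-(i+1)) 1 (-m4) (-m5)
      convert hn using 2 <;> (simp only [GG]; push_cast; ring)
  · obtain ⟨i, hi⟩ : ∃ i, n = 4*i ∨ n = 4*i+1 ∨ n = 4*i+2 ∨ n = 4*i+3 := ⟨n/4, by omega⟩
    rcases hi with rfl | rfl | rfl | rfl
    · apply H 4 i 0 (-m4) (-m5)
      convert hn using 2 <;> (simp only [GG]; push_cast; ring)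
    · apply H 4 (i+1) 2 (-m4) (-m5)
      convert hn using 2 <;> (simp only [GG]; push_cast; ring)
    · apply H 4 (i+2) 3 (-m4) (-m5)
      convert hn using 2 <;> (simp only [GG]; push_cast; ring)
    · apply H 4 (i+1) 1 (-m4) (-m5)
      convert hn using 2 <;> (simp only [GG]; push_cast; ring)

lemma tripA {p l r a₂ c₁ c₄ c₅ d : ℝ}
    (H : ∀ k n1 n3 n4 n5 : ℤ, ¬(0 < GG p l r a₂ 0 0 0 c₁ (1/2) c₄ c₅ k n1 n3 n4 n5 ∧
      GG p l r a₂ 0 0 0 c₁ (1/2) c₄ c₅ k n1 n3 n4 n5 ≤ d))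
    (m4 m5 : ℤ) (x4 x5 q : ℝ) (hx4 : c₄ = x4 + m4) (hx5 : c₅ = x5 + m5)
    (hq : q = (1/4 + p*x4^2+2*l*x4*x5+r*x5^2)/2) (M : ℤ)
    (hM : M + 4*(1-d) ≤ 3*q) (hM' : 3*q ≤ M + 1 - (1-d)) : False := by
  obtain ⟨F1, Fm, F2, -, -⟩ := fullA H m4 m5 x4 x5 q hx4 hx5 hq
  obtain ⟨Z, hZ, hZ'⟩ := trip F1 Fm F2
  have a : (M:ℝ) < Z := by linarith
  have b : (Z:ℝ) < ((M+1:ℤ):ℝ) := by push_cast; linarith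
  norm_cast at a b
  omega

lemma caseA1 {r : ℤ} {a₂ a₄ a₅ c₁ c₄ c₅ d : ℝ} (hd : 1/2 ≤ d) (hr : 1 ≤ r) (hr3 : r ≤ 3)
    (hd5 : d^5 = r/4)
    (H : ∀ k n1 n3 n4 n5 : ℤ, ¬(0 < GG 1 0 r a₂ 0 a₄ a₅ c₁ (1/2) c₄ c₅ k n1 n3 n4 n5 ∧
      GG 1 0 r a₂ 0 a₄ a₅ c₁ (1/2) c₄ c₅ k n1 n3 n4 n5 ≤ d))
    (z4 z5 : ℤ) (h4 : -1/2 + a₄ - (1*c₄+0*c₅) = z4) (h5 : -(r:ℝ)/2 + a₅ - (0*c₄+r*c₅) = z5)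
    (ha4 : a₄ = 0 ∨ a₄ = 1/2) (ha5 : a₅ = 0 ∨ a₅ = 1/2) : False := by
  obtain ⟨rfl, rfl⟩ := halfA hd H z4 z5 h4 h5 ha4 ha5
  have hc4 : c₄ = 1/2 + ((-z4-1 : ℤ):ℝ) := by push_cast; linarith
  have hr' : r = 1 ∨ r = 2 ∨ r = 3 := by omega
  rcases hr' with rfl | rfl | rfl
  · have hd' : 0.757 < d := by
      by_contra hc
      push Not at hc
      have := pow_le_pow_left₀ (by linarith) hc 5
      norm_num at this hd5
      linarith
    push_cast at h5
    have hc5 : c₅ = 1/2 + ((-z5-1 : ℤ):ℝ) := by push_cast; linarith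
    obtain ⟨F1, Fm, F2, -, -⟩ := fullA H _ _ _ _ (3/8) hc4 hc5 (by norm_num)
    refine fin1 hd' F1 Fm F2 (fun n hn => ?_)
    subst hc4 hc5
    obtain ⟨i, hi⟩ : ∃ i, n = 3*i ∨ n = 3*i+1 ∨ n = 3*i+2 := ⟨n/3, by omega⟩
    rcases hi with rfl | rfl | rfl
    · apply H 3 i 0 (z4+1) (z5+1)
      convert hn using 2 <;> (simp only [GG]; push_cast; ring)
    · apply H 3 (i+1) 1 (z4+2) (z5+1)
      convert hn using 2 <;> (simp only [GG]; push_cast; ring)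
    · apply H 3 (i+1) 1 (z4+1) (z5+1)
      convert hn using 2 <;> (simp only [GG]; push_cast; ring)
  · have hd' : 0.87 < d := by
      by_contra hc
      push Not at hc
      have := pow_le_pow_left₀ (by linarith) hc 5
      norm_num at this hd5
      linarith
    push_cast at h5
    rcases Int.even_or_odd' z5 with ⟨i, rfl | rfl⟩
    · push_cast at h5
      have hc5 : c₅ = 1/2 + ((-i-1 : ℤ):ℝ) := by push_cast; linarith
      obtain ⟨F1, Fm, F2, F2m, F4⟩ := fullA H _ _ _ _ (1/2) hc4 hc5 (by norm_num)
      exact fin2 hd' F1 Fm F2 F2m F4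
    · push_cast at h5
      have hc5 : c₅ = 0 + ((-i-1 : ℤ):ℝ) := by push_cast; linarith
      exact tripA H _ _ _ _ (1/4) hc4 hc5 (by norm_num) 0 (by norm_num; linarith)
        (by norm_num; linarith)
  · have hd' : 0.94 < d := by
      by_contra hc
      push Not at hc
      have := pow_le_pow_left₀ (by linarith) hc 5
      norm_num at this hd5
      linarith
    push_cast at h5
    obtain ⟨i, hi⟩ : ∃ i, z5 = 3*i ∨ z5 = 3*i+1 ∨ z5 = 3*i+2 := ⟨z5/3, by omega⟩
    rcases hi with rfl | rfl | rfl
    · push_cast at h5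
      have hc5 : c₅ = 1/2 + ((-i-1 : ℤ):ℝ) := by push_cast; linarith
      exact tripA H _ _ _ _ (5/8) hc4 hc5 (by norm_num) 1 (by norm_num; linarith)
        (by norm_num; linarith)
    · push_cast at h5
      have hc5 : c₅ = 1/6 + ((-i-1 : ℤ):ℝ) := by push_cast; linarith
      exact tripA H _ _ _ _ (7/24) hc4 hc5 (by norm_num) 0 (by norm_num; linarith)
        (by norm_num; linarith)
    · push_cast at h5
      have hc5 : c₅ = -1/6 + ((-i-1 : ℤ):ℝ) := by push_cast; linarith
      exact tripA H _ _ _ _ (7/24) hc4 hc5 (by norm_num) 0 (by norm_num; linarith)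
        (by norm_num; linarith)

lemma caseA2 {a₂ a₄ a₅ c₁ c₄ c₅ d : ℝ} (hd : 1/2 ≤ d)
    (hd5 : d^5 = 3/4)
    (H : ∀ k n1 n3 n4 n5 : ℤ, ¬(0 < GG 2 1 2 a₂ 0 a₄ a₅ c₁ (1/2) c₄ c₅ k n1 n3 n4 n5 ∧
      GG 2 1 2 a₂ 0 a₄ a₅ c₁ (1/2) c₄ c₅ k n1 n3 n4 n5 ≤ d))
    (z4 z5 : ℤ) (h4 : -2/2 + a₄ - (2*c₄+1*c₅) = z4) (h5 : -2/2 + a₅ - (1*c₄+2*c₅) = z5)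
    (ha4 : a₄ = 0 ∨ a₄ = 1/2) (ha5 : a₅ = 0 ∨ a₅ = 1/2) : False := by
  obtain ⟨rfl, rfl⟩ := halfA hd H z4 z5 h4 h5 ha4 ha5
  have hd' : 0.94 < d := by
    by_contra hc
    push Not at hc
    have := pow_le_pow_left₀ (by linarith) hc 5
    norm_num at this hd5
    linarith
  have h35 : 3*c₅ = -1 - 2*z5 + z4 := by linarith
  obtain ⟨i, hi⟩ : ∃ i, z4 = 3*i + 1 + 2*z5 ∨ z4 = 3*i+2 + 2*z5 ∨ z4 = 3*i+2*z5 :=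
    ⟨(z4-2*z5)/3, by omega⟩
  rcases hi with rfl | rfl | rfl
  · push_cast at h35 h4
    have hc5 : c₅ = 0 + (i:ℝ) := by linarith
    have hc4 : c₄ = 0 + ((-1-z5-2*i:ℤ):ℝ) := by push_cast; linarith
    exact tripA H _ _ _ _ (1/8) hc4 hc5 (by norm_num) 0 (by norm_num; linarith)
        (by norm_num; linarith)
  · push_cast at h35 h4
    have hc5 : c₅ = 1/3 + (i:ℝ) := by linarith
    have hc4 : c₄ = 1/3 + ((-2-z5-2*i:ℤ):ℝ) := by push_cast; linarith
    exact tripA H _ _ _ _ (11/24) hc4 hc5 (by norm_num) 1 (by norm_num; linarith)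
        (by norm_num; linarith)
  · push_cast at h35 h4
    have hc5 : c₅ = -1/3 + (i:ℝ) := by linarith
    have hc4 : c₄ = -1/3 + ((-z5-2*i:ℤ):ℝ) := by push_cast; linarith
    exact tripA H _ _ _ _ (11/24) hc4 hc5 (by norm_num) 1 (by norm_num; linarith)
        (by norm_num; linarith)

lemma caseB1 {r : ℤ} {a₂ a₄ a₅ c₁ c₄ c₅ d : ℝ} (hd : 1/2 ≤ d) (hr : 1 ≤ r) (hr3 : r ≤ 3)
    (hd5 : d^5 = r/4)
    (H : ∀ k n1 n3 n4 n5 : ℤ, ¬(0 < GG 1 0 r a₂ (1/2) a₄ a₅ c₁ 0 c₄ c₅ k n1 n3 n4 n5 ∧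
      GG 1 0 r a₂ (1/2) a₄ a₅ c₁ 0 c₄ c₅ k n1 n3 n4 n5 ≤ d))
    (z4 z5 : ℤ) (h4 : -1/2 + a₄ - (1*c₄+0*c₅) = z4) (h5 : -(r:ℝ)/2 + a₅ - (0*c₄+r*c₅) = z5)
    (ha4 : a₄ = 0 ∨ a₄ = 1/2) (ha5 : a₅ = 0 ∨ a₅ = 1/2) : False := by
  have m0 := missG H 0 0 0 0 (by push_cast; ring)
  have m1 := missG H 1 0 0 1 (by push_cast; ring)
  rcases ha4 with rfl | rfl
  · -- shift by ±1
    have m2 := missG H 0 1 0 (2*z4) (by push_cast; linear_combination h4)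
    have m3 := missG H 1 1 0 (1+2*z4) (by push_cast; linear_combination h4)
    have m2' := missG H 0 (-1) 0 (-2-2*z4) (by push_cast; linear_combination -h4)
    have m3' := missG H 1 (-1) 0 (-1-2*z4) (by push_cast; linear_combination -h4)
    rcases Int.emod_two_eq_zero_or_one z4 with h | h
    · exact half_kill hd m0 m1 (m2'.shift (by omega)) (m3'.shift (by omega))
    · exact half_kill hd m0 m1 (m2.shift (by omega)) (m3.shift (by omega))
  have hc4 : c₄ = -z4 := by linarith
  subst hc4
  have H0 : ∀ k n1 n3 n4 n5 : ℤ, ¬(0 < GG 1 0 r a₂ (1/2) (1/2) a₅ c₁ 0 0 c₅ k n1 n3 n4 n5 ∧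
      GG 1 0 r a₂ (1/2) (1/2) a₅ c₁ 0 0 c₅ k n1 n3 n4 n5 ≤ d) := by
    intro k n1 n3 n4 n5 hn
    apply H k n1 n3 (n4+z4) n5
    convert hn using 2 <;> (simp only [GG]; push_cast; ring)
  clear H m0 m1
  have m0 := missG H0 0 0 0 0 (by push_cast; ring)
  have m1 := missG H0 1 0 0 1 (by push_cast; ring)
  have m2 := missG H0 1 1 0 2 (by push_cast; ring)
  rcases ha5 with rfl | rfl
  · have m3 := missG H0 1 0 1 (1+2*z5) (by push_cast; linear_combination h5)
    have m3' := missG H0 1 0 (-1) (1-2*z5-2*r) (by push_cast; linear_combination -h5)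
    rcases Int.emod_two_eq_zero_or_one z5 with h | h
    swap
    · exact half_kill hd m0 m1 m2 (m3.shift (by omega))
    have hr' : r = 1 ∨ r = 2 ∨ r = 3 := by omega
    rcases hr' with rfl | rfl | rfl
    · exact half_kill hd m0 m1 m2 (m3'.shift (by omega))
    · have hd' : 0.87 < d := by
        by_contra hc
        push Not at hc
        have := pow_le_pow_left₀ (by linarith) hc 5
        norm_num at this hd5
        linarith
      obtain ⟨i, rfl⟩ : ∃ i, z5 = 2*i := ⟨z5/2, by omega⟩
      push_cast at h5
      have hc5 : c₅ = 1/2 - i - 1 := by linarith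
      subst hc5
      have F1 : ∀ n : ℤ, ¬(0 < a₂ + c₁ - 1/4 + n ∧ a₂ + c₁ - 1/4 + n ≤ d) := by
        intro n hn
        apply H0 1 n 0 0 (i+1)
        convert hn using 2 <;> (simp only [GG]; push_cast; ring)
      have Fm : ∀ n : ℤ, ¬(0 < a₂ - c₁ - 1/4 + n ∧ a₂ - c₁ - 1/4 + n ≤ d) := by
        intro n hn
        apply H0 (-1) (-n) 0 0 (i+1)
        convert hn using 2 <;> (simp only [GG]; push_cast; ring)
      have F2 : ∀ n : ℤ, ¬(0 < 4*a₂ + 2*c₁ - 1/4 + n ∧ 4*a₂ + 2*c₁ - 1/4 + n ≤ d) := by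
        intro n hn
        rcases Int.even_or_odd' n with ⟨j, rfl | rfl⟩
        · apply H0 2 j 0 0 (i+1)
          convert hn using 2 <;> (simp only [GG]; push_cast; ring)
        · apply H0 2 j 1 1 (i+1)
          convert hn using 2 <;> (simp only [GG]; push_cast; ring)
      obtain ⟨Z, hZ, hZ'⟩ := trip F1 Fm F2
      have a : ((0:ℤ):ℝ) < Z := by push_cast; linarith
      have b : (Z:ℝ) < ((1:ℤ):ℝ) := by push_cast; linarith
      norm_cast at a b
      omega
    · exact half_kill hd m0 m1 m2 (m3'.shift (by omega))
  · have m3 := missG H0 0 0 1 (1+2*z5) (by push_cast; linear_combination h5)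
    have m3' := missG H0 1 1 1 (3+2*z5) (by push_cast; linear_combination h5)
    rcases Int.emod_two_eq_zero_or_one z5 with h | h
    · exact half_kill hd m0 m1 m2 (m3'.shift (by omega))
    · exact half_kill hd m0 m1 m2 (m3.shift (by omega))

lemma caseB2 {a₂ a₄ a₅ c₁ c₄ c₅ d : ℝ} (hd : 1/2 ≤ d)
    (H : ∀ k n1 n3 n4 n5 : ℤ, ¬(0 < GG 2 1 2 a₂ (1/2) a₄ a₅ c₁ 0 c₄ c₅ k n1 n3 n4 n5 ∧
      GG 2 1 2 a₂ (1/2) a₄ a₅ c₁ 0 c₄ c₅ k n1 n3 n4 n5 ≤ d))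
    (z4 z5 : ℤ) (h4 : -2/2 + a₄ - (2*c₄+1*c₅) = z4) (h5 : -2/2 + a₅ - (1*c₄+2*c₅) = z5)
    (ha4 : a₄ = 0 ∨ a₄ = 1/2) (ha5 : a₅ = 0 ∨ a₅ = 1/2) : False := by
  have m0 := missG H 0 0 0 0 (by push_cast; ring)
  have m1 := missG H 1 0 0 1 (by push_cast; ring)
  rcases ha4 with rfl | rfl
  · rcases ha5 with rfl | rfl
    · have p1 := missG H 0 1 0 (2*z4) (by push_cast; linear_combination h4)
      have p2 := missG H 1 1 0 (1+2*z4) (by push_cast; linear_combination h4)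
      have p3 := missG H 0 0 1 (2*z5) (by push_cast; linear_combination h5)
      have p4 := missG H 1 0 1 (1+2*z5) (by push_cast; linear_combination h5)
      have p5 := missG H 0 1 1 (2*z4+2*z5-2) (by push_cast; linear_combination h4+h5)
      have p6 := missG H 1 1 1 (2*z4+2*z5-1) (by push_cast; linear_combination h4+h5)
      rcases Int.emod_two_eq_zero_or_one z4 with h | h
      · rcases Int.emod_two_eq_zero_or_one z5 with h' | h'
        · exact half_kill hd m0 m1 (p5.shift (by omega)) (p6.shift (by omega))
        · exact half_kill hd m0 m1 (p3.shift (by omega)) (p4.shift (by omega))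
      · exact half_kill hd m0 m1 (p1.shift (by omega)) (p2.shift (by omega))
    · have p1 := missG H 0 0 1 (1+2*z5) (by push_cast; linear_combination h5)
      have p2 := missG H 1 0 1 (2+2*z5) (by push_cast; linear_combination h5)
      have p3 := missG H 0 0 (-1) (-5-2*z5) (by push_cast; linear_combination -h5)
      have p4 := missG H 1 0 (-1) (-4-2*z5) (by push_cast; linear_combination -h5)
      rcases Int.emod_two_eq_zero_or_one z5 with h | h
      · exact half_kill hd m0 m1 (p2.shift (by omega)) (p3.shift (by omega))
      · exact half_kill hd m0 m1 (p4.shift (by omega)) (p1.shift (by omega))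
  · have p1 := missG H 0 1 0 (1+2*z4) (by push_cast; linear_combination h4)
    have p2 := missG H 1 1 0 (2+2*z4) (by push_cast; linear_combination h4)
    have p3 := missG H 0 (-1) 0 (-5-2*z4) (by push_cast; linear_combination -h4)
    have p4 := missG H 1 (-1) 0 (-4-2*z4) (by push_cast; linear_combination -h4)
    rcases Int.emod_two_eq_zero_or_one z4 with h | h
    · exact half_kill hd m0 m1 (p2.shift (by omega)) (p3.shift (by omega))
    · exact half_kill hd m0 m1 (p4.shift (by omega)) (p1.shift (by omega))

set_option maxHeartbeats 2000000 in
/-- Theorem 3 (solubility part): for the reduced form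
`Q(x) = (x₁ + a₂x₂ + a₃x₃ + a₄x₄ + a₅x₅)x₂ − (1/2)x₃² − A(x₄+λx₅)² − t·x₅²` with
`A,t > 0`, `0 ≤ λ ≤ 1/2`, `A ≤ t + Aλ²`, minimum of `φ` on nonzero integer triples
equal to `1/2`, and `d = (A·t)^{1/5} ≤ 1`, and reals `c₁,…,c₅` with `c₂ ∈ ℤ` and
either `(a₃ = 0 ∧ c₃ ≡ 1/2)` or `(a₃ = 1/2 ∧ c₃ ≡ 0)`, the inequality `0 < Q ≤ d` is
soluble with `xᵢ ≡ cᵢ (mod 1)`. -/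
theorem thm3_solubility
    (A t lam a₂ a₃ a₄ a₅ : ℝ)
    (hA : 0 < A) (ht : 0 < t)
    (hlam : 0 ≤ lam ∧ lam ≤ 1/2)
    (hAC : A ≤ t + A * lam^2)
    (ha₂ : -1/2 < a₂ ∧ a₂ ≤ 1/2) (ha₃ : -1/2 < a₃ ∧ a₃ ≤ 1/2)
    (ha₄ : -1/2 < a₄ ∧ a₄ ≤ 1/2) (ha₅ : -1/2 < a₅ ∧ a₅ ≤ 1/2)
    (hmin_le : ∀ u v w : ℤ, ¬(u = 0 ∧ v = 0 ∧ w = 0) →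
      1/2 ≤ (1/2) * (u : ℝ)^2 + A * ((v : ℝ) + lam * (w : ℝ))^2 + t * (w : ℝ)^2)
    (hmin_eq : ∃ u v w : ℤ, ¬(u = 0 ∧ v = 0 ∧ w = 0) ∧
      (1/2) * (u : ℝ)^2 + A * ((v : ℝ) + lam * (w : ℝ))^2 + t * (w : ℝ)^2 = 1/2)
    (hd : (A * t) ^ ((1 : ℝ)/5) ≤ 1)
    (c₁ c₂ c₃ c₄ c₅ : ℝ) (hc₂ : ∃ n : ℤ, (n : ℝ) = c₂)
    (hc₃ : (a₃ = 0 ∧ ∃ n : ℤ, c₃ - 1/2 = n) ∨ (a₃ = 1/2 ∧ ∃ n : ℤ, (n : ℝ) = c₃)) :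
    ∃ x₁ x₂ x₃ x₄ x₅ : ℝ,
      (∃ k : ℤ, x₁ - c₁ = k) ∧ (∃ k : ℤ, x₂ - c₂ = k) ∧ (∃ k : ℤ, x₃ - c₃ = k) ∧
      (∃ k : ℤ, x₄ - c₄ = k) ∧ (∃ k : ℤ, x₅ - c₅ = k) ∧
      0 < (x₁ + a₂*x₂ + a₃*x₃ + a₄*x₄ + a₅*x₅) * x₂
            - (1/2) * x₃^2 - A * (x₄ + lam * x₅)^2 - t * x₅^2 ∧
      (x₁ + a₂*x₂ + a₃*x₃ + a₄*x₄ + a₅*x₅) * x₂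
            - (1/2) * x₃^2 - A * (x₄ + lam * x₅)^2 - t * x₅^2 ≤ (A * t) ^ ((1 : ℝ)/5) := by
  set d := (A * t) ^ ((1 : ℝ)/5) with hddef
  have hAt : 0 < A * t := mul_pos hA ht
  have hd0 : 0 < d := Real.rpow_pos_of_pos hAt _
  have hd5 : d^5 = A * t := by
    rw [hddef, ← Real.rpow_natCast, ← Real.rpow_mul hAt.le]
    norm_num
  clear_value d
  by_contra hcon
  -- normalise
  obtain ⟨n2, rfl⟩ := hc₂
  have norm3 : ∃ c₃' : ℝ, ∃ N : ℤ, c₃ = c₃' + N ∧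
      ((a₃ = 0 ∧ c₃' = 1/2) ∨ (a₃ = 1/2 ∧ c₃' = 0)) := by
    rcases hc₃ with ⟨h, n, hn⟩ | ⟨h, n, hn⟩
    · exact ⟨1/2, n, by linarith, Or.inl ⟨h, rfl⟩⟩
    · exact ⟨0, n, by linarith, Or.inr ⟨h, rfl⟩⟩
  obtain ⟨c, N, rfl, hc⟩ := norm3
  clear hc₃
  obtain ⟨p, hp⟩ : ∃ p, p = 2*A := ⟨_, rfl⟩
  obtain ⟨l, hl⟩ : ∃ l, l = 2*A*lam := ⟨_, rfl⟩
  obtain ⟨r, hr⟩ : ∃ r, r = 2*(t+A*lam^2) := ⟨_, rfl⟩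
  have H : ∀ k n1 n3 n4 n5 : ℤ, ¬(0 < GG p l r a₂ a₃ a₄ a₅ c₁ c c₄ c₅ k n1 n3 n4 n5 ∧
      GG p l r a₂ a₃ a₄ a₅ c₁ c c₄ c₅ k n1 n3 n4 n5 ≤ d) := by
    intro k n1 n3 n4 n5 hn
    apply hcon
    refine ⟨c₁+n1, k, c+n3, c₄+n4, c₅+n5, ⟨n1, by ring⟩, ⟨k-n2, by push_cast; ring⟩,
      ⟨n3-N, by push_cast; ring⟩, ⟨n4, by ring⟩, ⟨n5, by ring⟩, ?_⟩
    convert hn using 2 <;> (simp only [GG, hp, hl, hr]; ring)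
  clear hcon
  have hA2 : 1/2 ≤ A := by
    have := hmin_le 0 1 0 (by simp)
    norm_num at this ⊢
    linarith
  have hl2 : lam^2 ≤ 1/4 := by nlinarith
  have htA : 3/4 * A ≤ t := by nlinarith
  have hAt2 : 3/4 * A^2 ≤ A * t := by nlinarith
  have hd1 : d < 1 := by
    rcases lt_or_eq_of_le hd with h | h
    · exact h
    · exfalso
      have h1 : GG p l r a₂ a₃ a₄ a₅ c₁ c c₄ c₅ 1 (1 - ⌈GG p l r a₂ a₃ a₄ a₅ c₁ c c₄ c₅ 1 0 0 0 0⌉) 0 0 0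
        = GG p l r a₂ a₃ a₄ a₅ c₁ c c₄ c₅ 1 0 0 0 0 + 1 - ⌈GG p l r a₂ a₃ a₄ a₅ c₁ c c₄ c₅ 1 0 0 0 0⌉ := by
        simp only [GG]; push_cast; ring
      apply H 1 (1 - ⌈GG p l r a₂ a₃ a₄ a₅ c₁ c c₄ c₅ 1 0 0 0 0⌉) 0 0 0
      rw [h1]
      constructor <;> linarith [Int.ceil_lt_add_one (GG p l r a₂ a₃ a₄ a₅ c₁ c c₄ c₅ 1 0 0 0 0),
        Int.le_ceil (GG p l r a₂ a₃ a₄ a₅ c₁ c c₄ c₅ 1 0 0 0 0)]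
  have hAt1 : A * t < 1 := by
    rw [← hd5]; exact pow_lt_one₀ hd0.le hd1 (by norm_num)
  have hd23 : 2/3 < d := by
    by_contra hc
    push Not at hc
    have := pow_le_pow_left₀ hd0.le hc 5
    norm_num at this
    nlinarith
  have near : ∀ x : ℝ, 1/2 ≤ x → (d < 3/4 → x ≤ d) → ∃ z : ℤ, |2*(-x) - z| ≤ 2*d - 1 := by
    intro x hx1 hx2
    by_cases h : d < 3/4
    · refine ⟨-1, ?_⟩
      have := hx2 h
      rw [abs_le]; push_cast
      constructor <;> linarith
    · refine ⟨round (2*(-x)), ?_⟩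
      have := abs_sub_round (2*(-x))
      linarith
  have small : d < 3/4 → A ≤ 0.563 ∧ t ≤ 0.475 := by
    intro h
    have := pow_lt_pow_left₀ h hd0.le (n := 5) (by norm_num)
    norm_num at this
    have hA3 : A ≤ 0.563 := by nlinarith
    refine ⟨hA3, ?_⟩
    nlinarith
  have nA := near A hA2 (fun h => by have := small h; linarith)
  have nB := near (t + A*lam^2) (by linarith) (fun h => by have := small h; nlinarith)
  have q4 : ∀ k n5 : ℤ, k = 1 ∨ k = -1 → (∃ z : ℤ, 2*(-A) = z) ∧
      ∃ z : ℤ, -A + (k*a₄ - (p*c₄ + l*(c₅+n5))) = z := by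
    intro k n5 hk
    refine quad (-A) _ (GG p l r a₂ a₃ a₄ a₅ c₁ c c₄ c₅ k 0 0 0 n5) d hd23 nA ?_
    intro n m hn
    apply H k (k*m) 0 n n5
    rcases hk with rfl | rfl
    · convert hn using 2 <;> (simp only [GG, hp]; push_cast; ring)
    · convert hn using 2 <;> (simp only [GG, hp]; push_cast; ring)
  have q5 : ∀ k : ℤ, k = 1 ∨ k = -1 → (∃ z : ℤ, 2*(-(t + A*lam^2)) = z) ∧
      ∃ z : ℤ, -(t + A*lam^2) + (k*a₅ - (l*c₄ + r*c₅)) = z := by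
    intro k hk
    refine quad (-(t + A*lam^2)) _ (GG p l r a₂ a₃ a₄ a₅ c₁ c c₄ c₅ k 0 0 0 0) d hd23 nB ?_
    intro n m hn
    apply H k (k*m) 0 0 n
    rcases hk with rfl | rfl
    · convert hn using 2 <;> (simp only [GG, hr]; push_cast; ring)
    · convert hn using 2 <;> (simp only [GG, hr]; push_cast; ring)
  obtain ⟨⟨P, hP⟩, ⟨z4, h4⟩⟩ := q4 1 0 (Or.inl rfl)
  obtain ⟨-, ⟨z4', h4'⟩⟩ := q4 (-1) 0 (Or.inr rfl)
  obtain ⟨-, ⟨z4'', h4''⟩⟩ := q4 1 1 (Or.inl rfl)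
  obtain ⟨⟨R, hR⟩, ⟨z5, h5⟩⟩ := q5 1 (Or.inl rfl)
  obtain ⟨-, ⟨z5', h5'⟩⟩ := q5 (-1) (Or.inr rfl)
  push_cast at h4 h4' h4'' h5 h5'
  have avals : ∀ a : ℝ, -1/2 < a → a ≤ 1/2 → (∃ z : ℤ, 2*a = z) → a = 0 ∨ a = 1/2 := by
    rintro a h1 h2 ⟨z, hz⟩
    have b1 : ((-1:ℤ):ℝ) < z := by push_cast; linarith
    have b2 : (z:ℝ) < ((2:ℤ):ℝ) := by push_cast; linarith
    norm_cast at b1 b2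
    have : z = 0 ∨ z = 1 := by omega
    rcases this with rfl | rfl
    · left; push_cast at hz; linarith
    · right; push_cast at hz; linarith
  have ha4 := avals a₄ ha₄.1 ha₄.2 ⟨z4 - z4', by push_cast; linarith⟩
  have ha5 := avals a₅ ha₅.1 ha₅.2 ⟨z5 - z5', by push_cast; linarith⟩
  -- integers
  obtain ⟨p', hp'⟩ : ∃ p' : ℤ, p = p' := ⟨-P, by push_cast; linarith⟩
  obtain ⟨r', hr'⟩ : ∃ r' : ℤ, r = r' := ⟨-R, by push_cast; linarith⟩
  obtain ⟨l', hl'⟩ : ∃ l' : ℤ, l = l' := ⟨z4 - z4'', by push_cast; linarith⟩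
  have hdet : p * r - l^2 = 4*(A*t) := by rw [hp, hr, hl]; ring
  have i1 : 1 ≤ p' := by
    have : (1:ℝ) ≤ p' := by linarith
    exact_mod_cast this
  have i2 : p' ≤ r' := by
    have : (p':ℝ) ≤ r' := by linarith
    exact_mod_cast this
  have i3 : 0 ≤ l' := by
    have : (0:ℝ) ≤ l' := by rw [← hl', hl]; have := hlam.1; positivity
    exact_mod_cast this
  have i4 : 2 * l' ≤ p' := by
    have : 2 * (l':ℝ) ≤ p' := by rw [← hl', hl, ← hp', hp]; linarith [mul_le_mul_of_nonneg_left hlam.2 hA.le]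
    exact_mod_cast this
  have i5 : p' * r' - l'^2 < 4 := by
    have : (p':ℝ) * r' - l'^2 < 4 := by rw [← hl', ← hp', ← hr']; linarith
    exact_mod_cast this
  have i6 : p' ≤ 2 := by nlinarith
  have h4n : -p/2 + a₄ - (p*c₄+l*c₅) = z4 := by rw [← h4]; linarith
  have h5n : -r/2 + a₅ - (l*c₄+r*c₅) = z5 := by rw [← h5]; linarith
  have hd5' : d^5 = (p*r - l^2)/4 := by linarith
  clear h4 h4' h4'' h5 h5' hdet hp hl hr
  subst hp' hr' hl'
  have hdh : 1/2 ≤ d := by linarith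
  have hcase : (p' = 1 ∧ l' = 0) ∨ (p' = 2 ∧ l' = 1 ∧ r' = 2) := by
    have : p' = 1 ∨ p' = 2 := by omega
    rcases this with rfl | rfl
    · left; omega
    · right
      have : l' = 0 ∨ l' = 1 := by omega
      rcases this with rfl | rfl
      · omega
      · omega
  rcases hcase with ⟨rfl, rfl⟩ | ⟨rfl, rfl, rfl⟩
  · have hr3 : r' ≤ 3 := by omega
    push_cast at H h4n h5n hd5'
    have hd6 : d^5 = (r':ℝ)/4 := by linarith
    rcases hc with ⟨rfl, rfl⟩ | ⟨rfl, rfl⟩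
    · exact caseA1 hdh i2 hr3 hd6 H z4 z5 h4n h5n ha4 ha5
    · exact caseB1 hdh i2 hr3 hd6 H z4 z5 h4n h5n ha4 ha5
  · push_cast at H h4n h5n hd5'
    have hd6 : d^5 = 3/4 := by linarith
    rcases hc with ⟨rfl, rfl⟩ | ⟨rfl, rfl⟩
    · exact caseA2 hdh hd6 H z4 z5 h4n h5n ha4 ha5
    · exact caseB2 hdh H z4 z5 h4n h5n ha4 ha5
end

section
/- Let Q_5(x_1,…,x_5) = (x_1 + x_2/2 + x_3/2 + x_4/2)·x_2 − x_3²/2 − x_4²/2 − 2x_5². There are no integers x_1, …, x_5 with 0 < Q_5(x_1 + 1/2, x_2, x_3, x_4, x_5) < 1. (This shows that equality is required in Theorem 3 for the critical form Q_5 at c = (1/2,0,0,0,0).) -/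
/-- For the critical form `Q₅(x) = (x₁ + x₂/2 + x₃/2 + x₄/2)x₂ − x₃²/2 − x₄²/2 − 2x₅²`,
there are no integers `x₁,…,x₅` with `0 < Q₅(x₁+1/2, x₂, x₃, x₄, x₅) < 1`. -/
theorem critical_form_Q5 :
    ¬ ∃ x₁ x₂ x₃ x₄ x₅ : ℤ,
      0 < (((x₁ : ℝ) + 1/2) + (x₂ : ℝ)/2 + (x₃ : ℝ)/2 + (x₄ : ℝ)/2) * (x₂ : ℝ)
            - (x₃ : ℝ)^2/2 - (x₄ : ℝ)^2/2 - 2*(x₅ : ℝ)^2 ∧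
      (((x₁ : ℝ) + 1/2) + (x₂ : ℝ)/2 + (x₃ : ℝ)/2 + (x₄ : ℝ)/2) * (x₂ : ℝ)
            - (x₃ : ℝ)^2/2 - (x₄ : ℝ)^2/2 - 2*(x₅ : ℝ)^2 < 1 := by
  rintro ⟨x, a, b, c, e, h0, h1⟩
  have h2 : (0 : ℤ) < (2 * x + 1 + a + b + c) * a - b ^ 2 - c ^ 2 - 4 * e ^ 2 := by
    have : (0 : ℝ) < (2 * x + 1 + a + b + c) * a - b ^ 2 - c ^ 2 - 4 * e ^ 2 := by linarith
    exact_mod_cast this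
  have h3 : (2 * x + 1 + a + b + c) * a - b ^ 2 - c ^ 2 - 4 * e ^ 2 < (2 : ℤ) := by
    have : (2 * x + 1 + a + b + c) * a - b ^ 2 - c ^ 2 - 4 * e ^ 2 < (2 : ℝ) := by linarith
    exact_mod_cast this
  have h4 : (2 * x + 1 + a + b + c) * a - b ^ 2 - c ^ 2 - 4 * e ^ 2 = 1 := by linarith
  have h5 := congrArg (Int.cast : ℤ → ZMod 4) h4
  push_cast at h5
  have h6 : (4 : ZMod 4) = 0 := by decide
  rw [h6, zero_mul, sub_zero] at h5
  have key : ∀ x a b c : ZMod 4, (2 * x + 1 + a + b + c) * a - b ^ 2 - c ^ 2 ≠ 1 := by decide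
  exact key _ _ _ _ h5
end

section
/- Let Q_6(x_1,…,x_5) = (x_1 + x_2/2 + x_3/2)·x_2 − x_3²/2 − x_4² − x_5². There are no integers x_1, …, x_5 with 0 < Q_6(x_1, x_2, x_3, x_4 + 1/2, x_5 + 1/2) < 1. (This shows that equality is required in Theorem 3 for the critical form Q_6 at c = (0,0,0,1/2,1/2).) -/
/-- For the critical form `Q₆(x) = (x₁ + x₂/2 + x₃/2)x₂ − x₃²/2 − x₄² − x₅²`,
there are no integers `x₁,…,x₅` with `0 < Q₆(x₁, x₂, x₃, x₄+1/2, x₅+1/2) < 1`. -/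
theorem critical_form_Q6 :
    ¬ ∃ x₁ x₂ x₃ x₄ x₅ : ℤ,
      0 < ((x₁ : ℝ) + (x₂ : ℝ)/2 + (x₃ : ℝ)/2) * (x₂ : ℝ)
            - (x₃ : ℝ)^2/2 - ((x₄ : ℝ) + 1/2)^2 - ((x₅ : ℝ) + 1/2)^2 ∧
      ((x₁ : ℝ) + (x₂ : ℝ)/2 + (x₃ : ℝ)/2) * (x₂ : ℝ)
            - (x₃ : ℝ)^2/2 - ((x₄ : ℝ) + 1/2)^2 - ((x₅ : ℝ) + 1/2)^2 < 1 := by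
  rintro ⟨a, b, c, d, e, h0, h1⟩
  have h : 2*a*b + b^2 + b*c - c^2 - 2*(d*(d+1)) - 2*(e*(e+1)) - 1 = 1 := by
    have h2 : 0 < 2*a*b + b^2 + b*c - c^2 - 2*(d*(d+1)) - 2*(e*(e+1)) - 1 := by
      have : (0:ℝ) < 2*a*b + b^2 + b*c - c^2 - 2*(d*(d+1)) - 2*(e*(e+1)) - 1 := by
        linarith
      exact_mod_cast this
    have h3 : 2*a*b + b^2 + b*c - c^2 - 2*(d*(d+1)) - 2*(e*(e+1)) - 1 < 2 := by
      have : (2:ℝ)*a*b + b^2 + b*c - c^2 - 2*(d*(d+1)) - 2*(e*(e+1)) - 1 < 2 := by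
        linarith
      exact_mod_cast this
    omega
  obtain ⟨m, hm⟩ := Int.even_mul_succ_self d
  obtain ⟨n, hn⟩ := Int.even_mul_succ_self e
  rw [hm, hn] at h
  have key : ((2*a*b + b^2 + b*c - c^2 : ℤ) : ZMod 4) = 2 := by
    have h4 : 2*a*b + b^2 + b*c - c^2 = 2 + 4*(m+n) := by linarith
    rw [h4]
    push_cast
    rw [show (4 : ZMod 4) = 0 from rfl]
    ring
  push_cast at key
  have all : ∀ a b c : ZMod 4, 2*a*b + b^2 + b*c - c^2 ≠ 2 := by decide
  exact all _ _ _ key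
end

section
/- Theorem 4: With the reduced form Q, parameters d = (8|D|)^{1/5}, m, K as in the context, suppose the reals c_1, …, c_5 satisfy c_2 ∈ ℤ, and suppose a < 1/2, d ≤ 1, a + d ≤ 1, and (m, K) ∈ {(4,1), (3,2), (3,1)}. Then there exist x_1, …, x_5 with x_i − c_i ∈ ℤ for every i such that 0 < Q(x_1,…,x_5) < d. -/
/-- The positive definite ternary form of the Birch reduction. -/
noncomputable def redPhi (a A t lam h₄ h₅ : ℝ) (u v w : ℝ) : ℝ :=
  a * (u + h₄*v + h₅*w)^2 + A * (v + lam*w)^2 + t * w^2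

/-- The Birch-reduced indefinite quadratic form of type (1,4). -/
noncomputable def redQ (a A t lam h₄ h₅ a₂ a₃ a₄ a₅ : ℝ) (x₁ x₂ x₃ x₄ x₅ : ℝ) : ℝ :=
  (x₁ + a₂*x₂ + a₃*x₃ + a₄*x₄ + a₅*x₅) * x₂ - redPhi a A t lam h₄ h₅ x₃ x₄ x₅


/-- `s` avoids the open arcs `(γ + k - d, γ + k)`. -/
def Av (γ d s : ℝ) : Prop := ∀ k : ℤ, γ + k ≤ s ∨ s + d ≤ γ + k

lemma Av.lift {γ d s : ℝ} (h : Av γ d s) : ∃ k : ℤ, γ + k ≤ s ∧ s + d ≤ γ + k + 1 := by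
  refine ⟨⌊s - γ⌋, ?_, ?_⟩
  · have := Int.floor_le (s - γ); linarith
  · have h1 := Int.lt_floor_add_one (s - γ)
    rcases h (⌊s - γ⌋ + 1) with h2 | h2
    · push_cast at h2; linarith
    · push_cast at h2; linarith

lemma Av.le_one {γ d s : ℝ} (h : Av γ d s) : d ≤ 1 := by
  obtain ⟨k, h1, h2⟩ := h.lift
  linarith

lemma window (γ x : ℝ) : ∃ k : ℤ, x < γ + k ∧ γ + k ≤ x + 1 := by
  refine ⟨⌊x - γ⌋ + 1, ?_, ?_⟩
  · have := Int.lt_floor_add_one (x - γ); push_cast; linarith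
  · have := Int.floor_le (x - γ); push_cast; linarith

/-- Representative with `|y| ∈ [m/2, (m+1)/2]`. -/
lemma exists_rep (y : ℝ) (m : ℕ) :
    ∃ i : ℤ, (m : ℝ)^2 / 4 ≤ (y + i)^2 ∧ (y + i)^2 ≤ ((m : ℝ) + 1)^2 / 4 := by
  have hm : (0 : ℝ) ≤ m := Nat.cast_nonneg m
  obtain ⟨k, h1, h2⟩ := window y ((m : ℝ) / 2 - 1 / 2)
  by_cases h : (m : ℝ) / 2 ≤ y + k
  · exact ⟨k, by nlinarith, by nlinarith⟩
  · push Not at h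
    refine ⟨k - m, ?_, ?_⟩ <;> push_cast <;> nlinarith

lemma chain {a d γ y s : ℝ} (ha : 0 < a) (m : ℕ) (hm : m * a < d)
    (h : ∀ i : ℤ, Av γ d (s + a * (y + i)^2)) :
    Av (γ - a / 4) (d + ((m : ℝ)^2 - 1) * a / 4) s := by
  induction m with
  | zero =>
    intro k
    obtain ⟨i, h1, h2⟩ := exists_rep y 0
    push_cast at *
    rcases h i k with h3 | h3
    · left; nlinarith
    · right; nlinarith [sq_nonneg (y + i)]
  | succ m ih =>
    push_cast at hm
    have hd : m * a < d := by nlinarith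
    intro k
    obtain ⟨i, h1, h2⟩ := exists_rep y (m + 1)
    push_cast at *
    rcases ih hd k with h4 | h4
    · left; linarith
    rcases h i k with h3 | h3
    · left
      have := mul_le_mul_of_nonneg_left h2 ha.le
      nlinarith
    · right
      have := mul_le_mul_of_nonneg_left h1 ha.le
      nlinarith

lemma bdd_quad {r s : ℝ} (h : ∀ n : ℕ, |n * s + n * (n - 1) / 2 * r| ≤ 1) : r = 0 ∧ s = 0 := by
  have hr : r = 0 := by
    by_contra hr
    obtain ⟨n, hn⟩ := exists_nat_gt (3 / |r|)
    have hr' : 0 < |r| := abs_pos.mpr hr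
    have h1 := h n
    have h2 := h (2 * n)
    have hn0 : (0 : ℝ) < n := lt_trans (by positivity) hn
    have hn1 : (1 : ℝ) ≤ n := by
      have : 0 < n := by exact_mod_cast hn0
      exact_mod_cast this
    rw [div_lt_iff₀ hr'] at hn
    push_cast at h2
    rw [abs_le] at h1 h2
    rcases abs_cases r with ⟨h3, h4⟩ | ⟨h3, h4⟩
    · rw [h3] at hn
      have : (n : ℝ) * r ≤ n * n * r := by nlinarith
      nlinarith
    · rw [h3] at hn
      have : (n : ℝ) * (-r) ≤ n * n * (-r) := by nlinarith
      nlinarith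
  subst hr
  refine ⟨rfl, ?_⟩
  by_contra hs
  obtain ⟨n, hn⟩ := exists_nat_gt (1 / |s|)
  have hs' : 0 < |s| := abs_pos.mpr hs
  have h1 := h n
  rw [div_lt_iff₀ hs'] at hn
  simp only [mul_zero, add_zero, abs_mul, Nat.abs_cast] at h1
  linarith

lemma rigid {p q r γ d : ℝ} (j : ℤ) (h : ∀ n : ℕ, Av γ d (p * n^2 + q * n + r))
    (hj : |2 * p - j| < 2 * d - 1) : 2 * p = j ∧ ∃ N : ℤ, p + q = N := by
  have hd := (h 0).le_one
  have hl := fun n => (h n).lift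
  choose k hk1 hk2 using hl
  let g : ℕ → ℝ := fun n => p * n^2 + q * n + r - γ - k n
  have g1 : ∀ n, 0 ≤ g n := fun n => by have := hk1 n; simp only [g]; linarith
  have g2 : ∀ n, g n ≤ 1 - d := fun n => by have := hk2 n; simp only [g]; linarith
  have hΔ : ∀ n, g (n + 2) - 2 * g (n + 1) + g n = 2 * p - j := by
    intro n
    have e : g (n + 2) - 2 * g (n + 1) + g n
        = 2 * p - ((k (n + 2) - 2 * k (n + 1) + k n : ℤ) : ℝ) := by
      simp only [g]; push_cast; ring
    have hz : k (n + 2) - 2 * k (n + 1) + k n = j := by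
      have b1 := g1 n
      have b2 := g2 n
      have b3 := g1 (n + 1)
      have b4 := g2 (n + 1)
      have b5 := g1 (n + 2)
      have b6 := g2 (n + 2)
      rw [abs_lt] at hj
      have c1 : ((k (n + 2) - 2 * k (n + 1) + k n : ℤ) : ℝ) < j + 1 := by linarith
      have c2 : (j : ℝ) - 1 < ((k (n + 2) - 2 * k (n + 1) + k n : ℤ) : ℝ) := by linarith
      have c1' : k (n + 2) - 2 * k (n + 1) + k n < j + 1 := by exact_mod_cast c1
      have c2' : j - 1 < k (n + 2) - 2 * k (n + 1) + k n := by exact_mod_cast c2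
      omega
    rw [e, hz]
  have hf : ∀ n : ℕ, g n = g 0 + (n * (g 1 - g 0) + n * (n - 1) / 2 * (2 * p - j)) ∧
      g (n + 1) = g 0 + ((n + 1) * (g 1 - g 0) + (n + 1) * n / 2 * (2 * p - j)) := by
    intro n
    induction n with
    | zero => constructor <;> simp
    | succ n ih =>
      obtain ⟨i1, i2⟩ := ih
      have := hΔ n
      refine ⟨by rw [i2]; push_cast; ring, ?_⟩
      have e : g (n + 1 + 1) = 2 * p - j + 2 * g (n + 1) - g n := by linarith
      rw [e, i1, i2]; push_cast; ring
  have hb := bdd_quad (r := 2 * p - j) (s := g 1 - g 0) (fun n => by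
    have e := (hf n).1
    have b1 := g1 n
    have b2 := g2 n
    have b3 := g1 0
    have b4 := g2 0
    have b5 : 0 < d := by
      have := abs_nonneg (2 * p - j)
      linarith
    rw [abs_le]; constructor <;> linarith)
  refine ⟨by linarith [hb.1], k 1 - k 0, ?_⟩
  have := hb.2
  simp only [g] at this
  push_cast at this ⊢
  linarith

/-- Rigidity along the progression `x + k n`. -/
lemma rigid_sq {b x s γ d : ℝ} (k : ℕ) (j : ℤ) (h : ∀ i : ℤ, Av γ d (s + b * (x + i)^2))
    (hj : |2 * (b * k^2) - j| < 2 * d - 1) :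
    2 * (b * k^2) = j ∧ ∀ i : ℤ, ∃ N : ℤ, b * k * (k + 2 * (x + i)) = N := by
  have key : ∀ i : ℤ, 2 * (b * k^2) = j ∧
      ∃ N : ℤ, b * k^2 + 2 * b * k * (x + i) = N := by
    intro i
    refine rigid (γ := γ) (r := s + b * (x + i)^2) j (fun n => ?_) hj
    have := h (i + k * n)
    push_cast at this
    convert this using 1
    ring
  refine ⟨(key 0).1, fun i => ?_⟩
  obtain ⟨N, hN⟩ := (key i).2
  exact ⟨N, by rw [← hN]; ring⟩

lemma exists_dist (Y : ℝ) : ∃ y : ℝ, 0 ≤ y ∧ y ≤ 1 / 2 ∧ ∃ n : ℤ, Y + n = y ∨ Y + n = -y := by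
  obtain ⟨k, h1, h2⟩ := window Y (-1 / 2)
  by_cases h : 0 ≤ Y + k
  · exact ⟨Y + k, h, by linarith, k, Or.inl rfl⟩
  · exact ⟨-(Y + k), by linarith, by linarith, k, Or.inr (by ring)⟩

lemma av_dist {Y y s a γ d : ℝ} {n : ℤ} (hn : Y + n = y ∨ Y + n = -y)
    (h : ∀ i : ℤ, Av γ d (s + a * (Y + i)^2)) (i : ℤ) : Av γ d (s + a * (y + i)^2) := by
  rcases hn with hn | hn
  · have := h (n + i)
    push_cast at this
    rwa [← add_assoc, hn] at this
  · have := h (n - i)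
    push_cast at this
    convert this using 2
    have : Y + (n - i) = -(y + i) := by linarith
    rw [this]; ring

lemma k1_step {A t lam Z W g D : ℝ} (hlam : 0 ≤ lam ∧ lam ≤ 1/2)
    (hAC : A ≤ t + A * lam^2)
    (HL : ∀ j l : ℤ, Av g D (t * (W + l)^2 + A * (Z + lam * l + j)^2))
    (hD : 2/3 < D) (hA1 : A < D) (hA2 : D ≤ 2 * A) (htD : A = 1/2 → t < D) :
    A = 1/2 ∧ lam = 0 ∧ t = 1/2 ∧ (∃ N : ℤ, Z + 1/2 = N) ∧ (∃ N : ℤ, W + 1/2 = N) := by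
  have r1 := fun l : ℤ => rigid_sq (b := A) (x := Z + lam * l) (s := t * (W + l)^2) (γ := g) (d := D)
    1 1 (fun j => HL j l) (by rw [abs_lt]; push_cast; constructor <;> linarith)
  have hA : A = 1/2 := by
    have := (r1 0).1; push_cast at this; linarith
  obtain ⟨N0, hN0⟩ := (r1 0).2 0
  obtain ⟨N1, hN1⟩ := (r1 1).2 0
  push_cast at hN0 hN1
  rw [hA] at hN0 hN1
  have hl : lam = ((N1 - N0 : ℤ) : ℝ) := by push_cast; linarith
  have hl0 : lam = 0 := by
    have c1 : ((N1 - N0 : ℤ) : ℝ) < 1 := by linarith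
    have c2 : (-1 : ℝ) < ((N1 - N0 : ℤ) : ℝ) := by linarith
    have c1' : N1 - N0 < 1 := by exact_mod_cast c1
    have c2' : -1 < N1 - N0 := by exact_mod_cast c2
    have : N1 - N0 = 0 := by omega
    rw [hl, this]; simp
  have htD' := htD hA
  rw [hl0, hA] at hAC
  have r2 := rigid_sq (b := t) (x := W) (s := A * Z^2) (γ := g) (d := D) 1 1
    (fun l => by
      have := HL 0 l
      rw [hl0] at this
      convert this using 1
      push_cast; ring) (by rw [abs_lt]; push_cast; constructor <;> linarith)
  have ht : t = 1/2 := by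
    have := r2.1; push_cast at this; linarith
  obtain ⟨M, hM⟩ := r2.2 0
  push_cast at hM
  rw [ht] at hM
  exact ⟨hA, hl0, ht, ⟨N0, by linarith⟩, ⟨M, by linarith⟩⟩

/-- A line with all steps up to `(2+y)^2` admissible. -/
lemma line_full {a d γ s y : ℝ} (ha : 0 < a) (h3 : 3 * a < d) (h8 : 8 * (a * y) < d) (hy0 : 0 ≤ y)
    (hy : y ≤ 1/2) (hlen : 1 < d + 4 * a) (h : ∀ i : ℤ, Av γ d (s + a * (y + i)^2)) : False := by
  obtain ⟨k, k1, k2⟩ := window γ (s + a * y^2)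
  have p0 := h 0 k
  have p1 := h (-1) k
  have p2 := h 1 k
  have p3 := h (-2) k
  have p4 := h 2 k
  push_cast at p0 p1 p2 p3 p4
  have hay : 0 ≤ a * y := by positivity
  have hay2 : a * y ≤ a / 2 := by nlinarith
  ring_nf at p0 p1 p2 p3 p4 k1 k2
  rcases p0 with p0 | p0
  · linarith
  rcases p1 with p1 | p1
  · linarith
  rcases p2 with p2 | p2
  · linarith
  rcases p3 with p3 | p3
  · linarith
  rcases p4 with p4 | p4
  · linarith
  linarith

/-- Case `(4,1)`. -/
lemma case41 {a A t lam h₄ h₅ d γ Y Z W : ℝ} (ha : 0 < a) (hA : 0 < A)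
    (hlam : 0 ≤ lam ∧ lam ≤ 1/2) (hAC : A ≤ t + A * lam^2) (hd : 0 < d)
    (hd5 : d^5 = 2 * a * A * t) (m1 : 4 * a < d) (m2 : d ≤ 5 * a)
    (K1 : A < d + 15 * a / 4) (K2 : d + 15 * a / 4 ≤ 2 * A)
    (H : ∀ i j l : ℤ, Av γ d (t * (W + l)^2 + A * (Z + lam * l + j)^2
      + a * (Y + h₄ * j + h₅ * l + i)^2)) : False := by
  have HL : ∀ j l : ℤ, Av (γ - a / 4) (d + 15 * a / 4)
      (t * (W + l)^2 + A * (Z + lam * l + j)^2) := fun j l => by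
    have := chain ha 4 (by push_cast; linarith) (fun i => H i j l)
    convert this using 1
    push_cast; ring
  have hle := (HL 0 0).le_one
  have htA : 3 / 4 * A ≤ t := by nlinarith [mul_nonneg hlam.1 (sub_nonneg.2 hlam.2)]
  have e1 : 7 / 4 * d ≤ d + 15 * a / 4 := by linarith
  have hA' : 7 / 8 * d ≤ A := by linarith
  have hsq : (7 / 8 * d)^2 ≤ A^2 := by gcongr
  have h5 : 3 / 10 * d * (7 / 8 * d)^2 ≤ d^5 := by
    have h1 : 3 / 4 * A^2 ≤ A * t := by nlinarith
    have h2 : d * (3 / 4 * A^2) ≤ 5 * a * (A * t) :=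
      mul_le_mul m2 h1 (by positivity) (by positivity)
    nlinarith
  have hd2 : 0.2296 ≤ d^2 := by
    by_contra hc
    push Not at hc
    have : d^5 = d^3 * d^2 := by ring
    have h3 : 0 < d^3 := by positivity
    nlinarith
  have hdl : 0.47 < d := by nlinarith
  have hdu : d ≤ 4 / 7 := by linarith
  obtain ⟨hA12, -, ht12, -, -⟩ := k1_step hlam hAC HL (by linarith) K1 K2 (fun hA => by
    rw [hA] at hd5
    have h4 : t ≤ 5 * d^4 := by
      have : d * t ≤ d * (5 * d^4) := by nlinarith
      exact le_of_mul_le_mul_left this hd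
    have h6 : d^4 ≤ (4/7)^3 * d := by
      have : d^3 ≤ (4/7)^3 := by gcongr
      nlinarith
    norm_num at h6
    linarith)
  rw [hA12, ht12] at hd5
  have h4 : 1 / 10 ≤ d^4 := by
    have : d * (1/10) ≤ d * d^4 := by nlinarith
    exact le_of_mul_le_mul_left this hd
  have hdl2 : 0.56 < d := by
    by_contra hc
    push Not at hc
    have : d^4 ≤ 0.56^4 := by gcongr
    norm_num at this
    linarith
  obtain ⟨y, y0, y1, n, hn⟩ := exists_dist Y
  refine line_full ha (by linarith) ?_ y0 y1 (by linarith)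
    (av_dist (γ := γ) (d := d) (s := t * W^2 + A * Z^2) (a := a) hn (fun i => by
      have := H i 0 0
      simpa using this))
  nlinarith

set_option maxHeartbeats 1600000 in
/-- Case `(3,1)`: only one exceptional configuration survives. -/
lemma case31 {a A t lam h₄ h₅ d γ Y Z W : ℝ} (ha : 0 < a) (hA : 0 < A)
    (hlam : 0 ≤ lam ∧ lam ≤ 1/2) (hAC : A ≤ t + A * lam^2)
    (hh₄ : -1/2 < h₄ ∧ h₄ ≤ 1/2) (hh₅ : -1/2 < h₅ ∧ h₅ ≤ 1/2) (hd : 0 < d)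
    (hd5 : d^5 = 2 * a * A * t) (m1 : 3 * a < d) (m2 : d ≤ 4 * a)
    (K1 : A < d + 2 * a) (K2 : d + 2 * a ≤ 2 * A)
    (H : ∀ i j l : ℤ, Av γ d (t * (W + l)^2 + A * (Z + lam * l + j)^2
      + a * (Y + h₄ * j + h₅ * l + i)^2)) :
    a = 1/6 ∧ A = 1/2 ∧ t = 1/2 ∧ lam = 0 ∧ h₄ = 0 ∧ h₅ = 0 ∧
      (∃ N : ℤ, Y + 1/2 = N) ∧ (∃ N : ℤ, Z + 1/2 = N) ∧ (∃ N : ℤ, W + 1/2 = N) := by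
  have HL : ∀ j l : ℤ, Av (γ - a / 4) (d + 2 * a)
      (t * (W + l)^2 + A * (Z + lam * l + j)^2) := fun j l => by
    have := chain ha 3 (by push_cast; linarith) (fun i => H i j l)
    convert this using 1
    push_cast; ring
  have hle := (HL 0 0).le_one
  have htA : 3 / 4 * A ≤ t := by nlinarith [mul_nonneg hlam.1 (sub_nonneg.2 hlam.2)]
  have hA' : 3 / 4 * d ≤ A := by linarith
  have hsq : (3 / 4 * d)^2 ≤ A^2 := by gcongr
  have h5 : 3 / 8 * d * (3 / 4 * d)^2 ≤ d^5 := by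
    have h1 : 3 / 4 * A^2 ≤ A * t := by nlinarith
    have h2 : d * (3 / 4 * A^2) ≤ 4 * a * (A * t) :=
      mul_le_mul m2 h1 (by positivity) (by positivity)
    nlinarith
  have hd2 : 0.2 ≤ d^2 := by
    by_contra hc
    push Not at hc
    have : d^5 = d^3 * d^2 := by ring
    have h3 : 0 < d^3 := by positivity
    nlinarith
  have hdl : 4 / 9 < d := by nlinarith
  have hdu : d ≤ 2 / 3 := by linarith
  obtain ⟨hA12, hl0, ht12, hZ, hW⟩ := k1_step hlam hAC HL (by linarith) K1 K2 (fun hA => by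
    rw [hA] at hd5
    have h4 : t ≤ 4 * d^4 := by
      have : d * t ≤ d * (4 * d^4) := by nlinarith
      exact le_of_mul_le_mul_left this hd
    have h6 : d^4 ≤ (2/3)^3 * d := by
      have : d^3 ≤ (2/3)^3 := by gcongr
      nlinarith
    norm_num at h6
    linarith)
  rw [hA12, ht12] at hd5
  have h4 : 1 / 8 ≤ d^4 := by
    have : d * (1/8) ≤ d * d^4 := by nlinarith
    exact le_of_mul_le_mul_left this hd
  have hdl2 : 0.594 < d := by
    by_contra hc
    push Not at hc
    have : d^4 ≤ 0.594^4 := by gcongr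
    norm_num at this
    linarith
  obtain ⟨y, y0, y1, n, hn⟩ := exists_dist Y
  have hy := av_dist (γ := γ) (d := d) (s := t * W^2 + A * Z^2) (a := a) hn (fun i => by
      have := H i 0 0
      simpa using this)
  generalize t * W^2 + A * Z^2 = s at hy
  have y38 : 3 / 8 < y := by
    by_contra hc
    push Not at hc
    exact line_full ha m1 (by nlinarith) y0 y1 (by linarith) hy
  have hay : 3 / 8 * a ≤ a * y := by nlinarith
  have hay2 : a * y ≤ a / 2 := by nlinarith
  obtain ⟨k, k1, k2⟩ := window γ (s + a * y^2)
  have p0 := hy 0 k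
  have p1 := hy (-1) k
  have p2 := hy 1 k
  have p3 := hy (-2) k
  have p4 := hy 2 k
  have q1 := hy 3 (k + 1)
  have q2 := hy (-4) (k + 1)
  have r1 := hy 4 (k + 3)
  have r2 := hy (-5) (k + 3)
  push_cast at p0 p1 p2 p3 p4 q1 q2 r1 r2
  ring_nf at p0 p1 p2 p3 p4 q1 q2 r1 r2 k1 k2
  have P3 : s + a * 4 - a * y * 4 + a * y^2 + d ≤ γ + k := by
    rcases p0 with p0 | p0
    · linarith
    rcases p1 with p1 | p1
    · linarith
    rcases p2 with p2 | p2
    · linarith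
    rcases p3 with p3 | p3
    · linarith
    linarith
  have low : 0.602 < d := by
    by_contra hc
    push Not at hc
    have hd5' : d^5 ≤ 0.602^5 := by gcongr
    norm_num at hd5'
    rcases q1 with q1 | q1
    · linarith
    rcases q2 with q2 | q2
    · linarith
    rcases p4 with p4 | p4
    · linarith
    linarith
  have high : d < 0.611 := by
    by_contra hc
    push Not at hc
    have hd5' : 0.611^5 ≤ d^5 := by gcongr
    norm_num at hd5'
    rcases r1 with r1 | r1
    · linarith
    rcases r2 with r2 | r2
    · linarith
    linarith
  have b1 : 0.602^5 ≤ d^5 := by gcongr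
  have b2 : d^5 ≤ 0.611^5 := by gcongr
  norm_num at b1 b2
  have rr := fun j l : ℤ => rigid_sq (b := a) (x := Y + h₄ * j + h₅ * l)
    (s := t * (W + l)^2 + A * (Z + lam * l + j)^2) (γ := γ) (d := d)
    3 3 (fun i => H i j l) (by rw [abs_lt]; push_cast; constructor <;> linarith)
  have ha6 : a = 1/6 := by
    have := (rr 0 0).1; push_cast at this; linarith
  obtain ⟨N0, hN0⟩ := (rr 0 0).2 0
  obtain ⟨N1, hN1⟩ := (rr 1 0).2 0
  obtain ⟨N2, hN2⟩ := (rr 0 1).2 0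
  push_cast at hN0 hN1 hN2
  rw [ha6] at hN0 hN1 hN2
  have small : ∀ (h : ℝ) (N : ℤ), -1/2 < h ∧ h ≤ 1/2 → h = N → h = 0 := by
    intro h N hh hN
    have c1 : (N : ℝ) < 1 := by linarith
    have c2 : (-1 : ℝ) < N := by linarith
    have c1' : N < 1 := by exact_mod_cast c1
    have c2' : -1 < N := by exact_mod_cast c2
    have : N = 0 := by omega
    rw [hN, this]; simp
  refine ⟨ha6, hA12, ht12, hl0, small h₄ (N1 - N0) hh₄ (by push_cast; linarith),
    small h₅ (N2 - N0) hh₅ (by push_cast; linarith), ⟨N0 - 1, by push_cast; linarith⟩, hZ, hW⟩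

lemma dist_min {V v : ℝ} {n : ℤ} (v1 : v ≤ 1/2) (hn : V + n = v ∨ V + n = -v)
    (m : ℤ) : v ≤ |V + m| := by
  rcases lt_trichotomy m n with h | h | h
  · have : (m : ℝ) + 1 ≤ n := by exact_mod_cast h
    have := neg_le_abs (V + m)
    rcases hn with hn | hn <;> linarith
  · subst h
    rcases hn with hn | hn
    · rw [hn]; exact le_abs_self v
    · rw [hn, abs_neg]; exact le_abs_self v
  · have : (n : ℝ) + 1 ≤ m := by exact_mod_cast h
    have := le_abs_self (V + m)
    rcases hn with hn | hn <;> linarith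

lemma planeG {A D g s z : ℝ} (hA : 0 < A) (hAD : 2 * A < D) (z0 : 0 ≤ z) (z1 : z ≤ 1/2)
    (h : ∀ j : ℤ, Av g D (s + A * (z + j)^2)) (k : ℤ) :
    g + k ≤ s + A * z^2 ∨ s + A * (1 + z)^2 + D ≤ g + k := by
  have p0 := h 0 k
  have p1 := h (-1) k
  have p2 := h 1 k
  push_cast at p0 p1 p2
  have hay : 0 ≤ A * z := by positivity
  have hay2 : A * z ≤ A / 2 := by nlinarith
  ring_nf at p0 p1 p2 ⊢
  rcases p0 with p0 | p0
  · left; linarith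
  rcases p1 with p1 | p1
  · linarith
  rcases p2 with p2 | p2
  · linarith
  right; linarith

lemma planeX {A D g s z : ℝ} (hA : 0 < A) (hAD : 2 * A < D) (z0 : 0 ≤ z) (z1 : z ≤ 1/2)
    (hX : 3 * (1 - 2 * z) * A < D)
    (h : ∀ j : ℤ, Av g D (s + A * (z + j)^2)) (k : ℤ) :
    g + k ≤ s + A * z^2 ∨ s + A * (2 - z)^2 + D ≤ g + k := by
  rcases planeG hA hAD z0 z1 h k with p | p
  · exact Or.inl p
  have p3 := h (-2) k
  push_cast at p3
  ring_nf at p3 p hX ⊢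
  rcases p3 with p3 | p3
  · linarith
  right; linarith

lemma sq_bounds {A v : ℝ} (hA : 0 < A) (x1 : 0 ≤ v) (x2 : v ≤ 1/2) :
    A * v^2 ≤ A / 4 ∧ 9 / 4 * A ≤ A * (2 - v)^2 ∧ A ≤ A * (1 + v)^2 := by
  have h1 : v^2 ≤ 1/4 := by nlinarith
  have h2 : 9/4 ≤ (2 - v)^2 := by nlinarith
  have h3 : 1 ≤ (1 + v)^2 := by nlinarith
  refine ⟨?_, ?_, ?_⟩ <;> nlinarith

set_option maxHeartbeats 1600000 in
/-- `t = 1/6`. -/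
lemma case32_sixth {a A lam d g V : ℝ} (ha : 0 < a) (hA : 0 < A)
    (hlam : 0 ≤ lam ∧ lam ≤ 1/2) (hd : 0 < d)
    (hd5 : d^5 = 2 * a * A * (1/6)) (m2 : d ≤ 4 * a)
    (K1 : 2 * A < d + 2 * a) (K2 : d + 2 * a ≤ 3 * A) (hE : d + 2 * a + 3 / 4 * A ≤ 2/3)
    (h0 : ∀ j : ℤ, Av g (d + 2 * a) (1/24 + A * (V + j)^2))
    (h1 : ∀ j : ℤ, Av g (d + 2 * a) (3/8 + A * (V + lam + j)^2))
    (h2 : ∀ j : ℤ, Av g (d + 2 * a) (3/8 + A * (V - 2 * lam + j)^2)) : False := by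
  have hA' : d / 2 ≤ A := by linarith
  have hdl : 0.3466 < d := by
    by_contra hc
    push Not at hc
    have h1 : d^2 / 8 ≤ a * A := by nlinarith
    have h3 : d^3 ≤ 0.3466^3 := by gcongr
    norm_num at h3
    have : d^5 = d^2 * d^3 := by ring
    have h2 : 0 < d^2 := by positivity
    nlinarith
  have hD : 0.5199 < d + 2 * a := by linarith
  generalize d + 2 * a = D at *
  obtain ⟨v0, a0, b0, n0, e0⟩ := exists_dist V
  obtain ⟨v1, a1, b1, n1, e1⟩ := exists_dist (V + lam)
  obtain ⟨v2, a2, b2, n2, e2⟩ := exists_dist (V - 2 * lam)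
  obtain ⟨k, k1, k2⟩ := window g (1/24 + A * v0^2)
  have G0 := planeG hA K1 a0 b0 (av_dist e0 h0) k
  have G1 := planeG hA K1 a1 b1 (av_dist e1 h1) k
  have sqb := fun v (x1 : (0:ℝ) ≤ v) (x2 : v ≤ 1/2) => sq_bounds hA x1 x2
  have q0 := (sqb v0 a0 b0).1
  have G0' : 1/24 + A + D ≤ g + k := by
    rcases G0 with G | G
    · linarith
    · linarith [(sqb v0 a0 b0).2.2]
  have hX : ∀ v : ℝ, 0 ≤ v → v ≤ 1/2 → (∀ j : ℤ, Av g D (3/8 + A * (v + j)^2)) →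
      6 * A * v ≤ 3 * A - D := fun v x1 x2 h => by
    by_contra hc
    push Not at hc
    obtain ⟨s1, s2, -⟩ := sqb v x1 x2
    rcases planeX hA K1 x1 x2 (by linarith) h k with G | G <;> linarith
  have X1 := hX v1 a1 b1 (av_dist e1 h1)
  have X2 := hX v2 a2 b2 (av_dist e2 h2)
  have G1' : A + D - 2/3 ≤ A * v0^2 := by
    obtain ⟨s1, -, s3⟩ := sqb v1 a1 b1
    rcases G1 with G | G <;> linarith
  -- location of `v0`
  have hζ : ∃ ζ : ℝ, 6 * A * ζ = 3 * A - D := ⟨(3 * A - D) / (6 * A), by field_simp⟩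
  obtain ⟨ζ, hζ⟩ := hζ
  have hA6 : 0 < 6 * A := by positivity
  have v1ζ : v1 ≤ ζ := le_of_mul_le_mul_left (by linarith) hA6
  have v2ζ : v2 ≤ ζ := le_of_mul_le_mul_left (by linarith) hA6
  have ζu : ζ < 0.1 := by
    refine lt_of_mul_lt_mul_left (a := 6 * A) ?_ hA6.le
    linarith
  have d1 : -ζ ≤ V + lam + n1 ∧ V + lam + n1 ≤ ζ := by
    rcases e1 with e | e <;> constructor <;> linarith
  have d2 : -ζ ≤ V - 2 * lam + n2 ∧ V - 2 * lam + n2 ≤ ζ := by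
    rcases e2 with e | e <;> constructor <;> linarith
  have hv0 : v0 ≤ 1/3 + ζ := by
    have hm := dist_min b0 e0 n1
    refine hm.trans ?_
    have c1 : ((n2 - n1 : ℤ) : ℝ) < 2 := by push_cast; linarith
    have c2 : (-1 : ℝ) < ((n2 - n1 : ℤ) : ℝ) := by push_cast; linarith
    have c1' : n2 - n1 < 2 := by exact_mod_cast c1
    have c2' : -1 < n2 - n1 := by exact_mod_cast c2
    have : n2 = n1 ∨ n2 = n1 + 1 := by omega
    rw [abs_le]
    rcases this with h | h
    · rw [h] at d2
      constructor <;> linarith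
    · rw [h] at d2
      push_cast at d2
      constructor <;> linarith
  have f1 : 6 * A * v0 ≤ 5 * A - D := by
    have := mul_le_mul_of_nonneg_left hv0 hA6.le
    linarith
  have f2 : (6 * A * v0)^2 ≤ (5 * A - D)^2 := by
    have : 0 ≤ 6 * A * v0 := by positivity
    gcongr
  have f3 : 36 * A * (A + D - 2/3) ≤ (6 * A * v0)^2 := by
    have := mul_le_mul_of_nonneg_left G1' (by positivity : 0 ≤ 36 * A)
    linarith
  have f4 : D * D ≤ 3 * A * D := mul_le_mul_of_nonneg_right K2 (by linarith)
  have f5 : 0 < A * (11 * A + 43 * D - 24) := mul_pos hA (by linarith)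
  linarith

set_option maxHeartbeats 1600000 in
/-- `t = 1/2`. -/
lemma case32_half {a A d g γ Y s h₄ Z : ℝ} (ha : 0 < a) (hA : 0 < A) (hd : 0 < d)
    (hd5 : d^5 = 2 * a * A * (1/2)) (m2 : d ≤ 4 * a)
    (K1 : 2 * A < d + 2 * a) (K2 : d + 2 * a ≤ 3 * A)
    (H : ∀ i j : ℤ, Av γ d (s + A * (Z + j)^2 + a * (Y + h₄ * j + i)^2))
    (h0 : ∀ j : ℤ, Av g (d + 2 * a) (s + A * (Z + j)^2)) : False := by
  have hle := (h0 0).le_one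
  have hA' : d / 2 ≤ A := by linarith
  have hdl : 1/2 ≤ d := by
    by_contra hc
    push Not at hc
    have h1 : d^2 / 8 ≤ a * A := by nlinarith
    have h3 : d^3 < (1/2)^3 := by gcongr
    norm_num at h3
    have : d^5 = d^2 * d^3 := by ring
    have h2 : 0 < d^2 := by positivity
    nlinarith
  by_cases hD : 3/4 < d + 2 * a
  · by_cases hA4 : A ≤ 1/4
    · have := (rigid_sq 1 0 h0 (by rw [abs_lt]; push_cast; constructor <;> linarith)).1
      push_cast at this
      linarith
    · have := (rigid_sq 1 1 h0 (by rw [abs_lt]; push_cast; constructor <;> linarith)).1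
      push_cast at this
      linarith
  · have ed : d = 1/2 := by linarith
    have ea : a = 1/8 := by linarith
    rw [ed, ea] at hd5
    have eA : A = 1/4 := by norm_num at hd5; linarith
    subst ed ea eA
    have key : ∀ j : ℤ, ∃ k : ℤ, s + 1/4 * (Z + j)^2 = γ + k := by
      intro j
      obtain ⟨y, y0, y1, n, hn⟩ := exists_dist (Y + h₄ * j)
      have hy := av_dist (γ := γ) (d := 1/2) hn (fun i => H i j)
      generalize s + 1/4 * (Z + j)^2 = s at hy ⊢
      obtain ⟨k, k1, k2⟩ := window γ (s + 1/8 * y^2)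
      have p0 := hy 0 k
      have p1 := hy (-1) k
      have p2 := hy 1 k
      have p3 := hy (-2) k
      have p4 := hy 2 k
      have p5 := hy (-4) (k + 1)
      push_cast at p0 p1 p2 p3 p4 p5
      ring_nf at p0 p1 p2 p3 p4 p5 k1 k2
      have P3 : s + 1/2 - y / 2 + y^2/8 + 1/2 ≤ γ + k := by
        rcases p0 with p0 | p0
        · linarith
        rcases p1 with p1 | p1
        · linarith
        rcases p2 with p2 | p2
        · linarith
        rcases p3 with p3 | p3
        · linarith
        linarith
      rcases eq_or_lt_of_le y1 with h | h
      · subst h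
        rcases p4 with p4 | p4
        · rcases p5 with p5 | p5
          · linarith
          · linarith
        · linarith
      · rcases p4 with p4 | p4
        · linarith
        · have : y = 0 := by linarith
          subst this
          refine ⟨k - 1, ?_⟩
          push_cast
          linarith
    obtain ⟨k0, e0⟩ := key 0
    obtain ⟨k1, e1⟩ := key 1
    obtain ⟨k2, e2⟩ := key 2
    push_cast at e0 e1 e2
    have : ((2 * (k2 - 2 * k1 + k0) : ℤ) : ℝ) = ((1 : ℤ) : ℝ) := by push_cast; linarith
    have := Int.cast_injective this
    omega

lemma half_rep {Y y L : ℝ} {n : ℤ} (y1 : y ≤ 1/2) (hn : Y + n = y ∨ Y + n = -y) (hL : L ≤ y) :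
    ∃ p : ℤ, L ≤ Y + p ∧ Y + p ≤ 1 - L := by
  rcases hn with h | h
  · exact ⟨n, by linarith, by linarith⟩
  · refine ⟨n + 1, ?_, ?_⟩ <;> push_cast <;> linarith

/-- First kind of line. -/
lemma quarter_lineA {a γ d s Y : ℝ} (k : ℤ) (ha1 : 0.0992 < a) (ha2 : a < 0.1022)
    (hd : 0.3968 < d) (b1 : 1.0684 ≤ γ + k) (b2 : γ + k ≤ 1.0773) (s2 : s ≤ 0.0562)
    (s0 : 0 ≤ s)
    (h : ∀ i : ℤ, Av γ d (s + a * (Y + i)^2)) : ∃ p : ℤ, 0.34 ≤ Y + p ∧ Y + p ≤ 1 - 0.34 := by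
  obtain ⟨y, y0, y1, n, hn⟩ := exists_dist Y
  refine half_rep y1 hn ?_
  by_contra hc
  push Not at hc
  have p := av_dist hn h 0 (k - 1)
  push_cast at p
  rw [add_zero] at p
  have hy : y^2 ≤ 0.1156 := by nlinarith
  have hy' : a * y^2 ≤ 0.1022 * 0.1156 := by
    have : 0 ≤ y^2 := by positivity
    gcongr
  have : 0 ≤ a * y^2 := by positivity
  norm_num at hy'
  rcases p with p | p <;> linarith

/-- Second kind of line. -/
lemma quarter_lineB {a γ d s Y : ℝ} (k : ℤ) (ha1 : 0.0992 < a) (ha2 : a < 0.1022)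
    (hd : 0.3968 < d) (b1 : 1.0684 ≤ γ + k) (b2 : γ + k ≤ 1.0773) (s2 : s ≤ 0.466)
    (s0 : 0.44 ≤ s)
    (h : ∀ i : ℤ, Av γ d (s + a * (Y + i)^2)) : ∃ p : ℤ, 0.4 ≤ Y + p ∧ Y + p ≤ 1 - 0.4 := by
  obtain ⟨y, y0, y1, n, hn⟩ := exists_dist Y
  refine half_rep y1 hn ?_
  by_contra hc
  push Not at hc
  have p := av_dist hn h 2 k
  push_cast at p
  have hy : (y + 2)^2 ≤ 5.76 := by nlinarith
  have hy2 : 4 ≤ (y + 2)^2 := by nlinarith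
  generalize (y + 2)^2 = q at *
  have : a * q ≤ 0.1022 * 5.76 := by gcongr
  have : 0.0992 * 4 ≤ a * q := by gcongr
  rcases p with p | p <;> linarith

set_option maxHeartbeats 1600000 in
/-- `t = 1/4`. -/
lemma case32_quarter {a A lam d γ V U h₄ h₅ : ℝ} (ha : 0 < a) (hA : 0 < A) (hd : 0 < d)
    (hh₄ : -1/2 < h₄ ∧ h₄ ≤ 1/2)
    (hd5 : d^5 = 2 * a * A * (1/4)) (m2 : d ≤ 4 * a)
    (K1 : 2 * A < d + 2 * a) (K2 : d + 2 * a ≤ 3 * A) (hE : d + 2 * a + 3 / 4 * A ≤ 3/4)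
    (H0 : ∀ i j : ℤ, Av γ d (A * (V + j)^2 + a * (U + h₄ * j + i)^2))
    (H1 : ∀ i j : ℤ, Av γ d (1/4 + A * (V + lam + j)^2 + a * (U + h₅ + h₄ * j + i)^2))
    (h0 : ∀ j : ℤ, Av (γ - a / 4) (d + 2 * a) (0 + A * (V + j)^2))
    (h1 : ∀ j : ℤ, Av (γ - a / 4) (d + 2 * a) (1/4 + A * (V + lam + j)^2))
    (h2 : ∀ j : ℤ, Av (γ - a / 4) (d + 2 * a) (1/4 + A * (V - lam + j)^2)) : False := by
  have hA' : d / 2 ≤ A := by linarith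
  have hdl : 0.3968 < d := by
    by_contra hc
    push Not at hc
    have h1 : d^2 / 8 ≤ a * A := by nlinarith
    have h3 : d^3 ≤ 0.3968^3 := by gcongr
    norm_num at h3
    have : d^5 = d^2 * d^3 := by ring
    have h2 : 0 < d^2 := by positivity
    nlinarith
  have a1 : 0.0992 < a := by linarith
  have a2 : a < 0.1022 := by linarith
  obtain ⟨D, hD⟩ : ∃ D, D = d + 2 * a := ⟨_, rfl⟩
  rw [← hD] at K1 K2 hE h0 h1 h2
  have D1 : 0.5952 < D := by linarith
  have A1 : 0.1984 < A := by linarith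
  have A2 : A < 0.2064 := by linarith
  obtain ⟨v0, z0, y0, n0, e0⟩ := exists_dist V
  obtain ⟨v1, z1, y1, n1, e1⟩ := exists_dist (V + lam)
  obtain ⟨v2, z2, y2, n2, e2⟩ := exists_dist (V - lam)
  obtain ⟨k, k1, k2⟩ := window (γ - a / 4) (0 + A * v0^2)
  have G0 := planeG hA K1 z0 y0 (av_dist e0 h0) k
  have G1 := planeG hA K1 z1 y1 (av_dist e1 h1) k
  have sqb := fun v (x1 : (0:ℝ) ≤ v) (x2 : v ≤ 1/2) => sq_bounds hA x1 x2
  have q0 := (sqb v0 z0 y0).1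
  have G0' : A + D ≤ γ - a / 4 + k := by
    rcases G0 with G | G
    · linarith
    · linarith [(sqb v0 z0 y0).2.2]
  have hX : ∀ v : ℝ, 0 ≤ v → v ≤ 1/2 → (∀ j : ℤ, Av (γ - a / 4) D (1/4 + A * (v + j)^2)) →
      v ≤ 0.0205 := fun v x1 x2 h => by
    by_contra hc
    push Not at hc
    obtain ⟨s1, s2, -⟩ := sqb v x1 x2
    have : A * 0.0205 ≤ A * v := by gcongr
    rcases planeX hA K1 x1 x2 (by linarith) h k with G | G <;> linarith
  have X1 := hX v1 z1 y1 (av_dist e1 h1)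
  have X2 := hX v2 z2 y2 (av_dist e2 h2)
  have G1' : 1/4 + A + D ≤ γ - a / 4 + k := by
    obtain ⟨s1, -, s3⟩ := sqb v1 z1 y1
    rcases G1 with G | G <;> linarith
  have v0l : 0.45 ≤ v0 := by
    by_contra hc
    push Not at hc
    have : v0^2 ≤ 0.2025 := by nlinarith
    have : A * v0^2 ≤ A * 0.2025 := by gcongr
    linarith
  have d1 : -0.0205 ≤ V + lam + n1 ∧ V + lam + n1 ≤ 0.0205 := by
    rcases e1 with e | e <;> constructor <;> linarith
  have d2 : -0.0205 ≤ V - lam + n2 ∧ V - lam + n2 ≤ 0.0205 := by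
    rcases e2 with e | e <;> constructor <;> linarith
  have v0l' : 0.479 ≤ v0 := by
    rcases e0 with e | e
    · have c1 : ((2 * n0 - n1 - n2 : ℤ) : ℝ) < 2 := by push_cast; linarith
      have c2 : (0 : ℝ) < ((2 * n0 - n1 - n2 : ℤ) : ℝ) := by push_cast; linarith
      have c1' : 2 * n0 - n1 - n2 < 2 := by exact_mod_cast c1
      have c2' : 0 < 2 * n0 - n1 - n2 := by exact_mod_cast c2
      have c3 : 2 * n0 - n1 - n2 = 1 := by omega
      have c4 : (2 * n0 - n1 - n2 : ℝ) = 1 := by exact_mod_cast c3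
      linarith
    · have c1 : ((n1 + n2 - 2 * n0 : ℤ) : ℝ) < 2 := by push_cast; linarith
      have c2 : (0 : ℝ) < ((n1 + n2 - 2 * n0 : ℤ) : ℝ) := by push_cast; linarith
      have c1' : n1 + n2 - 2 * n0 < 2 := by exact_mod_cast c1
      have c2' : 0 < n1 + n2 - 2 * n0 := by exact_mod_cast c2
      have c3 : n1 + n2 - 2 * n0 = 1 := by omega
      have c4 : (n1 + n2 - 2 * n0 : ℝ) = 1 := by exact_mod_cast c3
      linarith
  have B1 : 1.0684 ≤ γ + k := by linarith
  have B2 : γ + k ≤ 1.0773 := by linarith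
  -- lines in the central plane
  have lA : ∀ j : ℤ, |V + j| ≤ 0.521 →
      ∃ p : ℤ, 0.34 ≤ U + h₄ * j + p ∧ U + h₄ * j + p ≤ 1 - 0.34 := fun j hj => by
    refine quarter_lineA (s := A * (V + j)^2) k a1 a2 hdl B1 B2 ?_ (by positivity) (fun i => H0 i j)
    have : (V + j)^2 ≤ 0.521^2 := by
      rw [← sq_abs]; gcongr
    have : A * (V + j)^2 ≤ 0.2064 * 0.521^2 := by gcongr
    norm_num at this ⊢
    linarith
  have hh32 : -0.32 ≤ h₄ ∧ h₄ ≤ 0.32 := by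
    have : ∃ j : ℤ, |V + j| ≤ 0.521 ∧ |V + (j + 1 : ℤ)| ≤ 0.521 := by
      rcases e0 with e | e
      · refine ⟨n0 - 1, ?_, ?_⟩ <;> rw [abs_le] <;> push_cast <;> constructor <;> linarith
      · refine ⟨n0, ?_, ?_⟩ <;> rw [abs_le] <;> push_cast <;> constructor <;> linarith
    obtain ⟨j, j1, j2⟩ := this
    obtain ⟨p, p1, p2⟩ := lA j j1
    obtain ⟨q, q1, q2⟩ := lA (j + 1) j2
    push_cast at q1 q2
    have c1 : ((q - p : ℤ) : ℝ) < 1 := by push_cast; linarith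
    have c2 : (-1 : ℝ) < ((q - p : ℤ) : ℝ) := by push_cast; linarith
    have c1' : q - p < 1 := by exact_mod_cast c1
    have c2' : -1 < q - p := by exact_mod_cast c2
    have c3 : q = p := by omega
    subst c3
    constructor <;> linarith
  have lB : ∀ j : ℤ, 0.9795 ≤ |V + lam + j| → |V + lam + j| ≤ 1.0205 →
      ∃ p : ℤ, 0.4 ≤ U + h₅ + h₄ * j + p ∧ U + h₅ + h₄ * j + p ≤ 1 - 0.4 := fun j hj hj2 => by
    have e1 : (V + lam + j)^2 ≤ 1.0205^2 := by
      rw [← sq_abs]; gcongr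
    have e2 : 0.9795^2 ≤ (V + lam + j)^2 := by
      rw [← sq_abs (V + lam + j)]; gcongr
    have f1 : A * (V + lam + j)^2 ≤ 0.2064 * 1.0205^2 := by gcongr
    have f2 : 0.1984 * 0.9795^2 ≤ A * (V + lam + j)^2 := by gcongr
    refine quarter_lineB (s := 1/4 + A * (V + lam + j)^2) k a1 a2 hdl B1 B2 ?_ ?_ (fun i => H1 i j)
    · norm_num at f1 ⊢; linarith
    · norm_num at f2 ⊢; linarith
  obtain ⟨p, p1, p2⟩ := lB (n1 + 1) (by
      push_cast; refine le_trans ?_ (le_abs_self _); linarith) (by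
      push_cast; rw [abs_le]; constructor <;> linarith)
  obtain ⟨q, q1, q2⟩ := lB (n1 - 1) (by
      push_cast; refine le_trans ?_ (neg_le_abs _); linarith) (by
      push_cast; rw [abs_le]; constructor <;> linarith)
  push_cast at p1 p2 q1 q2
  have c1 : ((q - p : ℤ) : ℝ) < 1 := by push_cast; linarith
  have c2 : (-1 : ℝ) < ((q - p : ℤ) : ℝ) := by push_cast; linarith
  have c1' : q - p < 1 := by exact_mod_cast c1
  have c2' : -1 < q - p := by exact_mod_cast c2
  have c3 : q = p := by omega
  subst c3
  have r := H1 (q + 2) n1 k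
  push_cast at r
  have x1 : 2.3 ≤ U + h₅ + h₄ * n1 + (q + 2) := by linarith
  have x2 : U + h₅ + h₄ * n1 + (q + 2) ≤ 2.7 := by linarith
  generalize U + h₅ + h₄ * n1 + (q + 2) = X at *
  have w1 : 2.3^2 ≤ X^2 := by gcongr
  have w2 : X^2 ≤ 2.7^2 := by gcongr
  have w3 : a * X^2 ≤ 0.1022 * 2.7^2 := by gcongr
  have w4 : 0.0992 * 2.3^2 ≤ a * X^2 := by gcongr
  have w5 : (V + lam + n1)^2 ≤ 0.0205^2 := sq_le_sq' d1.1 d1.2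
  have w6 : A * (V + lam + n1)^2 ≤ 0.2064 * 0.0205^2 := by gcongr
  have w7 : 0 ≤ A * (V + lam + n1)^2 := by positivity
  norm_num at w3 w4 w6
  rcases r with r | r <;> linarith

set_option maxHeartbeats 1600000 in
/-- Case `(3,2)`. -/
lemma case32 {a A t lam h₄ h₅ d γ Y Z W : ℝ} (ha : 0 < a) (hA : 0 < A)
    (hlam : 0 ≤ lam ∧ lam ≤ 1/2) (hAC : A ≤ t + A * lam^2)
    (hh₄ : -1/2 < h₄ ∧ h₄ ≤ 1/2) (hd : 0 < d)
    (hd5 : d^5 = 2 * a * A * t) (m1 : 3 * a < d) (m2 : d ≤ 4 * a)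
    (K1 : 2 * A < d + 2 * a) (K2 : d + 2 * a ≤ 3 * A)
    (H : ∀ i j l : ℤ, Av γ d (t * (W + l)^2 + A * (Z + lam * l + j)^2
      + a * (Y + h₄ * j + h₅ * l + i)^2)) : False := by
  have HL : ∀ j l : ℤ, Av (γ - a / 4) (d + 2 * a)
      (t * (W + l)^2 + A * (Z + lam * l + j)^2) := fun j l => by
    have := chain ha 3 (by push_cast; linarith) (fun i => H i j l)
    convert this using 1
    push_cast; ring
  have htA : 3 / 4 * A ≤ t := by
    have : lam^2 ≤ 1/4 := by nlinarith
    nlinarith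
  have ht : 0 < t := by linarith
  obtain ⟨E, hE⟩ : ∃ E, E = d + 2 * a + 3 / 4 * A := ⟨_, rfl⟩
  have HP : ∀ l : ℤ, Av (γ - a / 4 - A / 4) E (0 + t * (W + l)^2) := fun l => by
    have := chain hA 2 (by push_cast; linarith) (fun j => HL j l)
    rw [zero_add]
    convert this using 1
    rw [hE]; push_cast; ring
  have hle := (HP 0).le_one
  have hA' : d / 2 ≤ A := by linarith
  have hEd : 1.875 * d ≤ E := by linarith
  have ht4 : t ≤ 4 * d^3 := by
    have h1 : d^2 / 8 ≤ a * A := by nlinarith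
    have h2 : d^2 / 8 * t ≤ a * A * t := by gcongr
    have h3 : d^2 * t ≤ d^2 * (4 * d^3) := by
      have : d^2 * (4 * d^3) = 4 * d^5 := by ring
      linarith
    exact le_of_mul_le_mul_left h3 (by positivity)
  have dl : ∀ c x : ℝ, 0 ≤ x → 4 * x^2 < c → c * d ≤ t → x < d := fun c x x0 hc h => by
    by_contra hx
    push Not at hx
    have h1 : d^2 ≤ x^2 := by gcongr
    have h2 : d * (4 * d^2) < d * c := by
      apply mul_lt_mul_of_pos_left _ hd
      linarith
    linarith [show d * (4 * d^2) = 4 * d^3 by ring]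
  have d1 : 0.306 < d := dl (3/8) 0.306 (by norm_num) (by norm_num) (by linarith)
  have tE : t < E := by
    have h1 : d ≤ 0.534 := by linarith
    have h2 : d^2 ≤ 0.534^2 := by gcongr
    have h3 : d * d^2 ≤ d * 0.534^2 := by gcongr
    have h4 : d^3 = d * d^2 := by ring
    norm_num at h3
    linarith
  by_cases c1 : 1 - E < t
  · have := (rigid_sq 1 1 HP (by rw [abs_lt]; push_cast; constructor <;> linarith)).1
    push_cast at this
    have t2 : t = 1/2 := by linarith
    subst t2
    refine case32_half (g := γ - a / 4) (γ := γ) (s := 1/2 * W^2) (Z := Z) (Y := Y) (h₄ := h₄) ha hA hd hd5 m2 K1 K2 (fun i j => ?_)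
      (fun j => ?_)
    · have := H i j 0
      simpa using this
    · have := HL j 0
      simpa using this
  push Not at c1
  by_cases c2 : 4 * t < E
  · obtain ⟨e1, e2⟩ := rigid_sq 2 1 HP (by rw [abs_lt]; push_cast; constructor <;> linarith)
    push_cast at e1
    have t2 : t = 1/8 := by linarith
    subst t2
    obtain ⟨N, hN⟩ := e2 0
    obtain ⟨M, hM⟩ := e2 1
    push_cast at hN hM
    have : ((2 * (M - N) : ℤ) : ℝ) = ((1 : ℤ) : ℝ) := by push_cast; linarith
    have := Int.cast_injective this
    omega
  push Not at c2
  by_cases c3 : 3 * t < E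
  · have c4 := (chain (y := W) (s := 0) ht 3 (by push_cast; linarith) HP).le_one
    push_cast at c4
    have d2 : 0.3423 < d := dl 0.46875 0.3423 (by norm_num) (by norm_num) (by linarith)
    obtain ⟨e1, e2⟩ := rigid_sq 3 3 HP (by rw [abs_lt]; push_cast; constructor <;> linarith)
    push_cast at e1
    have t2 : t = 1/6 := by linarith
    subst t2
    obtain ⟨N, hN⟩ := e2 0
    push_cast at hN
    have hW : W = N - 3/2 := by linarith
    subst hW
    refine case32_sixth (g := γ - a / 4) (V := Z + lam * (2 - N)) ha hA hlam hd hd5 m2 K1 K2 (by linarith)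
      (fun j => ?_) (fun j => ?_) (fun j => ?_)
    · have := HL j (2 - N)
      convert this using 1
      push_cast; ring
    · have := HL j (3 - N)
      convert this using 1
      push_cast; ring
    · have := HL j (-N)
      convert this using 1
      push_cast; ring
  · push Not at c3
    have d2 : 0.395 < d := dl 0.625 0.395 (by norm_num) (by norm_num) (by linarith)
    obtain ⟨e1, e2⟩ := rigid_sq 2 2 HP (by rw [abs_lt]; push_cast; constructor <;> linarith)
    push_cast at e1
    have t2 : t = 1/4 := by linarith
    subst t2
    obtain ⟨N, hN⟩ := e2 0
    push_cast at hN
    have hW : W = N - 1 := by linarith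
    subst hW
    refine case32_quarter (V := Z + lam * (1 - N)) (U := Y + h₅ * (1 - N)) (h₄ := h₄) (h₅ := h₅)
      (lam := lam) (γ := γ) ha hA hd hh₄ hd5 m2 K1 K2 (by linarith)
      (fun i j => ?_) (fun i j => ?_) (fun j => ?_) (fun j => ?_) (fun j => ?_)
    · have := H i j (1 - N)
      convert this using 1
      push_cast; ring
    · have := H i j (2 - N)
      convert this using 1
      push_cast; ring
    · have := HL j (1 - N)
      convert this using 1
      push_cast; ring
    · have := HL j (2 - N)
      convert this using 1
      push_cast; ring
    · have := HL j (-N)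
      convert this using 1
      push_cast; ring

lemma two_class {U : ℝ} (M : ℤ) (h : 2 * U = M) :
    (∀ n : ℤ, ∃ i : ℤ, U + i = n) ∨ (∀ n : ℤ, ∃ i : ℤ, U + i = n + 1/2) := by
  rcases Int.even_or_odd' M with ⟨p, hp | hp⟩
  · left
    intro n
    refine ⟨n - p, ?_⟩
    rw [hp] at h
    push_cast at h ⊢
    linarith
  · right
    intro n
    refine ⟨n - p, ?_⟩
    rw [hp] at h
    push_cast at h ⊢
    linarith

lemma two_class' {U : ℝ} (M : ℤ) (h : 2 * U = M) :
    ((∃ i : ℤ, U + i = 0) ∧ (∃ i : ℤ, U + i = 1) ∧ (∃ i : ℤ, U + i = 2)) ∨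
    ((∃ i : ℤ, U + i = 1/2) ∧ (∃ i : ℤ, U + i = 3/2) ∧ (∃ i : ℤ, U + i = 9/2)) := by
  rcases two_class M h with h | h
  · left
    refine ⟨by simpa using h 0, by simpa using h 1, by simpa using h 2⟩
  · right
    refine ⟨by simpa using h 0, ?_, ?_⟩
    · obtain ⟨i, hi⟩ := h 1
      exact ⟨i, by rw [hi]; norm_num⟩
    · obtain ⟨i, hi⟩ := h 4
      exact ⟨i, by rw [hi]; norm_num⟩

lemma exc_window {g d : ℝ} (hd : 0.608 < d) (h1 : Av g d (7/24)) (h2 : Av g d (15/24)) :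
    ∃ k : ℤ, 15/24 + d ≤ g + k ∧ g + k ≤ 31/24 := by
  obtain ⟨k, k1, k2⟩ := window g (7/24)
  refine ⟨k, ?_, by linarith⟩
  rcases h1 k with h | h
  · linarith
  rcases h2 k with h | h <;> linarith

set_option maxHeartbeats 1600000 in
/-- The exceptional configuration is killed by `x₂ = 2`. -/
lemma exc_final {g g₂ d U V W : ℝ} (hd : 0.608 < d) (h1 : Av g d (7/24)) (h2 : Av g d (15/24))
    (h3 : Av g₂ d (7/24)) (h4 : Av g₂ d (15/24))
    (M₃ M₄ M₅ : ℤ) (hU : 2 * U = M₃) (hV : 2 * V = M₄) (hW : 2 * W = M₅)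
    (h : ∀ n i j l : ℤ, 3 * g + g₂ + 2 * n ≤ 1/2 * (W + l)^2 + 1/2 * (V + j)^2 + 1/6 * (U + i)^2 ∨
      1/2 * (W + l)^2 + 1/2 * (V + j)^2 + 1/6 * (U + i)^2 + d ≤ 3 * g + g₂ + 2 * n) : False := by
  obtain ⟨k, k1, k2⟩ := exc_window hd h1 h2
  obtain ⟨k', k3, k4⟩ := exc_window hd h3 h4
  have hit : ∀ u v w : ℝ, (∃ i : ℤ, U + i = u) → (∃ i : ℤ, V + i = v) → (∃ i : ℤ, W + i = w) →
      ∀ n : ℤ, 3 * g + g₂ + 2 * n ≤ 1/2 * w^2 + 1/2 * v^2 + 1/6 * u^2 ∨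
      1/2 * w^2 + 1/2 * v^2 + 1/6 * u^2 + d ≤ 3 * g + g₂ + 2 * n := by
    rintro u v w ⟨i, rfl⟩ ⟨j, rfl⟩ ⟨l, rfl⟩ n
    exact h n i j l
  -- a hit with value in the right window and parity
  have kill : ∀ u v w : ℝ, (∃ i : ℤ, U + i = u) → (∃ i : ℤ, V + i = v) → (∃ i : ℤ, W + i = w) →
      ∀ q n : ℤ, 3 * k + k' = q - 2 * n → 0.56 + (5 - q - 1 : ℝ) ≤ 1/2 * w^2 + 1/2 * v^2 + 1/6 * u^2 →
      1/2 * w^2 + 1/2 * v^2 + 1/6 * u^2 ≤ 0.93 + (5 - q - 1 : ℝ) → False := by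
    intro u v w hu hv hw q n hq l1 l2
    have hq' : 3 * (k : ℝ) + k' = q - 2 * n := by exact_mod_cast hq
    rcases hit u v w hu hv hw (-n) with hh | hh <;> push_cast at hh <;> linarith
  obtain ⟨m, hm⟩ := Int.even_or_odd' (3 * k + k')
  have both : ∀ u v w u' v' w' : ℝ, (∃ i : ℤ, U + i = u) → (∃ i : ℤ, V + i = v) →
      (∃ i : ℤ, W + i = w) → (∃ i : ℤ, U + i = u') → (∃ i : ℤ, V + i = v') →
      (∃ i : ℤ, W + i = w') → 0.56 ≤ 1/2 * w^2 + 1/2 * v^2 + 1/6 * u^2 →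
      1/2 * w^2 + 1/2 * v^2 + 1/6 * u^2 ≤ 0.93 → 1.56 ≤ 1/2 * w'^2 + 1/2 * v'^2 + 1/6 * u'^2 →
      1/2 * w'^2 + 1/2 * v'^2 + 1/6 * u'^2 ≤ 1.93 → False := by
    intro u v w u' v' w' hu hv hw hu' hv' hw' l1 l2 l3 l4
    rcases hm with hm | hm
    · exact kill u v w hu hv hw 4 (2 - m) (by omega) (by push_cast; linarith) (by push_cast; linarith)
    · exact kill u' v' w' hu' hv' hw' 3 (1 - m) (by omega) (by push_cast; linarith)
        (by push_cast; linarith)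
  rcases two_class' M₃ hU with ⟨u0, u1, u2⟩ | ⟨u0, u1, u2⟩ <;>
  rcases two_class' M₄ hV with ⟨v0, v1, v2⟩ | ⟨v0, v1, v2⟩ <;>
  rcases two_class' M₅ hW with ⟨w0, w1, w2⟩ | ⟨w0, w1, w2⟩
  · exact both _ _ _ _ _ _ u2 v0 w0 u2 v1 w1 (by norm_num) (by norm_num) (by norm_num) (by norm_num)
  · exact both _ _ _ _ _ _ u2 v0 w0 u2 v0 w1 (by norm_num) (by norm_num) (by norm_num) (by norm_num)
  · exact both _ _ _ _ _ _ u2 v0 w0 u2 v1 w0 (by norm_num) (by norm_num) (by norm_num) (by norm_num)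
  · exact both _ _ _ _ _ _ u2 v0 w0 u2 v1 w0 (by norm_num) (by norm_num) (by norm_num) (by norm_num)
  · rcases hm with hm | hm
    · exact kill _ _ _ u1 v1 w0 4 (2 - m) (by omega) (by norm_num) (by norm_num)
    · exact kill _ _ _ u2 v1 w0 1 (-m) (by omega) (by norm_num) (by norm_num)
  · exact both _ _ _ _ _ _ u0 v1 w0 u0 v1 w1 (by norm_num) (by norm_num) (by norm_num) (by norm_num)
  · exact both _ _ _ _ _ _ u0 v0 w1 u0 v1 w1 (by norm_num) (by norm_num) (by norm_num) (by norm_num)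
  · exact both _ _ _ _ _ _ u1 v0 w0 u1 v1 w0 (by norm_num) (by norm_num) (by norm_num) (by norm_num)

set_option maxHeartbeats 2000000 in
theorem thm4 (a A t lam h₄ h₅ a₂ a₃ a₄ a₅ d : ℝ) (m K : ℤ)
    (ha : 0 < a) (hA : 0 < A) (ht : 0 < t)
    (ha₂ : -1/2 < a₂ ∧ a₂ ≤ 1/2) (ha₃ : -1/2 < a₃ ∧ a₃ ≤ 1/2)
    (ha₄ : -1/2 < a₄ ∧ a₄ ≤ 1/2) (ha₅ : -1/2 < a₅ ∧ a₅ ≤ 1/2)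
    (hh₄ : -1/2 < h₄ ∧ h₄ ≤ 1/2) (hh₅ : -1/2 < h₅ ∧ h₅ ≤ 1/2)
    (hlam : 0 ≤ lam ∧ lam ≤ 1/2) (hAC : A ≤ t + A * lam^2)
    (hmin_le : ∀ u v w : ℤ, ¬(u = 0 ∧ v = 0 ∧ w = 0) →
      a ≤ redPhi a A t lam h₄ h₅ (u : ℝ) (v : ℝ) (w : ℝ))
    (hmin_eq : ∃ u v w : ℤ, ¬(u = 0 ∧ v = 0 ∧ w = 0) ∧
      redPhi a A t lam h₄ h₅ (u : ℝ) (v : ℝ) (w : ℝ) = a)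
    (hd : d = (2 * a * A * t) ^ ((1 : ℝ)/5))
    (hm : (m : ℝ) < d / a ∧ d / a ≤ (m : ℝ) + 1)
    (hK : (K : ℝ) < (d + ((m : ℝ)^2 - 1) * a / 4) / A ∧
          (d + ((m : ℝ)^2 - 1) * a / 4) / A ≤ (K : ℝ) + 1)
    (ha' : a < 1/2) (hd1 : d ≤ 1) (had : a + d ≤ 1)
    (hmK : (m = 4 ∧ K = 1) ∨ (m = 3 ∧ K = 2) ∨ (m = 3 ∧ K = 1))
    (c₁ c₂ c₃ c₄ c₅ : ℝ) (hc₂ : ∃ n : ℤ, (n : ℝ) = c₂) :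
    ∃ x₁ x₂ x₃ x₄ x₅ : ℝ,
      (∃ k : ℤ, x₁ - c₁ = k) ∧ (∃ k : ℤ, x₂ - c₂ = k) ∧ (∃ k : ℤ, x₃ - c₃ = k) ∧
      (∃ k : ℤ, x₄ - c₄ = k) ∧ (∃ k : ℤ, x₅ - c₅ = k) ∧
      0 < redQ a A t lam h₄ h₅ a₂ a₃ a₄ a₅ x₁ x₂ x₃ x₄ x₅ ∧
      redQ a A t lam h₄ h₅ a₂ a₃ a₄ a₅ x₁ x₂ x₃ x₄ x₅ < d := by
  by_contra hno
  obtain ⟨n₂, hn₂⟩ := hc₂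
  have hpos : 0 < 2 * a * A * t := by positivity
  have hd0 : 0 < d := by rw [hd]; positivity
  have hd5 : d^5 = 2 * a * A * t := by
    rw [hd, ← Real.rpow_natCast, ← Real.rpow_mul hpos.le]
    norm_num
  have N : ∀ e n i j l : ℤ,
      redQ a A t lam h₄ h₅ a₂ a₃ a₄ a₅ (c₁ + n) e (c₃ + i) (c₄ + j) (c₅ + l) ≤ 0 ∨
      d ≤ redQ a A t lam h₄ h₅ a₂ a₃ a₄ a₅ (c₁ + n) e (c₃ + i) (c₄ + j) (c₅ + l) := by
    intro e n i j l
    by_contra hc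
    push Not at hc
    refine hno ⟨c₁ + n, e, c₃ + i, c₄ + j, c₅ + l, ⟨n, by ring⟩, ⟨e - n₂, ?_⟩, ⟨i, by ring⟩,
      ⟨j, by ring⟩, ⟨l, by ring⟩, hc.1, hc.2⟩
    rw [← hn₂]; push_cast; ring
  obtain ⟨P₃, hP₃⟩ : ∃ P, a₃ = 2 * a * P := ⟨a₃ / (2 * a), by field_simp⟩
  obtain ⟨P₄, hP₄⟩ : ∃ P, a₄ = 2 * A * P + h₄ * a₃ := ⟨(a₄ - h₄ * a₃) / (2 * A), by field_simp; ring⟩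
  obtain ⟨P₅, hP₅⟩ : ∃ P, a₅ = 2 * t * P + h₅ * a₃ + lam * (a₄ - h₄ * a₃) :=
    ⟨(a₅ - h₅ * a₃ - lam * (a₄ - h₄ * a₃)) / (2 * t), by field_simp; ring⟩
  obtain ⟨γ, hγ⟩ : ∃ γ, γ = a₂ + a * P₃^2 + A * P₄^2 + t * P₅^2 := ⟨_, rfl⟩
  have R : ∀ e n i j l : ℤ,
      e * (c₁ + n) + e^2 * γ ≤ t * (c₅ - e * P₅ + l)^2 + A * (c₄ + lam * c₅ - e * P₄ + lam * l + j)^2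
        + a * (c₃ + h₄ * c₄ + h₅ * c₅ - e * P₃ + h₄ * j + h₅ * l + i)^2 ∨
      t * (c₅ - e * P₅ + l)^2 + A * (c₄ + lam * c₅ - e * P₄ + lam * l + j)^2
        + a * (c₃ + h₄ * c₄ + h₅ * c₅ - e * P₃ + h₄ * j + h₅ * l + i)^2 + d
        ≤ e * (c₁ + n) + e^2 * γ := by
    intro e n i j l
    have e1 : redQ a A t lam h₄ h₅ a₂ a₃ a₄ a₅ (c₁ + n) e (c₃ + i) (c₄ + j) (c₅ + l) =
      e * (c₁ + n) + e^2 * γ - (t * (c₅ - e * P₅ + l)^2 + A * (c₄ + lam * c₅ - e * P₄ + lam * l + j)^2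
        + a * (c₃ + h₄ * c₄ + h₅ * c₅ - e * P₃ + h₄ * j + h₅ * l + i)^2) := by
      rw [hγ]
      unfold redQ redPhi
      rw [hP₅, hP₄, hP₃]
      ring
    have := N e n i j l
    rw [e1] at this
    rcases this with h | h
    · left; linarith
    · right; linarith
  have H1 : ∀ i j l : ℤ, Av (γ + c₁) d (t * (c₅ - P₅ + l)^2 + A * (c₄ + lam * c₅ - P₄ + lam * l + j)^2
        + a * (c₃ + h₄ * c₄ + h₅ * c₅ - P₃ + h₄ * j + h₅ * l + i)^2) := by
    intro i j l k
    have := R 1 k i j l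
    simp only [Int.cast_one, one_mul, one_pow] at this
    rcases this with h | h
    · left; linarith
    · right; linarith
  have H2 : ∀ i j l : ℤ, Av (γ - c₁) d (t * (c₅ + P₅ + l)^2 + A * (c₄ + lam * c₅ + P₄ + lam * l + j)^2
        + a * (c₃ + h₄ * c₄ + h₅ * c₅ + P₃ + h₄ * j + h₅ * l + i)^2) := by
    intro i j l k
    have := R (-1) (-k) i j l
    push_cast at this
    simp only [neg_mul, one_mul, sub_neg_eq_add] at this
    rcases this with h | h
    · left; linarith
    · right; linarith
  have hm1 := (lt_div_iff₀ ha).1 hm.1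
  have hm2 := (div_le_iff₀ ha).1 hm.2
  have hK1 := (lt_div_iff₀ hA).1 hK.1
  have hK2 := (div_le_iff₀ hA).1 hK.2
  rcases hmK with ⟨rfl, rfl⟩ | ⟨rfl, rfl⟩ | ⟨rfl, rfl⟩ <;> push_cast at hm1 hm2 hK1 hK2
  · exact case41 ha hA hlam hAC hd0 hd5 (by linarith) (by linarith) (by linarith) (by linarith) H1
  · exact case32 ha hA hlam hAC hh₄ hd0 hd5 (by linarith) (by linarith) (by linarith) (by linarith) H1
  · obtain ⟨ea, eA, et, el, e4, e5, ⟨N3, hN3⟩, ⟨N4, hN4⟩, ⟨N5, hN5⟩⟩ :=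
      case31 ha hA hlam hAC hh₄ hh₅ hd0 hd5 (by linarith) (by linarith) (by linarith) (by linarith) H1
    obtain ⟨-, -, -, -, -, -, ⟨M3, hM3⟩, ⟨M4, hM4⟩, ⟨M5, hM5⟩⟩ :=
      case31 ha hA hlam hAC hh₄ hh₅ hd0 hd5 (by linarith) (by linarith) (by linarith) (by linarith) H2
    simp only [ea, eA, et, el, e4, e5] at hd5 H1 H2 R hN3 hN4 hN5 hM3 hM4 hM5
    have hdl : 0.608 < d := by
      by_contra hc
      push Not at hc
      have : d^5 ≤ 0.608^5 := by gcongr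
      norm_num at this hd5
      linarith
    refine exc_final (g := γ + c₁) (g₂ := γ - c₁) (d := d) (U := c₃ - 2 * P₃) (V := c₄ - 2 * P₄)
      (W := c₅ - 2 * P₅) hdl ?_ ?_ ?_ ?_ (3 * N3 - M3 - 1) (3 * N4 - M4 - 1) (3 * N5 - M5 - 1)
      (by push_cast; linarith) (by push_cast; linarith) (by push_cast; linarith) (fun n i j l => ?_)
    · convert H1 (1 - N3) (1 - N4) (1 - N5) using 1
      rw [show c₅ - P₅ = N5 - 1/2 by linarith, show c₄ + 0 * c₅ - P₄ = N4 - 1/2 by linarith,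
        show c₃ + 0 * c₄ + 0 * c₅ - P₃ = N3 - 1/2 by linarith]
      push_cast; ring
    · convert H1 (2 - N3) (1 - N4) (1 - N5) using 1
      rw [show c₅ - P₅ = N5 - 1/2 by linarith, show c₄ + 0 * c₅ - P₄ = N4 - 1/2 by linarith,
        show c₃ + 0 * c₄ + 0 * c₅ - P₃ = N3 - 1/2 by linarith]
      push_cast; ring
    · convert H2 (1 - M3) (1 - M4) (1 - M5) using 1
      rw [show c₅ + P₅ = M5 - 1/2 by linarith, show c₄ + 0 * c₅ + P₄ = M4 - 1/2 by linarith,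
        show c₃ + 0 * c₄ + 0 * c₅ + P₃ = M3 - 1/2 by linarith]
      push_cast; ring
    · convert H2 (2 - M3) (1 - M4) (1 - M5) using 1
      rw [show c₅ + P₅ = M5 - 1/2 by linarith, show c₄ + 0 * c₅ + P₄ = M4 - 1/2 by linarith,
        show c₃ + 0 * c₄ + 0 * c₅ + P₃ = M3 - 1/2 by linarith]
      push_cast; ring
    · have := R 2 n i j l
      push_cast at this
      rcases this with h | h
      · left; linarith
      · right; linarith
end

section
/- Theorem 4′: With the reduced form Q, parameters d = (8|D|)^{1/5}, m, K as in the context, suppose the reals c_1, …, c_5 satisfy c_2 ∈ ℤ, and suppose a < 1/2, d ≤ 1, a + d ≤ 1, and (m, K) ∈ {(2,4), (2,3)}. Then there exist x_1, …, x_5 with x_i − c_i ∈ ℤ for every i such that 0 < Q(x_1,…,x_5) < d. -/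
/-- One-dimensional solubility modulo one: some value of the parabola lands in `(0, D)` mod 1. -/
def Hit (D N q c : ℝ) : Prop :=
  ∃ j n : ℤ, 0 < c - N * ((j:ℝ) + q)^2 + n ∧ c - N * ((j:ℝ) + q)^2 + n < D

lemma shift_ex (x c : ℝ) : ∃ n : ℤ, x < c + n ∧ c + n ≤ x + 1 := by
  refine ⟨⌊x - c⌋ + 1, ?_, ?_⟩
  · have := Int.lt_floor_add_one (x - c)
    push_cast; linarith
  · have := Int.floor_le (x - c)
    push_cast; linarith

lemma pts (k : ℕ) (q : ℝ) : ∃ e : ℝ, 0 ≤ e ∧ e ≤ 1/2 ∧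
    ∀ s : ℤ, ∃ j : ℤ, ((j:ℝ) + q)^2 = ((k:ℝ)/2 + e - s)^2 := by
  have h0 := Int.fract_nonneg (q - (k:ℝ)/2)
  have h1 := Int.fract_lt_one (q - (k:ℝ)/2)
  have h2 := Int.self_sub_floor (q - (k:ℝ)/2)
  rcases le_or_gt (Int.fract (q - (k:ℝ)/2)) (1/2) with h | h
  · refine ⟨Int.fract (q - (k:ℝ)/2), h0, h, fun s => ⟨-⌊q - (k:ℝ)/2⌋ - s, ?_⟩⟩
    rw [← h2]; push_cast; ring
  · refine ⟨1 - Int.fract (q - (k:ℝ)/2), by linarith, by linarith,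
      fun s => ⟨-(k:ℤ) - 1 - ⌊q - (k:ℝ)/2⌋ + s, ?_⟩⟩
    rw [← h2]; push_cast; ring

lemma rangeR (N q D c : ℝ) (hN : 0 < N) (hD : 0 < D) (k : ℕ) (hk : k * N < D)
    (h1 : N/4 < c) (h2 : c < D + (k:ℝ)^2 * N/4) :
    ∃ j : ℤ, 0 < c - N * ((j:ℝ) + q)^2 ∧ c - N * ((j:ℝ) + q)^2 < D := by
  induction k with
  | zero =>
    obtain ⟨e, he0, he1, he⟩ := pts 0 q
    obtain ⟨j, hj⟩ := he 0
    refine ⟨j, ?_, ?_⟩ <;> rw [hj] <;> push_cast at * <;> nlinarith [mul_nonneg hN.le he0, mul_nonneg (mul_nonneg hN.le he0) he0, mul_nonneg (mul_nonneg hN.le he0) (sub_nonneg.2 he1), mul_nonneg hN.le (sub_nonneg.2 he1)]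
  | succ k ih =>
    push_cast at hk h2
    rcases lt_or_ge c (D + (k:ℝ)^2 * N/4) with h | h
    · exact ih (by nlinarith) h
    · obtain ⟨e, he0, he1, he⟩ := pts (k+1) q
      obtain ⟨j, hj⟩ := he 0
      have hk0 : (0:ℝ) ≤ k := Nat.cast_nonneg k
      have e1 : ((k:ℝ)+1)^2/4 ≤ (((k:ℝ)+1)/2 + e)^2 := by nlinarith
      have e2 : (((k:ℝ)+1)/2 + e)^2 ≤ ((k:ℝ)+2)^2/4 := by nlinarith
      have e3 := mul_le_mul_of_nonneg_left e1 hN.le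
      have e4 := mul_le_mul_of_nonneg_left e2 hN.le
      refine ⟨j, ?_, ?_⟩ <;> rw [hj] <;> push_cast <;> rw [sub_zero] <;> nlinarith

lemma hitR (N q D c : ℝ) (hN : 0 < N) (hD : 0 < D) (k : ℕ) (hk : k * N < D) (n : ℤ)
    (h1 : N/4 < c + n) (h2 : c + n < D + (k:ℝ)^2 * N/4) : Hit D N q c := by
  obtain ⟨j, h3, h4⟩ := rangeR N q D (c+n) hN hD k hk h1 h2
  exact ⟨j, n, by linarith, by linarith⟩

lemma hitR_full (N q D c : ℝ) (hN : 0 < N) (hD : 0 < D) (k : ℕ) (hk : k * N < D)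
    (h : 1 < D + ((k:ℝ)^2 - 1) * N/4) : Hit D N q c := by
  obtain ⟨n, h1, h2⟩ := shift_ex (N/4) c
  exact hitR N q D c hN hD k hk n h1 (by linarith)

/-- The gap after the `k`-th range is bridged using the `s`-th further point. -/
lemma hitG (N q D c : ℝ) (hN : 0 < N) (hD : 0 < D) (k s : ℕ) (M : ℤ) (hk1 : 1 ≤ k) (hk : k * N < D)
    (hk' : D ≤ (k+1) * N) (n : ℤ)
    (h1 : N/4 < c + n) (h2 : c + n < D + ((k:ℝ)+1)^2 * N/4)
    (hM1 : (M:ℝ) < s * (k+1+s) * N + s * D / (k+1) + D)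
    (hM2 : (1+s) * (k+1+s) * N - D < M) : Hit D N q c := by
  rcases lt_or_ge (c+n) (D + (k:ℝ)^2 * N/4) with h | h
  · exact hitR N q D c hN hD k hk n h1 h
  by_contra hno
  have hno' : ∀ j m : ℤ, 0 < c - N * ((j:ℝ) + q)^2 + m → D ≤ c - N * ((j:ℝ) + q)^2 + m := by
    intro j m hj
    by_contra hlt
    exact hno ⟨j, m, hj, not_le.1 hlt⟩
  obtain ⟨e, he0, he1, he⟩ := pts k q
  have hk0 : (1:ℝ) ≤ k := by exact_mod_cast hk1
  have hs0 : (0:ℝ) ≤ s := Nat.cast_nonneg s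
  have f1 : D + N * ((k:ℝ)/2 + e)^2 ≤ c + n := by
    obtain ⟨j, hj⟩ := he 0
    have := hno' j n
    rw [hj] at this
    push_cast at this
    rw [sub_zero] at this
    have e2 : ((k:ℝ)/2 + e)^2 ≤ (k:ℝ)^2/4 + k := by nlinarith
    have e3 := mul_le_mul_of_nonneg_left e2 hN.le
    have := this (by nlinarith)
    linarith
  have f2 : c + n ≤ N * ((k:ℝ)/2 + 1 - e)^2 := by
    obtain ⟨j, hj⟩ := he (k+1)
    have := hno' j n
    rw [hj] at this
    push_cast at this
    by_contra hlt
    have e2 : ((k:ℝ)+1)^2/4 ≤ ((k:ℝ)/2 + 1 - e)^2 := by nlinarith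
    have e3 := mul_le_mul_of_nonneg_left e2 hN.le
    have := this (by nlinarith)
    nlinarith
  have f3 : 2 * (k+1) * N * e ≤ (k+1)*N - D := by nlinarith
  have f4 : e * N * 2 ≤ N - D/(k+1) := by
    have hp : (0:ℝ) < k + 1 := by linarith
    have : e * N * 2 = (2 * (k+1) * N * e) / (k+1) := by field_simp
    rw [this]
    have h5 : N - D/(k+1) = ((k+1)*N - D)/(k+1) := by field_simp
    rw [h5]
    gcongr
  obtain ⟨j, hj⟩ := he (k+1+s)
  apply hno
  refine ⟨j, n + M, ?_, ?_⟩ <;> rw [hj] <;> push_cast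
  · have g : N * ((k:ℝ)/2 + e - (k+1+s))^2 - N * ((k:ℝ)/2 + e)^2 ≤ (1+s) * (k+1+s) * N := by
      have : N * ((k:ℝ)/2 + e - (k+1+s))^2 - N * ((k:ℝ)/2 + e)^2
        = (1+s) * (k+1+s) * N - 2 * e * N * (k+1+s) := by ring
      rw [this]
      have : 0 ≤ 2 * e * N * (k+1+s) := by positivity
      linarith
    linarith
  · have g : N * ((k:ℝ)/2 + e - (k+1+s))^2 - N * ((k:ℝ)/2 + 1 - e)^2
        = s * (k+1+s) * N + s * N - s * (e * N * 2) := by ring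
    have g2 := mul_le_mul_of_nonneg_left f4 hs0
    have g3 : (s:ℝ) * (N - D/(k+1)) = s * N - s * D / (k+1) := by ring
    linarith

lemma hitG_full (N q D c : ℝ) (hN : 0 < N) (hD : 0 < D) (k s : ℕ) (M : ℤ) (hk1 : 1 ≤ k)
    (hk : k * N < D) (hk' : D ≤ (k+1) * N)
    (h : 1 < D + ((k:ℝ)^2 + 2 * k) * N/4)
    (hM1 : (M:ℝ) < s * (k+1+s) * N + s * D / (k+1) + D)
    (hM2 : (1+s) * (k+1+s) * N - D < M) : Hit D N q c := by
  obtain ⟨n, h1, h2⟩ := shift_ex (N/4) c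
  exact hitG N q D c hN hD k s M hk1 hk hk' n h1 (by linarith) hM1 hM2

lemma mac_desc (D δ L c : ℝ) (hδ : 0 ≤ δ) (hL : 0 ≤ L) (hne : 0 < δ + L) (h : δ + 1/2 < D)
    (hD1 : D ≤ 1) (hL2 : L ≤ 1/2) :
    ∃ (i : ℕ) (n : ℤ), 0 < c - L * i - δ * (i:ℝ)^2 + n ∧ c - L * i - δ * (i:ℝ)^2 + n < D := by
  obtain ⟨n, h1, h2⟩ := shift_ex 0 c
  have hex : ∃ i : ℕ, c + n - L * i - δ * (i:ℝ)^2 < D := by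
    obtain ⟨i, hi⟩ := exists_nat_gt (1 / (δ + L))
    refine ⟨i, ?_⟩
    rw [div_lt_iff₀ hne] at hi
    have hi1 : (1:ℝ) ≤ i := by
      have : i ≠ 0 := by
        rintro rfl; norm_num at hi
      exact_mod_cast Nat.one_le_iff_ne_zero.2 this
    nlinarith [mul_nonneg hδ (mul_nonneg (sub_nonneg.2 hi1) (by linarith : (0:ℝ) ≤ i))]
  classical
  have hspec := Nat.find_spec hex
  have hmin := fun m hm => Nat.find_min hex (m := m) hm
  set i := Nat.find hex with hi
  refine ⟨i, n, ?_, by linarith⟩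
  rcases Nat.eq_zero_or_pos i with h0 | hpos
  · rw [h0]; push_cast; linarith
  obtain ⟨j, hj⟩ := Nat.exists_eq_succ_of_ne_zero hpos.ne'
  rw [hj]
  have a1 := not_lt.1 (hmin j (by omega))
  rcases Nat.eq_zero_or_pos j with hj0 | hjpos
  · rw [hj0] at a1 ⊢; push_cast at *; linarith
  obtain ⟨l, hl⟩ := Nat.exists_eq_succ_of_ne_zero hjpos.ne'
  have a2 := not_lt.1 (hmin l (by omega))
  rw [hl] at a1 ⊢
  push_cast at *
  have hl0 : (0:ℝ) ≤ l := Nat.cast_nonneg l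
  have a3 : c + n - L * l - δ * (l:ℝ)^2 ≤ 1 := by nlinarith [mul_nonneg hL hl0, mul_nonneg hδ (sq_nonneg (l:ℝ))]
  nlinarith

lemma mac (D δ L c : ℝ) (h : |δ| + 1/2 < D) (hD1 : D ≤ 1) (hL2 : |L| ≤ 1/2)
    (hne : δ ≠ 0 ∨ L ≠ 0) :
    ∃ (i n : ℤ), 0 < c + L * i - δ * (i:ℝ)^2 + n ∧ c + L * i - δ * (i:ℝ)^2 + n < D := by
  have key : ∀ δ c : ℝ, 0 ≤ δ → δ + 1/2 < D → (δ ≠ 0 ∨ L ≠ 0) →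
      ∃ (i n : ℤ), 0 < c + L * i - δ * (i:ℝ)^2 + n ∧ c + L * i - δ * (i:ℝ)^2 + n < D := by
    intro δ c hδ h hne
    have hpos : 0 < δ + |L| := by
      rcases hne with h | h
      · have := lt_of_le_of_ne hδ (Ne.symm h)
        have := abs_nonneg L
        linarith
      · have := abs_pos.2 h
        linarith
    obtain ⟨i, n, h1, h2⟩ := mac_desc D δ |L| c hδ (abs_nonneg _) hpos h hD1 hL2
    rcases abs_choice L with hh | hh
    · refine ⟨-i, n, ?_, ?_⟩ <;> push_cast <;> rw [hh] at h1 h2 <;> linarith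
    · refine ⟨i, n, ?_, ?_⟩ <;> push_cast <;> rw [hh] at h1 h2 <;> linarith
  rcases le_or_gt 0 δ with hδ | hδ
  · exact key δ c hδ (by rwa [abs_of_nonneg hδ] at h) hne
  · obtain ⟨i, n, h1, h2⟩ := key (-δ) (D - c) (by linarith) (by rwa [abs_of_neg hδ] at h)
      (hne.imp (fun h => neg_ne_zero.2 h) id)
    refine ⟨-i, -n, ?_, ?_⟩ <;> push_cast <;> linarith

lemma macHit (D N q c : ℝ) (k h : ℤ) (hh : |N * k^2 - h/2| + 1/2 < D) (hD1 : D ≤ 1)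
    (hno : ¬ Hit D N q c) : N * k^2 = h/2 ∧ ∃ z : ℤ, 2 * N * k * q + h/2 = z := by
  by_contra hcon
  apply hno
  set X := -(2 * N * k * q + h/2) with hX
  have hr := abs_sub_round X
  obtain ⟨i, n, h1, h2⟩ := mac D (N * k^2 - h/2) (X - round X) (c - N * q^2) hh hD1 hr (by
    by_contra hc
    push Not at hc
    apply hcon
    refine ⟨by linarith [hc.1], -round X, ?_⟩
    push_cast
    linarith [hc.2])
  obtain ⟨y, hy⟩ : ∃ y : ℤ, i^2 - i = 2 * y := by
    obtain ⟨y, hy⟩ := Int.even_mul_pred_self i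
    exact ⟨y, by linear_combination hy⟩
  have hy' : (i:ℝ)^2 - i = 2 * y := by exact_mod_cast hy
  refine ⟨k * i, n - round X * i + h * y, ?_, ?_⟩ <;> push_cast
  · refine lt_of_lt_of_eq h1 ?_
    rw [hX]; linear_combination (h/2:ℝ) * hy'
  · refine lt_of_eq_of_lt ?_ h2
    rw [hX]; linear_combination (-h/2:ℝ) * hy'

lemma pair (x δ D l : ℝ) (h1 : δ < D) (h2 : 1 - δ < D) :
    (∃ n : ℤ, l < x + n ∧ x + n < l + D) ∨ (∃ n : ℤ, l < x - δ + n ∧ x - δ + n < l + D) := by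
  obtain ⟨n, h3, h4⟩ := shift_ex l x
  rcases lt_or_ge (x + n) (l + D) with h | h
  · exact Or.inl ⟨n, h3, h⟩
  · exact Or.inr ⟨n, by linarith, by linarith⟩

lemma hitR_large (N q D c T : ℝ) (L₀ : ℕ) (hL₀ : 1 ≤ L₀) (hN : 0 < N) (hD : 0 < D)
    (hb : N ≤ T * D^3) (hsm : L₀ * N < D)
    (hq : ∀ L : ℕ, L₀ ≤ L → 16 * T * (L+1) < ((L:ℝ)+3)^2) : Hit D N q c := by
  obtain ⟨L, hL1, hL2⟩ : ∃ L : ℕ, L * N < D ∧ D ≤ (L+1) * N := by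
    have h0 : 0 < D / N := by positivity
    have hc : 0 < ⌈D/N⌉₊ := Nat.ceil_pos.2 h0
    refine ⟨⌈D/N⌉₊ - 1, ?_, ?_⟩
    · have h1 : ⌈D/N⌉₊ - 1 < ⌈D/N⌉₊ := by omega
      have := Nat.lt_ceil.1 h1
      rwa [lt_div_iff₀ hN] at this
    · have h1 := Nat.le_ceil (D/N)
      rw [div_le_iff₀ hN] at h1
      have h2 : ((⌈D/N⌉₊ - 1 : ℕ):ℝ) + 1 = ⌈D/N⌉₊ := by
        have : ⌈D/N⌉₊ - 1 + 1 = ⌈D/N⌉₊ := by omega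
        exact_mod_cast this
      rw [h2]; exact h1
  have hLL : L₀ ≤ L := by
    by_contra hlt
    have h1 : L + 1 ≤ L₀ := by omega
    have h2 : (L:ℝ) + 1 ≤ L₀ := by exact_mod_cast h1
    nlinarith
  have hq' := hq L hLL
  have hL0 : (0:ℝ) ≤ L := Nat.cast_nonneg L
  have h1 : (1:ℝ) ≤ (L+1) * (T * D^2) := by
    by_contra hlt
    push Not at hlt
    have : D * 1 ≤ D * ((L+1) * (T * D^2)) := by nlinarith
    nlinarith
  have hL1' : (1:ℝ) ≤ L := by exact_mod_cast le_trans hL₀ hLL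
  have h2 : 16 < (((L:ℝ)+3) * D)^2 := by
    have h3 : 0 < D^2 := by positivity
    nlinarith
  have h3 : 4 < ((L:ℝ)+3) * D := by
    have : 0 < ((L:ℝ)+3) * D := by positivity
    nlinarith
  refine hitR_full N q D c hN hD L hL1 ?_
  nlinarith [mul_nonneg (sub_nonneg.2 hL1') (sub_nonneg.2 hL2)]

/-- The case where `D` lies between three and four times `N`. -/
lemma hit3 (N q D c : ℝ) (hN : 0 < N) (h3 : 3 * N < D) (h4 : D ≤ 4 * N) (hb : N ≤ 0.82 * D^3)
    (hD : 0.585 < D) (hD2 : D + 2 * N ≤ 1) (hno : ¬ Hit D N q c) :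
    N = 1/6 ∧ ∃ z : ℤ, q + 1/2 = z := by
  have hD0 : 0 < D := by linarith
  have g1 : 1 + D ≤ 10 * N := by
    by_contra hlt
    apply hno
    refine hitG_full N q D c hN hD0 3 1 1 (by norm_num) (by push_cast; linarith)
      (by push_cast; linarith) ?_ ?_ ?_ <;> push_cast <;> linarith
  have g2 : 9 * N < 1 + D := by
    by_contra hlt
    push Not at hlt
    have hD6 : 0.6 < D := by
      by_contra hh
      push Not at hh
      have h36 : D^2 ≤ 0.36 := by nlinarith
      have : D^3 ≤ 0.36 * D := by
        have : D^3 = D^2 * D := by ring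
        rw [this]; exact mul_le_mul_of_nonneg_right h36 hD0.le
      linarith
    apply hno
    refine hitG_full N q D c hN hD0 3 2 3 (by norm_num) (by push_cast; linarith)
      (by push_cast; linarith) ?_ ?_ ?_ <;> push_cast <;> linarith
  obtain ⟨e1, z, hz⟩ := macHit D N q c 3 3 (by
    push_cast
    have : |N * 3^2 - 3/2| < D - 1/2 := by rw [abs_lt]; constructor <;> linarith
    linarith) (by linarith) hno
  push_cast at e1 hz
  have hN6 : N = 1/6 := by linarith
  refine ⟨hN6, z - 1, ?_⟩
  rw [hN6] at hz
  push_cast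
  linarith

lemma lev3_K3 (t q D c : ℝ) (ht : 0 < t) (hD : 0 < D) (hD1 : D ≤ 1) (hb : t ≤ 0.7282 * D^3)
    (hno : ¬ Hit D t q c) :
    (t = 1/2 ∧ ∃ z : ℤ, q + 1/2 = z) ∨ (t = 1/4 ∧ ∃ z : ℤ, q = z) ∨
    (t = 1/6 ∧ ∃ z : ℤ, q + 1/2 = z) := by
  have hlow : ∀ r : ℝ, D ≤ r * t → 1 ≤ r * (0.7282 * D^2) := by
    intro r hr
    have hr0 : 0 < r := by
      by_contra hh
      push Not at hh
      nlinarith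
    by_contra hlt
    push Not at hlt
    have h1 : D * (r * (0.7282 * D^2)) < D * 1 := by nlinarith
    nlinarith
  rcases le_or_gt D (2 * t) with l1 | l1
  · left
    have h1 := hlow 2 l1
    have h2 : 0.828 < D := by nlinarith
    have h3 : t ≤ 0.7282 := by
      have : D^3 ≤ 1 := pow_le_one₀ hD.le hD1
      linarith
    obtain ⟨e1, z, hz⟩ := macHit D t q c 1 1 (by
      push_cast
      have : |t * 1^2 - 1/2| < D - 1/2 := by rw [abs_lt]; constructor <;> linarith
      linarith) hD1 hno
    push_cast at e1 hz
    have e2 : t = 1/2 := by linarith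
    refine ⟨e2, z, ?_⟩
    rw [e2] at hz
    linarith
  rcases le_or_gt D (3 * t) with l2 | l2
  · right; left
    have h1 := hlow 3 l2
    have h2 : 0.676 < D := by nlinarith
    have h3 : D + 3 * t / 4 ≤ 1 := by
      by_contra hh
      exact hno (hitR_full t q D c ht hD 2 (by push_cast; linarith) (by push_cast; linarith))
    have h4 : 4 * t < D + 1/2 := by
      by_contra hh
      push Not at hh
      have hD76 : D ≤ 0.7632 := by linarith
      have h58 : D^2 ≤ 0.583 := by nlinarith
      have h44 : D^3 ≤ 0.445 := by
        have : D^3 = D^2 * D := by ring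
        rw [this]; nlinarith
      apply hno
      refine hitG_full t q D c ht hD 2 1 2 (by norm_num) (by push_cast; linarith)
        (by push_cast; linarith) ?_ ?_ ?_ <;> push_cast <;> linarith
    obtain ⟨e1, z, hz⟩ := macHit D t q c 2 2 (by
      push_cast
      have : |t * 2^2 - 2/2| < D - 1/2 := by rw [abs_lt]; constructor <;> linarith
      linarith) hD1 hno
    push_cast at e1 hz
    have e2 : t = 1/4 := by linarith
    refine ⟨e2, z - 1, ?_⟩
    rw [e2] at hz
    push_cast
    linarith
  rcases le_or_gt D (4 * t) with l3 | l3
  · right; right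
    have h1 := hlow 4 l3
    have h2 : 0.585 < D := by nlinarith
    have h3 : D + 2 * t ≤ 1 := by
      by_contra hh
      exact hno (hitR_full t q D c ht hD 3 (by push_cast; linarith) (by push_cast; linarith))
    exact hit3 t q D c ht (by linarith) l3 (by nlinarith [pow_pos hD 3]) h2 h3 hno
  exfalso
  rcases le_or_gt D (5 * t) with l4 | l4
  · have h1 := hlow 5 l4
    have h2 : 0.52401 < D := by nlinarith
    have h3 : D + 15 * t / 4 ≤ 1 := by
      by_contra hh
      exact hno (hitR_full t q D c ht hD 4 (by push_cast; linarith) (by push_cast; linarith))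
    apply hno
    refine hitG_full t q D c ht hD 4 1 1 (by norm_num) (by push_cast; linarith)
        (by push_cast; linarith) ?_ ?_ ?_ <;> push_cast <;> linarith
  rcases le_or_gt D (6 * t) with l5 | l5
  · have h1 := hlow 6 l5
    have h2 : 0.478 < D := by nlinarith
    have h3 : D + 6 * t ≤ 1 := by
      by_contra hh
      exact hno (hitR_full t q D c ht hD 5 (by push_cast; linarith) (by push_cast; linarith))
    apply hno
    refine hitG_full t q D c ht hD 5 1 1 (by norm_num) (by push_cast; linarith)
        (by push_cast; linarith) ?_ ?_ ?_ <;> push_cast <;> linarith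
  rcases le_or_gt D (7 * t) with l6 | l6
  · have h1 := hlow 7 l6
    have h2 : 0.4428 < D := by nlinarith
    have h3 : D + 35 * t / 4 ≤ 1 := by
      by_contra hh
      exact hno (hitR_full t q D c ht hD 6 (by push_cast; linarith) (by push_cast; linarith))
    apply hno
    refine hitG_full t q D c ht hD 6 1 1 (by norm_num) (by push_cast; linarith)
        (by push_cast; linarith) ?_ ?_ ?_ <;> push_cast <;> linarith
  · apply hno
    refine hitR_large t q D c 0.7282 7 (by norm_num) ht hD hb (by push_cast; linarith) ?_
    intro L hL
    have : (7:ℝ) ≤ L := by exact_mod_cast hL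
    nlinarith

lemma lev3_K4 (t q D c : ℝ) (ht : 0 < t) (hD : 0 < D) (hD1 : D ≤ 1) (hb : t ≤ 0.5733 * D^3)
    (hno : ¬ Hit D t q c) :
    (t = 1/2 ∧ ∃ z : ℤ, q + 1/2 = z) ∨ (t = 1/6 ∧ ∃ z : ℤ, q + 1/2 = z) := by
  have hlow : ∀ r : ℝ, D ≤ r * t → 1 ≤ r * (0.5733 * D^2) := by
    intro r hr
    have hr0 : 0 < r := by
      by_contra hh
      push Not at hh
      nlinarith
    by_contra hlt
    push Not at hlt
    have h1 : D * (r * (0.5733 * D^2)) < D * 1 := by nlinarith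
    nlinarith
  have hb' : t ≤ 0.7282 * D^3 := by nlinarith [pow_pos hD 3]
  rcases lev3_K3 t q D c ht hD hD1 hb' hno with h | h | h
  · exact Or.inl h
  · exfalso
    have ht4 := h.1
    have h3 : D + 3 * t / 4 ≤ 1 ∨ D ≤ 2 * t := by
      by_contra hh
      push Not at hh
      exact hno (hitR_full t q D c ht hD 2 (by push_cast; linarith) (by push_cast; linarith))
    have h5 : D ≤ 3 * t ∨ 3 * t < D := le_or_gt _ _
    rcases h5 with h5 | h5
    · have h1 := hlow 3 h5
      have h2 : 0.76 < D := by nlinarith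
      linarith
    · have h6 : D + 2 * t ≤ 1 := by
        by_contra hh
        exact hno (hitR_full t q D c ht hD 3 (by push_cast; linarith) (by push_cast; linarith))
      linarith
  · exact Or.inr h

lemma cube_low (D r T : ℝ) (hD : 0 < D) (N : ℝ) (h : D ≤ r * N) (hr : 0 < r) (hb : N ≤ T * D^4) :
    1 ≤ r * T * D^3 := by
  by_contra hlt
  push Not at hlt
  have h1 : D * (r * T * D^3) < D * 1 := mul_lt_mul_of_pos_left hlt hD
  have h2 : r * N ≤ r * (T * D^4) := mul_le_mul_of_nonneg_left hb hr.le
  have h3 : D * (r * T * D^3) = r * (T * D^4) := by ring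
  linarith

lemma low_of_cube (D b : ℝ) (hD : 0 < D) (h : b^3 < D^3) : b < D :=
  lt_of_pow_lt_pow_left₀ 3 hD.le h

lemma lev2_E1_K4 (A q D c : ℝ) (hA : 0 < A) (hD : 0 < D) (h4 : 4 * A < D) (h5 : D ≤ 5 * A)
    (hb : A ≤ 1.2288 * D^4) (hD2 : D + 15 * A / 4 ≤ 1) : Hit D A q c := by
  have h1 := cube_low D 5 1.2288 hD A h5 (by norm_num) hb
  have h2 : 0.545 < D := low_of_cube D _ hD (by linarith)
  refine hitG_full A q D c hA hD 4 1 1 (by norm_num) (by push_cast; linarith)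
        (by push_cast; linarith) ?_ ?_ ?_ <;> push_cast <;> linarith

lemma lev2_E1_K3 (A q D c : ℝ) (hA : 0 < A) (hD : 0 < D) (h3 : 3 * A < D) (h4 : D ≤ 4 * A)
    (hb : A ≤ 1.2288 * D^4) (hD2 : D + 2 * A ≤ 1) (hno : ¬ Hit D A q c) :
    A = 1/6 ∧ ∃ z : ℤ, q + 1/2 = z := by
  have h1 := cube_low D 4 1.2288 hD A h4 (by norm_num) hb
  have h2 : 0.585 < D := low_of_cube D _ hD (by linarith)
  have h5 : D^4 ≤ 2/3 * D^3 := by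
    have : D^4 = D * D^3 := by ring
    rw [this]
    exact mul_le_mul_of_nonneg_right (by linarith) (by positivity)
  exact hit3 A q D c hA h3 h4 (by linarith [pow_pos hD 3]) h2 hD2 hno

/-- Two values at distance `δ`, both in the range of level two. -/
lemma pairR (A q₁ q₂ D c δ : ℝ) (k : ℕ) (hA : 0 < A) (hD : 0 < D) (hk : k * A < D)
    (h1 : δ < D + ((k:ℝ)^2 - 1) * A / 4) (h2 : 1 - δ < D + ((k:ℝ)^2 - 1) * A / 4) :
    Hit D A q₁ c ∨ Hit D A q₂ (c - δ) := by
  rcases pair c δ _ (A/4) h1 h2 with ⟨n, h3, h4⟩ | ⟨n, h3, h4⟩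
  · exact Or.inl (hitR A q₁ D c hA hD k hk n h3 (by linarith))
  · exact Or.inr (hitR A q₂ D _ hA hD k hk n h3 (by linarith))

lemma pairG (A q₁ q₂ D c δ : ℝ) (hA : 0 < A) (hD : 0 < D) (h3 : 3 * A < D) (h4 : D ≤ 4 * A)
    (h10 : 10 * A - D < 1) (hD4 : 1 < 2.5 * D)
    (h1 : δ < D + 15 * A / 4) (h2 : 1 - δ < D + 15 * A / 4) :
    Hit D A q₁ c ∨ Hit D A q₂ (c - δ) := by
  rcases pair c δ _ (A/4) h1 h2 with ⟨n, h5, h6⟩ | ⟨n, h5, h6⟩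
  · left
    refine hitG A q₁ D c hA hD 3 1 1 (by norm_num) (by push_cast; linarith)
      (by push_cast; linarith) n h5 ?_ ?_ ?_ <;> push_cast <;> linarith
  · right
    refine hitG A q₂ D _ hA hD 3 1 1 (by norm_num) (by push_cast; linarith)
      (by push_cast; linarith) n h5 ?_ ?_ ?_ <;> push_cast <;> linarith

lemma lev2_E2 (A q₁ q₂ D c : ℝ) (hA : 0 < A) (hD : 0 < D) (h3 : 3 * A < D) (h4 : D ≤ 4 * A)
    (hb : A ≤ 2.4576 * D^4) : Hit D A q₁ c ∨ Hit D A q₂ (c - 1/4) := by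
  have h1 := cube_low D 4 2.4576 hD A h4 (by norm_num) hb
  have h2 : 0.466 < D := low_of_cube D _ hD (by linarith)
  rcases lt_or_ge (3/4) (D + 2 * A) with h | h
  · exact pairR A q₁ q₂ D c _ 3 hA hD (by push_cast; linarith) (by push_cast; linarith)
      (by push_cast; linarith)
  · exact pairG A q₁ q₂ D c _ hA hD h3 h4 (by linarith) (by linarith) (by linarith) (by linarith)

lemma lev2_E3_K3 (A q₁ q₂ D c : ℝ) (hA : 0 < A) (hD : 0 < D) (h3 : 3 * A < D) (h4 : D ≤ 4 * A)
    (hb : A ≤ 3.6864 * D^4) : Hit D A q₁ c ∨ Hit D A q₂ (c - 1/3) := by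
  have h1 := cube_low D 4 3.6864 hD A h4 (by norm_num) hb
  have h2 : 0.407 < D := low_of_cube D _ hD (by linarith)
  rcases lt_or_ge (2/3) (D + 2 * A) with h | h
  · exact pairR A q₁ q₂ D c _ 3 hA hD (by push_cast; linarith) (by push_cast; linarith)
      (by push_cast; linarith)
  · exact pairG A q₁ q₂ D c _ hA hD h3 h4 (by linarith) (by linarith) (by linarith) (by linarith)

lemma lev2_E3_K4 (A q₁ q₂ D c : ℝ) (hA : 0 < A) (hD : 0 < D) (h4 : 4 * A < D) (h5 : D ≤ 5 * A)
    (hb : A ≤ 3.6864 * D^4) : Hit D A q₁ c ∨ Hit D A q₂ (c - 1/3) := by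
  have h1 := cube_low D 5 3.6864 hD A h5 (by norm_num) hb
  have h2 : 0.378 < D := low_of_cube D _ hD (by linarith)
  rcases lt_or_ge (2/3) (D + 15 * A / 4) with h | h
  · exact pairR A q₁ q₂ D c _ 4 hA hD (by push_cast; linarith) (by push_cast; linarith)
      (by push_cast; linarith)
  obtain ⟨n, h6, h7⟩ := shift_ex (A/4) c
  rcases lt_or_ge (c + n) (D + 4 * A) with h8 | h8
  · exact Or.inl (hitR A q₁ D c hA hD 4 (by push_cast; linarith) n h6 (by push_cast; linarith))
  rcases lt_or_ge (c + n) (D + 4 * A + 1/3) with h9 | h9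
  · exact Or.inr (hitR A q₂ D _ hA hD 4 (by push_cast; linarith) n (by linarith)
      (by push_cast; linarith))
  left
  obtain ⟨e, e0, e1, he⟩ := pts 6 q₁
  obtain ⟨j, hj⟩ := he 0
  push_cast at hj
  refine ⟨j, n, ?_, ?_⟩ <;> rw [hj]
  · have : A * (6/2 + e - 0)^2 ≤ A * (49/4) := mul_le_mul_of_nonneg_left (by nlinarith) hA.le
    linarith
  · have : A * 9 ≤ A * (6/2 + e - 0)^2 := mul_le_mul_of_nonneg_left (by nlinarith) hA.le
    linarith

lemma hit_shift (D N q c : ℝ) (z : ℤ) (h : Hit D N q (c + z)) : Hit D N q c := by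
  obtain ⟨j, n, h1, h2⟩ := h
  refine ⟨j, n + z, ?_, ?_⟩ <;> push_cast <;> linarith

lemma drift (x h : ℝ) (H : ∀ n : ℤ, ∃ z : ℤ, |x + n * h - z| < 1/12) : ∃ z : ℤ, h = z := by
  have H2 : ∀ n : ℤ, ∃ z : ℤ, |n * h - z| < 1/6 := by
    intro n
    obtain ⟨z₁, h1⟩ := H n
    obtain ⟨z₀, h0⟩ := H 0
    refine ⟨z₁ - z₀, ?_⟩
    rw [abs_lt] at *
    push_cast at *
    constructor <;> linarith
  obtain ⟨z, hz⟩ := H2 1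
  refine ⟨z, ?_⟩
  push_cast at hz
  have key : ∀ n : ℕ, |(n:ℝ) * (h - z)| < 1/6 := by
    intro n
    induction n with
    | zero => norm_num
    | succ k ih =>
      obtain ⟨y, hy⟩ := H2 (k+1)
      have hy' : |((k:ℝ) + 1) * (h - z) - ((y - (k+1) * z : ℤ):ℝ)| < 1/6 := by
        push_cast at hy ⊢
        have : ((k:ℝ) + 1) * (h - z) - (y - (k+1) * z) = ((k:ℝ)+1) * h - y := by ring
        rw [this]; exact hy
      set Y : ℤ := y - (k+1) * z with hY
      have hY0 : Y = 0 := by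
        rw [abs_lt] at *
        have h1 : (Y:ℝ) < 1 := by nlinarith [ih.1, ih.2, hz.1, hz.2, hy'.1, hy'.2]
        have h2 : (-1:ℝ) < Y := by nlinarith [ih.1, ih.2, hz.1, hz.2, hy'.1, hy'.2]
        have h1' : Y < 1 := by exact_mod_cast h1
        have h2' : -1 < Y := by exact_mod_cast h2
        omega
      rw [hY0] at hy'
      push_cast at hy' ⊢
      simpa using hy'
  by_contra hne
  have hpos : 0 < |h - z| := abs_pos.2 (sub_ne_zero.2 hne)
  obtain ⟨n, hn⟩ := exists_nat_gt (1 / |h - z|)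
  rw [div_lt_iff₀ hpos] at hn
  have := key n
  rw [abs_mul, Nat.abs_cast] at this
  linarith

/-- The analysis of a fibre in the class `3 ∣ 2τ`. -/
lemma core3 (a d q b : ℝ) (ha : 0 < a) (hd0 : 0 < d) (hd3 : d ≤ 3 * a)
    (had : a = 6 * d^5) (hD : d + 3 * a / 4 ≤ 2/3)
    (hdl : 0.485 < d) (hb1 : d + a ≤ b) (hb2 : b ≤ a/4 + 2/3) (hno : ¬ Hit d a q b) :
    1/2 ≤ d ∧ 3/16 ≤ a ∧ ∃ j : ℤ, |q + j| < 1/12 := by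
  have hno' : ∀ j m : ℤ, 0 < b - a * ((j:ℝ) + q)^2 + m → d ≤ b - a * ((j:ℝ) + q)^2 + m := by
    intro j m h
    by_contra hlt
    push Not at hlt
    exact hno ⟨j, m, h, hlt⟩
  obtain ⟨e, e0, e1, he⟩ := pts 0 q
  obtain ⟨j0, hj0⟩ := he 0
  obtain ⟨j1, hj1⟩ := he (-1)
  obtain ⟨j2, hj2⟩ := he 2
  obtain ⟨j3, hj3⟩ := he 3
  have p1 := hno' j1 0
  have p2 := hno' j2 0
  have p3 := hno' j3 1
  rw [hj1] at p1
  rw [hj2] at p2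
  rw [hj3] at p3
  push_cast at p1 p2 p3 hj0
  have x1 : a * (0/2 + e - -1)^2 = a + 2 * (a * e) + a * e * e := by ring
  have x2 : a * (0/2 + e - 2)^2 = 4 * a - 4 * (a * e) + a * e * e := by ring
  have x3 : a * (0/2 + e - 3)^2 = 9 * a - 6 * (a * e) + a * e * e := by ring
  rw [x1] at p1
  rw [x2] at p2
  rw [x3] at p3
  have hae : 0 ≤ a * e := by positivity
  have hae1 : a * e ≤ a * (1/2) := mul_le_mul_of_nonneg_left e1 ha.le
  have hae2 : 0 ≤ a * e * e := by positivity
  have hae3 : a * e * e ≤ a * e * (1/2) := mul_le_mul_of_nonneg_left e1 hae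
  have q1 : d + a + 2 * (a * e) + a * e * e ≤ b := by
    have := p1 (by linarith)
    linarith
  have q2 : b ≤ 4 * a - 4 * (a * e) + a * e * e := by
    by_contra hlt
    push Not at hlt
    have := p2 (by linarith)
    linarith
  have q3 : b + 1 ≤ 9 * a - 6 * (a * e) + a * e * e := by
    by_contra hlt
    push Not at hlt
    have := p3 (by linarith)
    linarith
  have h8 : 1 + d ≤ 8 * a := by linarith
  have hd2 : 1/2 ≤ d := by
    by_contra hlt
    push Not at hlt
    have : d^4 < (1/2)^4 := pow_lt_pow_left₀ hlt hd0.le (by norm_num)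
    have h5 : d * d^4 ≤ d * (1/16) := mul_le_mul_of_nonneg_left (by linarith) hd0.le
    have h6 : a = 6 * (d * d^4) := by rw [had]; ring
    linarith
  have ha2 : 3/16 ≤ a := by
    have : (1/2:ℝ)^5 ≤ d^5 := pow_le_pow_left₀ (by norm_num) hd2 5
    norm_num at this
    linarith
  refine ⟨hd2, ha2, j0, ?_⟩
  have he12 : e < 1/12 := by
    by_contra hlt
    push Not at hlt
    have : a * (1/12) ≤ a * e := mul_le_mul_of_nonneg_left hlt ha.le
    linarith
  have h1 : |(j0:ℝ) + q| = |e| := (sq_eq_sq_iff_abs_eq_abs _ _).1 (by rw [hj0]; ring)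
  rw [add_comm, h1, abs_of_nonneg e0]
  exact he12

/-- The final configuration. -/
lemma core1 (a d q b e : ℝ) (j : ℤ) (ha : 3/16 ≤ a) (hd : 1/2 ≤ d) (ha2 : a ≤ 0.2092)
    (e0 : 0 ≤ e) (e1 : e < 1/12)
    (hb1 : d + a + 1/3 ≤ b) (hb2 : b ≤ a/4 + 1) (hno : ¬ Hit d a q b)
    (hq : q + j = e - 1/3 ∨ q + j = -(e - 1/3)) :
    d = 1/2 ∧ a = 3/16 ∧ e = 0 ∧ b = 49/48 := by
  have hno' : ∀ j m : ℤ, 0 < b - a * ((j:ℝ) + q)^2 + m → d ≤ b - a * ((j:ℝ) + q)^2 + m := by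
    intro j m h
    by_contra hlt
    push Not at hlt
    exact hno ⟨j, m, h, hlt⟩
  obtain ⟨j1, hj1⟩ : ∃ j1 : ℤ, ((j1:ℝ) + q)^2 = (7/3 - e)^2 := by
    rcases hq with h | h
    · refine ⟨j - 2, ?_⟩
      have : q = e - 1/3 - j := by linarith
      rw [this]; push_cast; ring
    · refine ⟨j + 2, ?_⟩
      have : q = -(e - 1/3) - j := by linarith
      rw [this]; push_cast; ring
  obtain ⟨j2, hj2⟩ : ∃ j1 : ℤ, ((j1:ℝ) + q)^2 = (11/3 + e)^2 := by
    rcases hq with h | h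
    · refine ⟨j + 4, ?_⟩
      have : q = e - 1/3 - j := by linarith
      rw [this]; push_cast; ring
    · refine ⟨j - 4, ?_⟩
      have : q = -(e - 1/3) - j := by linarith
      rw [this]; push_cast; ring
  have p1 := hno' j1 0
  have p2 := hno' j2 2
  rw [hj1] at p1
  rw [hj2] at p2
  push_cast at p1 p2
  have ha0 : 0 < a := by linarith
  have q1 : b ≤ a * (7/3 - e)^2 := by
    by_contra hlt
    push Not at hlt
    have h1 := p1 (by linarith)
    have : a * (9/4)^2 ≤ a * (7/3 - e)^2 := mul_le_mul_of_nonneg_left (by nlinarith) ha0.le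
    linarith
  have q2 : a * (11/3 + e)^2 + d ≤ b + 2 := by
    have h2 : a * (11/3 + e)^2 ≤ a * (15/4)^2 := mul_le_mul_of_nonneg_left (by nlinarith) ha0.le
    have h1 := p2 (by linarith)
    linarith
  have hae : 0 ≤ a * e := by positivity
  have q3 : a * 8 + 12 * (a * e) ≤ 2 - d := by nlinarith
  have hd' : d = 1/2 := by linarith
  have ha' : a = 3/16 := by linarith
  subst ha'
  have he : e = 0 := by linarith
  subst he
  refine ⟨hd', rfl, rfl, ?_⟩
  norm_num at q1 q2
  linarith

set_option maxHeartbeats 1600000 in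
lemma lev1 (a d P h₄ h₅ C : ℝ) (ha : 0 < a) (h2 : 2 * a < d) (hd3 : d ≤ 3 * a)
    (had : a = 6 * d^5) (hD : d + 3 * a / 4 ≤ 2/3)
    (hh₄ : -1/2 < h₄ ∧ h₄ ≤ 1/2) (hh₅ : -1/2 < h₅ ∧ h₅ ≤ 1/2)
    (hno : ∀ v w : ℤ, ¬ Hit d a (P + h₄ * (v + 1/2) + h₅ * (w + 1/2))
      (C - 1/6 * ((v:ℝ) + 1/2)^2 - 1/2 * ((w:ℝ) + 1/2)^2)) :
    d = 1/2 ∧ a = 3/16 ∧ h₅ = 0 ∧ (h₄ = 1/3 ∨ h₄ = -1/3) ∧ (∃ z : ℤ, P + 1/2 = z) ∧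
      ∃ z : ℤ, C = 3/16 + z := by
  have hd0 : 0 < d := by linarith
  have hdl : 0.485 < d := by
    by_contra hlt
    push Not at hlt
    have : d^4 ≤ 0.485^4 := pow_le_pow_left₀ hd0.le hlt 4
    have h5 : d * d^4 ≤ d * 0.485^4 := mul_le_mul_of_nonneg_left this hd0.le
    have h6 : a = 6 * (d * d^4) := by rw [had]; ring
    linarith
  have hdu : d < 0.511 := by
    by_contra hlt
    push Not at hlt
    have : (0.511:ℝ)^5 ≤ d^5 := pow_le_pow_left₀ (by norm_num) hlt 5
    norm_num at this
    linarith
  have hau : a ≤ 0.2092 := by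
    have : d^5 ≤ (0.511:ℝ)^5 := pow_le_pow_left₀ hd0.le hdu.le 5
    norm_num at this
    linarith
  have even : ∀ w : ℤ, ∃ y : ℤ, w^2 + w = 2 * y := by
    intro w
    obtain ⟨y, hy⟩ := Int.even_mul_succ_self w
    exact ⟨y, by linarith⟩
  -- the two classes of fibres
  have c1 : ∀ v : ℤ, v = 0 ∨ v = -1 →
      ¬ Hit d a (P + h₄ * (v + 1/2) + h₅ * (1/2)) (C - 1/6) := by
    intro v hv hh
    apply hno v 0
    have e1 : C - 1/6 * ((v:ℝ) + 1/2)^2 - 1/2 * (((0:ℤ):ℝ) + 1/2)^2 = C - 1/6 := by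
      rcases hv with rfl | rfl <;> push_cast <;> ring
    rw [e1]
    have e2 : P + h₄ * (v + 1/2) + h₅ * (((0:ℤ):ℝ) + 1/2) = P + h₄ * (v + 1/2) + h₅ * (1/2) := by
      push_cast; ring
    rw [e2]; exact hh
  have c3 : ∀ k w : ℤ, ¬ Hit d a (P + h₄ * (3 * k + 3/2) + h₅ * (w + 1/2)) (C - 1/6 - 1/3) := by
    intro k w hh
    obtain ⟨y, hy⟩ := even w
    obtain ⟨x, hx⟩ := even k
    have hy' : (w:ℝ)^2 + w = 2 * y := by exact_mod_cast hy
    have hx' : (k:ℝ)^2 + k = 2 * x := by exact_mod_cast hx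
    apply hno (3 * k + 1) w
    have e2 : P + h₄ * (((3 * k + 1 : ℤ):ℝ) + 1/2) + h₅ * (w + 1/2)
      = P + h₄ * (3 * k + 3/2) + h₅ * (w + 1/2) := by push_cast; ring
    rw [e2]
    apply hit_shift _ _ _ _ (3 * x + y)
    have e1 : C - 1/6 * (((3 * k + 1 : ℤ):ℝ) + 1/2)^2 - 1/2 * ((w:ℝ) + 1/2)^2 + ((3 * x + y : ℤ):ℝ)
      = C - 1/6 - 1/3 := by push_cast; linear_combination (-3/2) * hx' - 1/2 * hy'
    rw [e1]; exact hh
  obtain ⟨n, hb1, hb2⟩ := shift_ex (a/4) (C - 1/6)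
  set b := C - 1/6 + n with hb
  have g1 : d + a ≤ b := by
    by_contra hlt
    push Not at hlt
    exact c1 0 (Or.inl rfl) (hitR a _ d _ ha hd0 2 (by push_cast; linarith) n (by linarith)
      (by push_cast; linarith))
  have g2 : d + a ≤ b - 1/3 := by
    by_contra hlt
    push Not at hlt
    exact c3 0 0 (hitR a _ d _ ha hd0 2 (by push_cast; linarith) n (by linarith)
      (by push_cast; linarith))
  have core : ∀ k w : ℤ, 1/2 ≤ d ∧ 3/16 ≤ a ∧
      ∃ j : ℤ, |P + h₄ * (3 * k + 3/2) + h₅ * (w + 1/2) + j| < 1/12 := by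
    intro k w
    refine core3 a d _ (b - 1/3) ha hd0 hd3 had hD hdl g2 (by linarith) ?_
    intro hh
    apply c3 k w
    apply hit_shift _ _ _ _ n
    have : C - 1/6 - 1/3 + (n:ℝ) = b - 1/3 := by rw [hb]; ring
    rw [this]; exact hh
  have hd2 := (core 0 0).1
  have ha2 := (core 0 0).2.1
  have h50 : h₅ = 0 := by
    obtain ⟨z, hz⟩ := drift (P + h₄ * (3/2) + h₅ * (1/2)) h₅ (by
      intro w
      obtain ⟨j, hj⟩ := (core 0 w).2.2
      refine ⟨-j, ?_⟩
      have : P + h₄ * (3/2) + h₅ * (1/2) + w * h₅ - ((-j : ℤ):ℝ)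
        = P + h₄ * (3 * ((0:ℤ):ℝ) + 3/2) + h₅ * (w + 1/2) + j := by push_cast; ring
      rw [this]; exact hj)
    have h1 : (z:ℝ) < 1 := by linarith
    have h2 : (-1:ℝ) < z := by linarith
    have h1' : z < 1 := by exact_mod_cast h1
    have h2' : -1 < z := by exact_mod_cast h2
    have : z = 0 := by omega
    rw [hz, this]; norm_num
  have h43 : h₄ = 0 ∨ h₄ = 1/3 ∨ h₄ = -1/3 := by
    obtain ⟨z, hz⟩ := drift (P + h₄ * (3/2) + h₅ * (1/2)) (3 * h₄) (by
      intro k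
      obtain ⟨j, hj⟩ := (core k 0).2.2
      refine ⟨-j, ?_⟩
      have : P + h₄ * (3/2) + h₅ * (1/2) + k * (3 * h₄) - ((-j : ℤ):ℝ)
        = P + h₄ * (3 * k + 3/2) + h₅ * (((0:ℤ):ℝ) + 1/2) + j := by push_cast; ring
      rw [this]; exact hj)
    have h1 : (z:ℝ) < 2 := by linarith
    have h2 : (-2:ℝ) < z := by linarith
    have h1' : z < 2 := by exact_mod_cast h1
    have h2' : -2 < z := by exact_mod_cast h2
    have : z = 0 ∨ z = 1 ∨ z = -1 := by omega
    rcases this with rfl | rfl | rfl <;> push_cast at hz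
    · left; linarith
    · right; left; linarith
    · right; right; linarith
  subst h50
  obtain ⟨j, hj⟩ := (core 0 0).2.2
  have c1' : ∀ v : ℤ, v = 0 ∨ v = -1 → ¬ Hit d a (P + h₄ * (v + 1/2)) b := by
    intro v hv hh
    apply c1 v hv
    apply hit_shift _ _ _ _ n
    have : P + h₄ * (v + 1/2) + 0 * (1/2) = P + h₄ * (v + 1/2) := by ring
    rw [this]; exact hh
  set ε := P + h₄ * (3/2) + j with hε
  have hεa : |ε| < 1/12 := by
    have : ε = P + h₄ * (3 * ((0:ℤ):ℝ) + 3/2) + 0 * (((0:ℤ):ℝ) + 1/2) + j := by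
      rw [hε]; push_cast; ring
    rw [this]; exact hj
  have hεb := abs_lt.1 hεa
  have he0 := abs_nonneg ε
  have fin : ∀ q : ℝ, ∀ i : ℤ, ¬ Hit d a q b → (q + i = |ε| - 1/3 ∨ q + i = -(|ε| - 1/3)) →
      d = 1/2 ∧ a = 3/16 ∧ |ε| = 0 ∧ b = 49/48 := by
    intro q i hq hqi
    exact core1 a d q b |ε| i ha2 hd2 hau he0 hεa (by linarith) (by linarith) hq hqi
  rcases h43 with h40 | h43
  · exfalso
    subst h40
    apply c1' 0 (Or.inl rfl)
    obtain ⟨i, hi⟩ : ∃ i : ℤ, ((i:ℝ) + (P + 0 * (((0:ℤ):ℝ) + 1/2)))^2 = (2 + |ε|)^2 := by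
      rcases le_total 0 ε with h | h
      · refine ⟨j + 2, ?_⟩
        rw [abs_of_nonneg h, hε]; push_cast; ring
      · refine ⟨j - 2, ?_⟩
        rw [abs_of_nonpos h, hε]; push_cast; ring
    refine ⟨i, 0, ?_, ?_⟩ <;> rw [hi] <;> push_cast
    · have : a * (2 + |ε|)^2 ≤ a * (25/12)^2 := mul_le_mul_of_nonneg_left (by nlinarith) ha.le
      linarith
    · have : a * 4 ≤ a * (2 + |ε|)^2 := mul_le_mul_of_nonneg_left (by nlinarith) ha.le
      linarith
  · have main : d = 1/2 ∧ a = 3/16 ∧ |ε| = 0 ∧ b = 49/48 := by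
      rcases le_total 0 ε with h | h <;> rcases h43 with h4 | h4
      · refine fin _ j (c1' 0 (Or.inl rfl)) (Or.inl ?_)
        rw [abs_of_nonneg h, hε, h4]; push_cast; ring
      · refine fin _ (j-1) (c1' (-1) (Or.inr rfl)) (Or.inl ?_)
        rw [abs_of_nonneg h, hε, h4]; push_cast; ring
      · refine fin _ (j+1) (c1' (-1) (Or.inr rfl)) (Or.inr ?_)
        rw [abs_of_nonpos h, hε, h4]; push_cast; ring
      · refine fin _ j (c1' 0 (Or.inl rfl)) (Or.inr ?_)
        rw [abs_of_nonpos h, hε, h4]; push_cast; ring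
    obtain ⟨m1, m2, m3, m4⟩ := main
    refine ⟨m1, m2, rfl, h43, ?_, ⟨1 - n, ?_⟩⟩
    · have h0 : ε = 0 := abs_eq_zero.1 m3
      rcases h43 with h4 | h4
      · refine ⟨-j, ?_⟩
        rw [hε, h4] at h0; push_cast; linarith
      · refine ⟨-j + 1, ?_⟩
        rw [hε, h4] at h0; push_cast; linarith
    · push_cast; linarith

lemma main_lemma (a A t lam h₄ h₅ d : ℝ) (ha : 0 < a) (hA : 0 < A) (ht : 0 < t)
    (hh₄ : -1/2 < h₄ ∧ h₄ ≤ 1/2) (hh₅ : -1/2 < h₅ ∧ h₅ ≤ 1/2)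
    (hlam : 0 ≤ lam ∧ lam ≤ 1/2) (hd5 : d^5 = 2 * a * A * t) (hd2 : 2 * a < d) (hd3 : d ≤ 3 * a)
    (hK : (4 * A < d + 3 * a / 4 ∧ d + 3 * a / 4 ≤ 5 * A) ∨
      (3 * A < d + 3 * a / 4 ∧ d + 3 * a / 4 ≤ 4 * A)) (P Q R C : ℝ) :
    (∃ u v w n : ℤ, 0 < C + n - redPhi a A t lam h₄ h₅ (u + P) (v + Q) (w + R) ∧
      C + n - redPhi a A t lam h₄ h₅ (u + P) (v + Q) (w + R) < d) ∨
    (d = 1/2 ∧ a = 3/16 ∧ A = 1/6 ∧ t = 1/2 ∧ lam = 0 ∧ h₅ = 0 ∧ (h₄ = 1/3 ∨ h₄ = -1/3) ∧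
      (∃ z : ℤ, P + 1/2 = z) ∧ (∃ z : ℤ, Q + 1/2 = z) ∧ (∃ z : ℤ, R + 1/2 = z) ∧
      ∃ z : ℤ, C = 3/16 + z) := by
  by_cases hsol : (∃ u v w n : ℤ, 0 < C + n - redPhi a A t lam h₄ h₅ (u + P) (v + Q) (w + R) ∧
      C + n - redPhi a A t lam h₄ h₅ (u + P) (v + Q) (w + R) < d)
  · exact Or.inl hsol
  right
  have hd0 : 0 < d := by linarith
  have L1 : ∀ v w : ℤ, ¬ Hit d a (P + h₄ * (v + Q) + h₅ * (w + R))
      (C - A * (v + Q + lam * (w + R))^2 - t * (w + R)^2) := by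
    rintro v w ⟨u, n, h1, h2⟩
    apply hsol
    refine ⟨u, v, w, n, ?_, ?_⟩ <;> unfold redPhi
    · have : C + (n:ℝ) - (a * (u + P + h₄ * (v + Q) + h₅ * (w + R))^2
        + A * (v + Q + lam * (w + R))^2 + t * (w + R)^2)
        = C - A * (v + Q + lam * (w + R))^2 - t * (w + R)^2
          - a * (u + (P + h₄ * (v + Q) + h₅ * (w + R)))^2 + n := by ring
      rw [this]; exact h1
    · have : C + (n:ℝ) - (a * (u + P + h₄ * (v + Q) + h₅ * (w + R))^2
        + A * (v + Q + lam * (w + R))^2 + t * (w + R)^2)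
        = C - A * (v + Q + lam * (w + R))^2 - t * (w + R)^2
          - a * (u + (P + h₄ * (v + Q) + h₅ * (w + R)))^2 + n := by ring
      rw [this]; exact h2
  clear hsol
  obtain ⟨D, hDdef⟩ : ∃ D, D = d + 3 * a / 4 := ⟨_, rfl⟩
  rw [← hDdef] at hK
  have hD0 : 0 < D := by linarith
  have L2 : ∀ w : ℤ, ¬ Hit D A (Q + lam * (w + R)) (C - a/4 - t * (w + R)^2) := by
    rintro w ⟨v, n, h1, h2⟩
    apply L1 v w
    have e1 : A * ((v:ℝ) + (Q + lam * (w + R)))^2 = A * (v + Q + lam * (w + R))^2 := by ring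
    rw [e1] at h1 h2
    exact hitR a _ d _ ha hd0 2 (by push_cast; linarith) n (by linarith) (by push_cast; linarith)
  have hAt : A * t ≤ 0.6144 * D^4 := by
    have h1 : d * (A * t) ≤ d * (1.5 * d^4) := by
      have : d * (1.5 * d^4) = 3 * a * (A * t) := by
        have : d * (1.5 * d^4) = 1.5 * d^5 := by ring
        rw [this, hd5]; ring
      rw [this]
      exact mul_le_mul_of_nonneg_right hd3 (by positivity)
    have h2 : A * t ≤ 1.5 * d^4 := le_of_mul_le_mul_left h1 hd0
    have h3 : d^4 ≤ (0.8 * D)^4 := pow_le_pow_left₀ hd0.le (by linarith) 4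
    have h4 : (0.8 * D)^4 = 0.4096 * D^4 := by ring
    linarith
  have L3 : ∀ k : ℕ, k * A < D → ¬ Hit (D + ((k:ℝ)^2 - 1) * A / 4) t R (C - a/4 - A/4) := by
    rintro k hk ⟨w, n, h1, h2⟩
    apply L2 w
    exact hitR A _ D _ hA hD0 k hk n (by linarith) (by linarith)
  have L3' : ∀ k : ℕ, k * A < D → D + ((k:ℝ)^2 - 1) * A / 4 ≤ 1 := by
    intro k hk
    by_contra hlt
    push Not at hlt
    exact L2 0 (hitR_full A _ D _ hA hD0 k hk hlt)
  -- the bound for `t`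
  have tb : ∀ (D2 r s T : ℝ), 0 < D2 → 0 < s → D2 ≤ s * A → D ≤ r * D2 →
      0.6144 * r^4 * s ≤ T → t ≤ T * D2^3 := by
    intro D2 r s T h0 hs h1 h2 h3
    have h4 : D^4 ≤ (r * D2)^4 := pow_le_pow_left₀ hD0.le h2 4
    have h5 : D2 * t ≤ s * (A * t) := by nlinarith
    have h6 : s * (A * t) ≤ s * (0.6144 * (r * D2)^4) :=
      mul_le_mul_of_nonneg_left (by linarith) hs.le
    have h7 : s * (0.6144 * (r * D2)^4) = (0.6144 * r^4 * s) * D2^4 := by ring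
    have h8 : (0.6144 * r^4 * s) * D2^4 ≤ T * D2^4 := mul_le_mul_of_nonneg_right h3 (by positivity)
    have h9 : T * D2^4 = D2 * (T * D2^3) := by ring
    have h10 : D2 * t ≤ D2 * (T * D2^3) := by linarith
    exact le_of_mul_le_mul_left h10 h0
  rcases hK with ⟨hK1, hK2⟩ | ⟨hK1, hK2⟩
  · exfalso
    have n3 := L3 4 (by push_cast; linarith)
    have d3 := L3' 4 (by push_cast; linarith)
    push_cast at n3 d3
    have tt := tb (D + (4^2 - 1) * A / 4) (4/7) (35/4) 0.5733 (by linarith) (by norm_num)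
      (by linarith) (by linarith) (by norm_num)
    rcases lev3_K4 t R _ _ ht (by linarith) d3 tt n3 with ⟨h1, -⟩ | ⟨h1, z, hz⟩
    · rw [h1] at hAt
      exact L2 0 (lev2_E1_K4 A _ D _ hA hD0 hK1 hK2 (by linarith) (by linarith))
    · rw [h1] at hAt
      have hR : R = z - 1/2 := by linarith
      rcases lev2_E3_K4 A (Q + lam * (((1 - z : ℤ):ℝ) + R)) (Q + lam * (((2 - z : ℤ):ℝ) + R)) D
        (C - a/4 - t * (((1 - z : ℤ):ℝ) + R)^2) hA hD0 hK1 hK2 (by linarith) with h | h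
      · exact L2 _ h
      · apply L2 (2 - z)
        have : C - a/4 - t * (((2 - z : ℤ):ℝ) + R)^2
          = C - a/4 - t * (((1 - z : ℤ):ℝ) + R)^2 - 1/3 := by
          rw [h1, hR]; push_cast; ring
        rw [this]; exact h
  · have n3 := L3 3 (by push_cast; linarith)
    have d3 := L3' 3 (by push_cast; linarith)
    push_cast at n3 d3
    have tt := tb (D + (3^2 - 1) * A / 4) (2/3) 6 0.7282 (by linarith) (by norm_num)
      (by linarith) (by linarith) (by norm_num)
    rcases lev3_K3 t R _ _ ht (by linarith) d3 tt n3 with ⟨h1, z, hz⟩ | ⟨h1, z, hz⟩ | ⟨h1, z, hz⟩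
    · rw [h1] at hAt
      have key : ∀ w : ℤ, A = 1/6 ∧ ∃ z : ℤ, Q + lam * (w + R) + 1/2 = z := fun w =>
        lev2_E1_K3 A _ D _ hA hD0 hK1 hK2 (by linarith) (by linarith) (L2 w)
      have hA6 := (key 0).1
      obtain ⟨y0, hy0⟩ := (key 0).2
      obtain ⟨y1, hy1⟩ := (key 1).2
      have hl : lam = 0 := by
        have h2 : lam = ((y1 - y0 : ℤ):ℝ) := by
          push_cast at *; linear_combination hy1 - hy0
        have h3 : ((y1 - y0 : ℤ):ℝ) < 1 := by linarith
        have h4 : (-1:ℝ) < ((y1 - y0 : ℤ):ℝ) := by linarith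
        have h3' : y1 - y0 < 1 := by exact_mod_cast h3
        have h4' : -1 < y1 - y0 := by exact_mod_cast h4
        have h5 : y1 - y0 = 0 := by omega
        rw [h2, h5]; norm_num
      have hQ : Q + 1/2 = y0 := by rw [hl] at hy0; linarith
      have hQ' : Q = y0 - 1/2 := by linarith
      have hR' : R = z - 1/2 := by linarith
      obtain ⟨m1, m2, m3, m4, m5, m6⟩ := lev1 a d P h₄ h₅ C ha hd2 hd3
        (by rw [hd5, hA6, h1]; ring) (by linarith) hh₄ hh₅ (by
          intro v w hh
          apply L1 (v + 1 - y0) (w + 1 - z)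
          rw [hl, hA6, h1, hQ', hR']
          push_cast
          have e1 : P + h₄ * ((v:ℝ) + 1 - y0 + (y0 - 1/2)) + h₅ * ((w:ℝ) + 1 - z + (z - 1/2))
            = P + h₄ * (v + 1/2) + h₅ * (w + 1/2) := by ring
          have e2 : C - 1/6 * ((v:ℝ) + 1 - y0 + (y0 - 1/2) + 0 * ((w:ℝ) + 1 - z + (z - 1/2)))^2
            - 1/2 * ((w:ℝ) + 1 - z + (z - 1/2))^2
            = C - 1/6 * ((v:ℝ) + 1/2)^2 - 1/2 * ((w:ℝ) + 1/2)^2 := by ring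
          rw [e1, e2]; exact hh)
      exact ⟨m1, m2, hA6, h1, hl, m3, m4, m5, ⟨y0, hQ⟩, ⟨z, hz⟩, m6⟩
    · exfalso
      rw [h1] at hAt
      rcases lev2_E2 A (Q + lam * (((0 - z : ℤ):ℝ) + R)) (Q + lam * (((1 - z : ℤ):ℝ) + R)) D
        (C - a/4 - t * (((0 - z : ℤ):ℝ) + R)^2) hA hD0 hK1 hK2 (by linarith) with h | h
      · exact L2 _ h
      · apply L2 (1 - z)
        have : C - a/4 - t * (((1 - z : ℤ):ℝ) + R)^2
          = C - a/4 - t * (((0 - z : ℤ):ℝ) + R)^2 - 1/4 := by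
          rw [h1, hz]; push_cast; ring
        rw [this]; exact h
    · exfalso
      rw [h1] at hAt
      have hR : R = z - 1/2 := by linarith
      rcases lev2_E3_K3 A (Q + lam * (((1 - z : ℤ):ℝ) + R)) (Q + lam * (((2 - z : ℤ):ℝ) + R)) D
        (C - a/4 - t * (((1 - z : ℤ):ℝ) + R)^2) hA hD0 hK1 hK2 (by linarith) with h | h
      · exact L2 _ h
      · apply L2 (2 - z)
        have : C - a/4 - t * (((2 - z : ℤ):ℝ) + R)^2
          = C - a/4 - t * (((1 - z : ℤ):ℝ) + R)^2 - 1/3 := by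
          rw [h1, hR]; push_cast; ring
        rw [this]; exact h

lemma complete_square (a A t lam h₄ h₅ a₃ a₄ a₅ : ℝ) (ha : 0 < a) (hA : 0 < A) (ht : 0 < t) :
    ∃ s₃ s₄ s₅ : ℝ, ∀ e x y z : ℝ,
      (a₃ * x + a₄ * y + a₅ * z) * e - redPhi a A t lam h₄ h₅ x y z
      = e^2 * redPhi a A t lam h₄ h₅ s₃ s₄ s₅
        - redPhi a A t lam h₄ h₅ (x - e * s₃) (y - e * s₄) (z - e * s₅) := by
  obtain ⟨X, hX⟩ : ∃ X, X * (2 * a) = a₃ := ⟨a₃ / (2 * a), by field_simp⟩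
  obtain ⟨Y, hY⟩ : ∃ Y, Y * (2 * A) = a₄ - a₃ * h₄ := ⟨(a₄ - a₃ * h₄) / (2 * A), by field_simp⟩
  obtain ⟨Z, hZ⟩ : ∃ Z, Z * (2 * t) = a₅ - a₃ * h₅ - (a₄ - a₃ * h₄) * lam :=
    ⟨(a₅ - a₃ * h₅ - (a₄ - a₃ * h₄) * lam) / (2 * t), by field_simp⟩
  refine ⟨X - h₄ * (Y - lam * Z) - h₅ * Z, Y - lam * Z, Z, ?_⟩
  intro e x y z
  unfold redPhi
  linear_combination (-e) * (x + h₄ * y + h₅ * z) * hX - e * (y + lam * z) * hY - e * z * hZ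

lemma half_class (c s : ℝ) (h1 : ∃ z : ℤ, c - s + 1/2 = z) (h2 : ∃ z : ℤ, c + s + 1/2 = z) :
    (∃ n : ℤ, c - 2 * s = n) ∨ ∃ n : ℤ, c - 2 * s = n + 1/2 := by
  obtain ⟨p, hp⟩ := h1
  obtain ⟨q, hq⟩ := h2
  rcases Int.even_or_odd (3 * p - q - 1) with ⟨n, hn⟩ | ⟨n, hn⟩
  · left
    refine ⟨n, ?_⟩
    have : (3 * p - q - 1 : ℝ) = n + n := by exact_mod_cast hn
    linarith
  · right
    refine ⟨n, ?_⟩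
    have : (3 * p - q - 1 : ℝ) = 2 * n + 1 := by exact_mod_cast hn
    linarith

/-- A point of the class of `Y` at prescribed position. -/
lemma pos_case (X Y Z : ℝ) (x y z : ℝ) (E e : ℤ) (hX : ∃ u : ℤ, u + X = x) (hY : ∃ v : ℤ, v + Y = y)
    (hZ : ∃ w : ℤ, w + Z = z) (he : ∃ k : ℤ, E + 2 * k = e)
    (h1 : 0 < 3/4 + (e:ℝ) - redPhi (3/16) (1/6) (1/2) 0 (1/3) 0 x y z)
    (h2 : 3/4 + (e:ℝ) - redPhi (3/16) (1/6) (1/2) 0 (1/3) 0 x y z < 1/2) :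
    ∃ u v w k : ℤ,
      0 < 3/4 + ((E + 2 * k : ℤ):ℝ) - redPhi (3/16) (1/6) (1/2) 0 (1/3) 0 (u + X) (v + Y) (w + Z) ∧
      3/4 + ((E + 2 * k : ℤ):ℝ) - redPhi (3/16) (1/6) (1/2) 0 (1/3) 0 (u + X) (v + Y) (w + Z)
        < 1/2 := by
  obtain ⟨u, rfl⟩ := hX
  obtain ⟨v, rfl⟩ := hY
  obtain ⟨w, rfl⟩ := hZ
  obtain ⟨k, rfl⟩ := he
  exact ⟨u, v, w, k, h1, h2⟩

lemma at_int (X : ℝ) (n i : ℤ) (h : X = n) : ∃ u : ℤ, (u:ℝ) + X = i :=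
  ⟨i - n, by rw [h]; push_cast; ring⟩

lemma at_half (X : ℝ) (n i : ℤ) (h : X = n + 1/2) : ∃ u : ℤ, (u:ℝ) + X = i + 1/2 :=
  ⟨i - n, by rw [h]; push_cast; ring⟩

lemma wit_pos (X Y Z : ℝ) (E : ℤ) (hX : (∃ n : ℤ, X = n) ∨ ∃ n : ℤ, X = n + 1/2)
    (hY : (∃ n : ℤ, Y = n) ∨ ∃ n : ℤ, Y = n + 1/2) (hZ : (∃ n : ℤ, Z = n) ∨ ∃ n : ℤ, Z = n + 1/2) :
    ∃ u v w k : ℤ,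
      0 < 3/4 + ((E + 2 * k : ℤ):ℝ) - redPhi (3/16) (1/6) (1/2) 0 (1/3) 0 (u + X) (v + Y) (w + Z) ∧
      3/4 + ((E + 2 * k : ℤ):ℝ) - redPhi (3/16) (1/6) (1/2) 0 (1/3) 0 (u + X) (v + Y) (w + Z)
        < 1/2 := by
  rcases hX with ⟨n₁, h₁⟩ | ⟨n₁, h₁⟩ <;> rcases hY with ⟨n₂, h₂⟩ | ⟨n₂, h₂⟩ <;>
    rcases hZ with ⟨n₃, h₃⟩ | ⟨n₃, h₃⟩ <;> rcases Int.even_or_odd E with ⟨m, hm⟩ | ⟨m, hm⟩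
  · exact pos_case X Y Z _ _ _ E 0 (at_int _ _ (0) h₁)
      (at_int _ _ (0) h₂) (at_int _ _ (-1) h₃) ⟨-m, by omega⟩
      (by norm_num [redPhi]) (by norm_num [redPhi])
  · exact pos_case X Y Z _ _ _ E 1 (at_int _ _ (-3) h₁)
      (at_int _ _ (0) h₂) (at_int _ _ (0) h₃) ⟨-m, by omega⟩
      (by norm_num [redPhi]) (by norm_num [redPhi])
  · exact pos_case X Y Z _ _ _ E 0 (at_int _ _ (-1) h₁)
      (at_int _ _ (0) h₂) (at_half _ _ (-1) h₃) ⟨-m, by omega⟩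
      (by norm_num [redPhi]) (by norm_num [redPhi])
  · exact pos_case X Y Z _ _ _ E 1 (at_int _ _ (-1) h₁)
      (at_int _ _ (0) h₂) (at_half _ _ (-2) h₃) ⟨-m, by omega⟩
      (by norm_num [redPhi]) (by norm_num [redPhi])
  · exact pos_case X Y Z _ _ _ E 0 (at_int _ _ (-1) h₁)
      (at_half _ _ (-1) h₂) (at_int _ _ (0) h₃) ⟨-m, by omega⟩
      (by norm_num [redPhi]) (by norm_num [redPhi])
  · exact pos_case X Y Z _ _ _ E 1 (at_int _ _ (-3) h₁)
      (at_half _ _ (0) h₂) (at_int _ _ (0) h₃) ⟨-m, by omega⟩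
      (by norm_num [redPhi]) (by norm_num [redPhi])
  · exact pos_case X Y Z _ _ _ E 0 (at_int _ _ (-1) h₁)
      (at_half _ _ (-1) h₂) (at_half _ _ (-1) h₃) ⟨-m, by omega⟩
      (by norm_num [redPhi]) (by norm_num [redPhi])
  · exact pos_case X Y Z _ _ _ E 1 (at_int _ _ (-1) h₁)
      (at_half _ _ (-1) h₂) (at_half _ _ (-2) h₃) ⟨-m, by omega⟩
      (by norm_num [redPhi]) (by norm_num [redPhi])
  · exact pos_case X Y Z _ _ _ E 0 (at_half _ _ (-2) h₁)
      (at_int _ _ (0) h₂) (at_int _ _ (0) h₃) ⟨-m, by omega⟩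
      (by norm_num [redPhi]) (by norm_num [redPhi])
  · exact pos_case X Y Z _ _ _ E 1 (at_half _ _ (-3) h₁)
      (at_int _ _ (-1) h₂) (at_int _ _ (0) h₃) ⟨-m, by omega⟩
      (by norm_num [redPhi]) (by norm_num [redPhi])
  · exact pos_case X Y Z _ _ _ E 0 (at_half _ _ (-2) h₁)
      (at_int _ _ (0) h₂) (at_half _ _ (-1) h₃) ⟨-m, by omega⟩
      (by norm_num [redPhi]) (by norm_num [redPhi])
  · exact pos_case X Y Z _ _ _ E 1 (at_half _ _ (-3) h₁)
      (at_int _ _ (0) h₂) (at_half _ _ (-1) h₃) ⟨-m, by omega⟩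
      (by norm_num [redPhi]) (by norm_num [redPhi])
  · exact pos_case X Y Z _ _ _ E 0 (at_half _ _ (-2) h₁)
      (at_half _ _ (-1) h₂) (at_int _ _ (0) h₃) ⟨-m, by omega⟩
      (by norm_num [redPhi]) (by norm_num [redPhi])
  · exact pos_case X Y Z _ _ _ E 1 (at_half _ _ (-3) h₁)
      (at_half _ _ (-1) h₂) (at_int _ _ (0) h₃) ⟨-m, by omega⟩
      (by norm_num [redPhi]) (by norm_num [redPhi])
  · exact pos_case X Y Z _ _ _ E 0 (at_half _ _ (-2) h₁)
      (at_half _ _ (-1) h₂) (at_half _ _ (-1) h₃) ⟨-m, by omega⟩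
      (by norm_num [redPhi]) (by norm_num [redPhi])
  · exact pos_case X Y Z _ _ _ E 1 (at_half _ _ (-3) h₁)
      (at_half _ _ (-1) h₂) (at_half _ _ (-1) h₃) ⟨-m, by omega⟩
      (by norm_num [redPhi]) (by norm_num [redPhi])

lemma neg_class (Y : ℝ) (hY : (∃ n : ℤ, Y = n) ∨ ∃ n : ℤ, Y = n + 1/2) :
    (∃ n : ℤ, -Y = n) ∨ ∃ n : ℤ, -Y = n + 1/2 := by
  rcases hY with ⟨n, h⟩ | ⟨n, h⟩
  · exact Or.inl ⟨-n, by rw [h]; push_cast; ring⟩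
  · exact Or.inr ⟨-n - 1, by rw [h]; push_cast; ring⟩

lemma wit (h₄ X Y Z : ℝ) (hh : h₄ = 1/3 ∨ h₄ = -1/3) (E : ℤ)
    (hX : (∃ n : ℤ, X = n) ∨ ∃ n : ℤ, X = n + 1/2)
    (hY : (∃ n : ℤ, Y = n) ∨ ∃ n : ℤ, Y = n + 1/2) (hZ : (∃ n : ℤ, Z = n) ∨ ∃ n : ℤ, Z = n + 1/2) :
    ∃ u v w k : ℤ,
      0 < 3/4 + ((E + 2 * k : ℤ):ℝ) - redPhi (3/16) (1/6) (1/2) 0 h₄ 0 (u + X) (v + Y) (w + Z) ∧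
      3/4 + ((E + 2 * k : ℤ):ℝ) - redPhi (3/16) (1/6) (1/2) 0 h₄ 0 (u + X) (v + Y) (w + Z)
        < 1/2 := by
  rcases hh with rfl | rfl
  · exact wit_pos X Y Z E hX hY hZ
  · obtain ⟨u, v, w, k, h1, h2⟩ := wit_pos X (-Y) Z E hX (neg_class Y hY) hZ
    have : redPhi (3/16) (1/6) (1/2) 0 (1/3) 0 (u + X) (v + -Y) (w + Z)
      = redPhi (3/16) (1/6) (1/2) 0 (-1/3) 0 (u + X) (((-v : ℤ):ℝ) + Y) (w + Z) := by
      unfold redPhi; push_cast; ring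
    rw [this] at h1 h2
    exact ⟨u, -v, w, k, h1, h2⟩

theorem thm4prime (a A t lam h₄ h₅ a₂ a₃ a₄ a₅ d : ℝ) (m K : ℤ)
    (ha : 0 < a) (hA : 0 < A) (ht : 0 < t)
    (ha₂ : -1/2 < a₂ ∧ a₂ ≤ 1/2) (ha₃ : -1/2 < a₃ ∧ a₃ ≤ 1/2)
    (ha₄ : -1/2 < a₄ ∧ a₄ ≤ 1/2) (ha₅ : -1/2 < a₅ ∧ a₅ ≤ 1/2)
    (hh₄ : -1/2 < h₄ ∧ h₄ ≤ 1/2) (hh₅ : -1/2 < h₅ ∧ h₅ ≤ 1/2)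
    (hlam : 0 ≤ lam ∧ lam ≤ 1/2) (hAC : A ≤ t + A * lam^2)
    (hmin_le : ∀ u v w : ℤ, ¬(u = 0 ∧ v = 0 ∧ w = 0) →
      a ≤ redPhi a A t lam h₄ h₅ (u : ℝ) (v : ℝ) (w : ℝ))
    (hmin_eq : ∃ u v w : ℤ, ¬(u = 0 ∧ v = 0 ∧ w = 0) ∧
      redPhi a A t lam h₄ h₅ (u : ℝ) (v : ℝ) (w : ℝ) = a)
    (hd : d = (2 * a * A * t) ^ ((1 : ℝ)/5))
    (hm : (m : ℝ) < d / a ∧ d / a ≤ (m : ℝ) + 1)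
    (hK : (K : ℝ) < (d + ((m : ℝ)^2 - 1) * a / 4) / A ∧
          (d + ((m : ℝ)^2 - 1) * a / 4) / A ≤ (K : ℝ) + 1)
    (ha' : a < 1/2) (hd1 : d ≤ 1) (had : a + d ≤ 1)
    (hmK : (m = 2 ∧ K = 4) ∨ (m = 2 ∧ K = 3))
    (c₁ c₂ c₃ c₄ c₅ : ℝ) (hc₂ : ∃ n : ℤ, (n : ℝ) = c₂) :
    ∃ x₁ x₂ x₃ x₄ x₅ : ℝ,
      (∃ k : ℤ, x₁ - c₁ = k) ∧ (∃ k : ℤ, x₂ - c₂ = k) ∧ (∃ k : ℤ, x₃ - c₃ = k) ∧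
      (∃ k : ℤ, x₄ - c₄ = k) ∧ (∃ k : ℤ, x₅ - c₅ = k) ∧
      0 < redQ a A t lam h₄ h₅ a₂ a₃ a₄ a₅ x₁ x₂ x₃ x₄ x₅ ∧
      redQ a A t lam h₄ h₅ a₂ a₃ a₄ a₅ x₁ x₂ x₃ x₄ x₅ < d := by
  have hmr : (m:ℝ) = 2 := by rcases hmK with ⟨rfl, _⟩ | ⟨rfl, _⟩ <;> norm_num
  rw [hmr] at hm hK
  obtain ⟨hm1, hm2⟩ := hm
  rw [lt_div_iff₀ ha] at hm1
  rw [div_le_iff₀ ha] at hm2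
  obtain ⟨hK1, hK2⟩ := hK
  rw [lt_div_iff₀ hA] at hK1
  rw [div_le_iff₀ hA] at hK2
  have hK' : (4 * A < d + 3 * a / 4 ∧ d + 3 * a / 4 ≤ 5 * A) ∨
      (3 * A < d + 3 * a / 4 ∧ d + 3 * a / 4 ≤ 4 * A) := by
    rcases hmK with ⟨_, rfl⟩ | ⟨_, rfl⟩ <;> push_cast at hK1 hK2
    · left; constructor <;> linarith
    · right; constructor <;> linarith
  have hd5 : d^5 = 2 * a * A * t := by
    rw [hd, ← Real.rpow_natCast, ← Real.rpow_mul (by positivity)]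
    norm_num
  have ML := main_lemma a A t lam h₄ h₅ d ha hA ht hh₄ hh₅ hlam hd5 hm1 (by linarith) hK'
  obtain ⟨n₂, hn₂⟩ := hc₂
  obtain ⟨s₃, s₄, s₅, hs⟩ := complete_square a A t lam h₄ h₅ a₃ a₄ a₅ ha hA ht
  have hQ : ∀ x₁ e x y z : ℝ, redQ a A t lam h₄ h₅ a₂ a₃ a₄ a₅ x₁ e x y z
      = x₁ * e + a₂ * e^2 + e^2 * redPhi a A t lam h₄ h₅ s₃ s₄ s₅
        - redPhi a A t lam h₄ h₅ (x - e * s₃) (y - e * s₄) (z - e * s₅) := by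
    intro x₁ e x y z
    have := hs e x y z
    unfold redQ
    linear_combination this
  set F := redPhi a A t lam h₄ h₅ s₃ s₄ s₅ with hF
  rcases ML (c₃ - s₃) (c₄ - s₄) (c₅ - s₅) (c₁ + a₂ + F) with ⟨u, v, w, n, h1, h2⟩ | E1
  · have e1 : redQ a A t lam h₄ h₅ a₂ a₃ a₄ a₅ (c₁ + n) 1 (u + c₃) (v + c₄) (w + c₅)
        = c₁ + a₂ + F + n - redPhi a A t lam h₄ h₅ (u + (c₃ - s₃)) (v + (c₄ - s₄))
          (w + (c₅ - s₅)) := by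
      rw [hQ]
      have i3 : (u:ℝ) + c₃ - 1 * s₃ = u + (c₃ - s₃) := by ring
      have i4 : (v:ℝ) + c₄ - 1 * s₄ = v + (c₄ - s₄) := by ring
      have i5 : (w:ℝ) + c₅ - 1 * s₅ = w + (c₅ - s₅) := by ring
      rw [i3, i4, i5]; ring
    refine ⟨c₁ + n, 1, u + c₃, v + c₄, w + c₅, ⟨n, by ring⟩, ⟨1 - n₂, ?_⟩, ⟨u, by ring⟩,
      ⟨v, by ring⟩, ⟨w, by ring⟩, ?_, ?_⟩
    · rw [← hn₂]; push_cast; ring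
    · rw [e1]; exact h1
    · rw [e1]; exact h2
  rcases ML (c₃ + s₃) (c₄ + s₄) (c₅ + s₅) (-c₁ + a₂ + F) with ⟨u, v, w, n, h1, h2⟩ | E2
  · have e1 : redQ a A t lam h₄ h₅ a₂ a₃ a₄ a₅ (c₁ - n) (-1) (u + c₃) (v + c₄) (w + c₅)
        = -c₁ + a₂ + F + n - redPhi a A t lam h₄ h₅ (u + (c₃ + s₃)) (v + (c₄ + s₄))
          (w + (c₅ + s₅)) := by
      rw [hQ]
      have i3 : (u:ℝ) + c₃ - -1 * s₃ = u + (c₃ + s₃) := by ring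
      have i4 : (v:ℝ) + c₄ - -1 * s₄ = v + (c₄ + s₄) := by ring
      have i5 : (w:ℝ) + c₅ - -1 * s₅ = w + (c₅ + s₅) := by ring
      rw [i3, i4, i5]; ring
    refine ⟨c₁ - n, -1, u + c₃, v + c₄, w + c₅, ⟨-n, by push_cast; ring⟩, ⟨-1 - n₂, ?_⟩,
      ⟨u, by ring⟩, ⟨v, by ring⟩, ⟨w, by ring⟩, ?_, ?_⟩
    · rw [← hn₂]; push_cast; ring
    · rw [e1]; exact h1
    · rw [e1]; exact h2
  obtain ⟨q1, q2, q3, q4, q5, q6, q7, p3, p4, p5, z1, hz1⟩ := E1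
  obtain ⟨-, -, -, -, -, -, -, r3, r4, r5, z2, hz2⟩ := E2
  obtain ⟨u, v, w, k, h1, h2⟩ := wit h₄ (c₃ - 2 * s₃) (c₄ - 2 * s₄) (c₅ - 2 * s₅) q7 (3 * z1 + z2)
    (half_class _ _ p3 r3) (half_class _ _ p4 r4) (half_class _ _ p5 r5)
  have e1 : redQ a A t lam h₄ h₅ a₂ a₃ a₄ a₅ (c₁ + k) 2 (u + c₃) (v + c₄) (w + c₅)
      = 3/4 + ((3 * z1 + z2 + 2 * k : ℤ):ℝ) - redPhi (3/16) (1/6) (1/2) 0 h₄ 0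
        (u + (c₃ - 2 * s₃)) (v + (c₄ - 2 * s₄)) (w + (c₅ - 2 * s₅)) := by
    rw [hQ]
    have i3 : (u:ℝ) + c₃ - 2 * s₃ = u + (c₃ - 2 * s₃) := by ring
    have i4 : (v:ℝ) + c₄ - 2 * s₄ = v + (c₄ - 2 * s₄) := by ring
    have i5 : (w:ℝ) + c₅ - 2 * s₅ = w + (c₅ - 2 * s₅) := by ring
    rw [i3, i4, i5, q2, q3, q4, q5, q6]
    push_cast
    linear_combination 3 * hz1 + hz2
  refine ⟨c₁ + k, 2, u + c₃, v + c₄, w + c₅, ⟨k, by ring⟩, ⟨2 - n₂, ?_⟩, ⟨u, by ring⟩,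
    ⟨v, by ring⟩, ⟨w, by ring⟩, ?_, ?_⟩
  · rw [← hn₂]; push_cast; ring
  · rw [e1]; exact h1
  · rw [e1, q1]; exact h2
end
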